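/- Let n ≥ 2, let F be a Minkowski norm on ℝⁿ, and let Ω ⊆ ℝⁿ be an open set with smooth boundary whose complement Ω^c = ℝⁿ∖Ω is bounded and nonempty. Then there exists one and only one proper weak solution u, locally Lipschitz on the closure of Ω, of the level-set inverse anisotropic mean curvature flow equation div(F_ξ(∇u)) = F(∇u) in Ω satisfying u = 0 on ∂Ω. -/

import Mathlib

open MeasureTheory Filter Topology Metric Set
open scoped RealInnerProductSpace NNReal

noncomputable section

abbrev En (n : ℕ) := EuclideanSpace ℝ (Fin n)

/-- A Minkowski norm on ℝⁿ: a norm (convex, even, 1-homogeneous, positive away from 0)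
which is smooth away from the origin and whose Hessian of `F²/2` is positive definite
on `ℝⁿ \ {0}`. -/
structure MinkowskiNorm (n : ℕ) where
  F : En n → ℝ
  convexOn : ConvexOn ℝ Set.univ F
  even : ∀ ξ, F (-ξ) = F ξ
  homog : ∀ c : ℝ, 0 ≤ c → ∀ ξ, F (c • ξ) = c * F ξ
  pos : ∀ ξ : En n, ξ ≠ 0 → 0 < F ξ
  smooth : ContDiffOn ℝ (⊤ : ℕ∞) F {(0 : En n)}ᶜ
  elliptic : ∀ ξ : En n, ξ ≠ 0 → ∀ v : En n, v ≠ 0 →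
    0 < fderiv ℝ (fun x => fderiv ℝ (fun y => F y ^ 2 / 2) x) ξ v v

/-- Locally Lipschitz on a set (i.e. `C^{0,1}_loc`). -/
def LocLipOn {n : ℕ} (f : En n → ℝ) (s : Set (En n)) : Prop :=
  ∀ x ∈ s, ∃ (K : ℝ≥0) (t : Set (En n)), t ∈ nhdsWithin x s ∧ LipschitzOnWith K f t

/-- Weak solution of `div(F_ξ(∇u)) = F(∇u)` in `Ω` in the sense of Huisken–Ilmanen's
minimization principle. -/
def IsWeakSolIAMCF {n : ℕ} (N : MinkowskiNorm n) (Ω : Set (En n)) (u : En n → ℝ) : Prop :=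
  LocLipOn u Ω ∧
  ∀ K : Set (En n), IsCompact (closure K) → closure K ⊆ Ω →
    ∀ φ : En n → ℝ, LocLipOn φ Ω → (∀ x ∈ Ω \ K, φ x = u x) →
      (∫ x in K, (N.F (gradient u x) + u x * N.F (gradient u x))) ≤
        ∫ x in K, (N.F (gradient φ x) + φ x * N.F (gradient u x))

/-- Weak subsolution: the minimization inequality holds for competitors `φ ≤ u`. -/
def IsWeakSubSolIAMCF {n : ℕ} (N : MinkowskiNorm n) (Ω : Set (En n)) (u : En n → ℝ) : Prop :=
  LocLipOn u Ω ∧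
  ∀ K : Set (En n), IsCompact (closure K) → closure K ⊆ Ω →
    ∀ φ : En n → ℝ, LocLipOn φ Ω → (∀ x ∈ Ω \ K, φ x = u x) → (∀ x ∈ Ω, φ x ≤ u x) →
      (∫ x in K, (N.F (gradient u x) + u x * N.F (gradient u x))) ≤
        ∫ x in K, (N.F (gradient φ x) + φ x * N.F (gradient u x))

/-- Weak supersolution: the minimization inequality holds for competitors `φ ≥ u`. -/
def IsWeakSuperSolIAMCF {n : ℕ} (N : MinkowskiNorm n) (Ω : Set (En n)) (u : En n → ℝ) : Prop :=
  LocLipOn u Ω ∧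
  ∀ K : Set (En n), IsCompact (closure K) → closure K ⊆ Ω →
    ∀ φ : En n → ℝ, LocLipOn φ Ω → (∀ x ∈ Ω \ K, φ x = u x) → (∀ x ∈ Ω, u x ≤ φ x) →
      (∫ x in K, (N.F (gradient u x) + u x * N.F (gradient u x))) ≤
        ∫ x in K, (N.F (gradient φ x) + φ x * N.F (gradient u x))

/-- A smooth compactly supported test function on `Ω`. -/
def IsTestFun {n : ℕ} (Ω : Set (En n)) (ψ : En n → ℝ) : Prop :=
  ContDiff ℝ (⊤ : ℕ∞) ψ ∧ HasCompactSupport ψ ∧ tsupport ψ ⊆ Ω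

/-- Weak solution of the Finsler `p`-Laplace equation `div(F(∇v)^{p-1} F_ξ(∇v)) = 0` in `Ω`. -/
def IsWeakPHarmonic {n : ℕ} (N : MinkowskiNorm n) (Ω : Set (En n)) (p : ℝ)
    (v : En n → ℝ) : Prop :=
  ∀ ψ : En n → ℝ, IsTestFun Ω ψ →
    (∫ x in Ω, N.F (gradient v x) ^ (p - 1) *
      ⟪gradient N.F (gradient v x), gradient ψ x⟫) = 0

/-- Weak solution of `div(F(∇u)^{p-1} F_ξ(∇u)) = F(∇u)^p` in `Ω`. -/
def IsWeakPSol {n : ℕ} (N : MinkowskiNorm n) (Ω : Set (En n)) (p : ℝ)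
    (u : En n → ℝ) : Prop :=
  ∀ ψ : En n → ℝ, IsTestFun Ω ψ →
    (∫ x in Ω, N.F (gradient u x) ^ (p - 1) *
      ⟪gradient N.F (gradient u x), gradient ψ x⟫) =
      - ∫ x in Ω, N.F (gradient u x) ^ p * ψ x

/-- The polar (dual) norm `F^o(x) = sup_{ξ ≠ 0} ⟨ξ, x⟩ / F(ξ)`. -/
def polarF {n : ℕ} (N : MinkowskiNorm n) (x : En n) : ℝ :=
  sSup {c : ℝ | ∃ ξ : En n, ξ ≠ 0 ∧ c = ⟪ξ, x⟫ / N.F ξ}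

/-- The Wulff shape of radius `r` centered at `x₀`: `{x : F^o(x - x₀) < r}`. -/
def Wulff {n : ℕ} (N : MinkowskiNorm n) (r : ℝ) (x₀ : En n) : Set (En n) :=
  {x | polarF N (x - x₀) < r}

/-- `Ω` is an open set with smooth boundary: it is a smooth sublevel set of a smooth
function with nonvanishing gradient on the boundary. -/
def HasSmoothBoundary {n : ℕ} (Ω : Set (En n)) : Prop :=
  ∃ f : En n → ℝ, ContDiff ℝ (⊤ : ℕ∞) f ∧ Ω = {x | f x < 0} ∧
    ∀ x ∈ frontier Ω, fderiv ℝ f x ≠ 0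

/-- `C¹` on `s` with locally Hölder continuous gradient (i.e. `C^{1,α}_loc`). -/
def C1LocHolderOn {n : ℕ} (v : En n → ℝ) (s : Set (En n)) : Prop :=
  ContDiffOn ℝ 1 v s ∧
  ∀ x ∈ s, ∃ (α C : ℝ≥0), 0 < α ∧ (α : ℝ) ≤ 1 ∧
    ∃ t ∈ nhdsWithin x s, HolderOnWith C α (fun y => gradient v y) t

/-- Divergence of a vector field on `ℝⁿ`. -/
def divg {n : ℕ} (V : En n → En n) (x : En n) : ℝ :=
  ∑ i : Fin n, fderiv ℝ V x (EuclideanSpace.single i 1) i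


/-! ## Part 1: calculus of Lipschitz functions -/

/-- Lipschitz with real constant. -/
def LipC {n : ℕ} (C : ℝ) (f : En n → ℝ) : Prop := 0 ≤ C ∧ ∀ x y, f x ≤ f y + C * ‖x - y‖

def Lip {n : ℕ} (f : En n → ℝ) : Prop := ∃ C, LipC C f

section P1
variable {n : ℕ} {f g : En n → ℝ} {C D : ℝ}

lemma LipC.lip (h : LipC C f) : Lip f := ⟨C, h⟩

lemma LipC.lw (h : LipC C f) : LipschitzWith C.toNNReal f :=
  LipschitzWith.of_le_add_mul' C (fun x y => by simpa [dist_eq_norm] using h.2 x y)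

lemma LipC.of_lw {K : ℝ≥0} (h : LipschitzWith K f) : LipC K f :=
  ⟨K.2, fun x y => by simpa [dist_eq_norm] using h.le_add_mul x y⟩

lemma Lip.lw (h : Lip f) : ∃ K : ℝ≥0, LipschitzWith K f := by
  obtain ⟨C, h⟩ := h; exact ⟨_, h.lw⟩

protected lemma LipC.abs (h : LipC C f) (x y : En n) : |f x - f y| ≤ C * ‖x - y‖ := by
  have h1 := h.2 x y
  have h2 := h.2 y x
  rw [norm_sub_rev] at h2
  rw [abs_le]; constructor <;> linarith

protected lemma Lip.continuous (h : Lip f) : Continuous f := by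
  obtain ⟨K, h⟩ := h.lw; exact h.continuous

protected lemma LipC.mono (h : LipC C f) (hCD : C ≤ D) : LipC D f :=
  ⟨h.1.trans hCD, fun x y => (h.2 x y).trans (by gcongr)⟩

protected lemma LipC.add (hf : LipC C f) (hg : LipC D g) : LipC (C + D) (fun x => f x + g x) :=
  ⟨add_nonneg hf.1 hg.1, fun x y => by have := hf.2 x y; have := hg.2 x y; dsimp only; linarith⟩

protected lemma Lip.add (hf : Lip f) (hg : Lip g) : Lip (fun x => f x + g x) := by
  obtain ⟨C, hf⟩ := hf; obtain ⟨D, hg⟩ := hg; exact (hf.add hg).lip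

protected lemma LipC.neg (hf : LipC C f) : LipC C (fun x => - f x) :=
  ⟨hf.1, fun x y => by have := hf.2 y x; rw [norm_sub_rev] at this; dsimp only; linarith⟩

protected lemma Lip.neg (hf : Lip f) : Lip (fun x => - f x) := by
  obtain ⟨C, hf⟩ := hf; exact hf.neg.lip

protected lemma LipC.sub (hf : LipC C f) (hg : LipC D g) : LipC (C + D) (fun x => f x - g x) := by
  simpa [sub_eq_add_neg] using hf.add hg.neg

protected lemma Lip.sub (hf : Lip f) (hg : Lip g) : Lip (fun x => f x - g x) := by
  obtain ⟨C, hf⟩ := hf; obtain ⟨D, hg⟩ := hg; exact (hf.sub hg).lip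

protected lemma LipC.const (c : ℝ) : LipC 0 (fun _ : En n => c) := ⟨le_rfl, fun x y => by simp⟩
protected lemma Lip.const (c : ℝ) : Lip (fun _ : En n => c) := (LipC.const c).lip

protected lemma LipC.smul (hf : LipC C f) (c : ℝ) : LipC (|c| * C) (fun x => c * f x) :=
  ⟨mul_nonneg (abs_nonneg _) hf.1, fun x y => by
    have := hf.abs x y
    have h2 : c * (f x - f y) ≤ |c| * (C * ‖x - y‖) := by
      calc c * (f x - f y) ≤ |c * (f x - f y)| := le_abs_self _
        _ = |c| * |f x - f y| := abs_mul _ _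
        _ ≤ _ := by gcongr
    dsimp only; nlinarith⟩

protected lemma Lip.smul (hf : Lip f) (c : ℝ) : Lip (fun x => c * f x) := by
  obtain ⟨C, hf⟩ := hf; exact (hf.smul c).lip

protected lemma LipC.max (hf : LipC C f) (hg : LipC C g) : LipC C (fun x => max (f x) (g x)) :=
  ⟨hf.1, fun x y => by
    have h1 := hf.2 x y; have h2 := hg.2 x y
    have := le_max_left (f y) (g y); have := le_max_right (f y) (g y)
    exact max_le (by linarith) (by linarith)⟩

protected lemma LipC.min (hf : LipC C f) (hg : LipC C g) : LipC C (fun x => min (f x) (g x)) :=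
  ⟨hf.1, fun x y => by
    have h1 := hf.2 x y; have h2 := hg.2 x y
    have h3 := min_le_left (f x) (g x); have h4 := min_le_right (f x) (g x)
    rcases min_choice (f y) (g y) with h | h <;> simp only [h] <;> linarith⟩

protected lemma Lip.max (hf : Lip f) (hg : Lip g) : Lip (fun x => max (f x) (g x)) := by
  obtain ⟨C, hf⟩ := hf; obtain ⟨D, hg⟩ := hg
  exact ((hf.mono (le_max_left C D)).max (hg.mono (le_max_right C D))).lip

protected lemma Lip.min (hf : Lip f) (hg : Lip g) : Lip (fun x => min (f x) (g x)) := by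
  obtain ⟨C, hf⟩ := hf; obtain ⟨D, hg⟩ := hg
  exact ((hf.mono (le_max_left C D)).min (hg.mono (le_max_right C D))).lip

/-- product of bounded Lipschitz functions -/
protected lemma Lip.mul (hf : Lip f) (hg : Lip g) {A B : ℝ} (hA : ∀ x, |f x| ≤ A) (hB : ∀ x, |g x| ≤ B) :
    Lip (fun x => f x * g x) := by
  obtain ⟨C, hf⟩ := hf; obtain ⟨D, hg⟩ := hg
  have hA0 : 0 ≤ A := (abs_nonneg _).trans (hA 0)
  have hB0 : 0 ≤ B := (abs_nonneg _).trans (hB 0)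
  refine ⟨A * D + B * C, add_nonneg (mul_nonneg hA0 hg.1) (mul_nonneg hB0 hf.1), fun x y => ?_⟩
  have h1 := hf.abs x y; have h2 := hg.abs x y
  have : f x * g x - f y * g y = f x * (g x - g y) + g y * (f x - f y) := by ring
  have h3 : f x * (g x - g y) ≤ A * (D * ‖x - y‖) := by
    calc _ ≤ |f x * (g x - g y)| := le_abs_self _
      _ = |f x| * |g x - g y| := abs_mul _ _
      _ ≤ _ := mul_le_mul (hA x) h2 (abs_nonneg _) hA0
  have h4 : g y * (f x - f y) ≤ B * (C * ‖x - y‖) := by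
    calc _ ≤ |g y * (f x - f y)| := le_abs_self _
      _ = |g y| * |f x - f y| := abs_mul _ _
      _ ≤ _ := mul_le_mul (hB y) h1 (abs_nonneg _) hB0
  dsimp only; nlinarith

lemma Lip.bdd (hf : Lip f) (hc : HasCompactSupport f) : ∃ A, ∀ x, |f x| ≤ A := by
  obtain ⟨A, hA⟩ := hc.exists_bound_of_continuous hf.continuous
  exact ⟨A, fun x => by simpa using hA x⟩

/-- product with a compactly supported factor -/
lemma Lip.mul_cs (hf : Lip f) (hg : Lip g) (hc : HasCompactSupport g) :
    Lip (fun x => f x * g x) := by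
  obtain ⟨A, hA⟩ := hg.bdd hc
  have hA0 : 0 ≤ A := (abs_nonneg _).trans (hA 0)
  have hfg : ∃ B, ∀ x, g x ≠ 0 → |f x| ≤ B := by
    obtain ⟨B, hB⟩ := hc.isCompact.exists_bound_of_continuousOn hf.continuous.continuousOn
    exact ⟨B, fun x hx => by simpa using hB x (subset_tsupport _ hx)⟩
  obtain ⟨B, hB⟩ := hfg
  obtain ⟨C, hf⟩ := hf; obtain ⟨D, hg⟩ := hg
  have hB' : ∀ x, g x ≠ 0 → |f x| ≤ |B| := fun x hx => (hB x hx).trans (le_abs_self _)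
  have key : ∀ x y, g x ≠ 0 → |f x * g x - f y * g y| ≤ (A * C + |B| * D) * ‖x - y‖ := by
    intro x y hx
    have h1 := hf.abs x y; have h2 := hg.abs x y
    have : f x * g x - f y * g y = f x * (g x - g y) + g y * (f x - f y) := by ring
    rw [this]
    refine (abs_add_le _ _).trans ?_
    rw [abs_mul, abs_mul]
    have h3 := mul_le_mul (hB' x hx) h2 (abs_nonneg _) (abs_nonneg _)
    have h4 := mul_le_mul (hA y) h1 (abs_nonneg _) hA0
    nlinarith
  have hK : 0 ≤ A * C + |B| * D := add_nonneg (mul_nonneg hA0 hf.1) (mul_nonneg (abs_nonneg _) hg.1)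
  refine ⟨A * C + |B| * D, hK, fun x y => ?_⟩
  by_cases hx : g x = 0
  · by_cases hy : g y = 0
    · simp only [hx, hy, mul_zero, zero_add]; positivity
    · have := (abs_le.1 (key y x hy)).1
      rw [norm_sub_rev] at this; linarith
  · have := (abs_le.1 (key x y hx)).2
    linarith

/-! gradients -/

lemma Lip.ae_diff (hf : Lip f) : ∀ᵐ x, DifferentiableAt ℝ f x := by
  obtain ⟨K, h⟩ := hf.lw; exact h.ae_differentiableAt

lemma measurable_grad (f : En n → ℝ) : Measurable (gradient f) := by
  unfold gradient
  exact ((InnerProductSpace.toDual ℝ (En n)).symm.continuous.measurable).comp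
    (measurable_fderiv ℝ f)

lemma LipC.norm_grad_le (hf : LipC C f) (x : En n) : ‖gradient f x‖ ≤ C := by
  unfold gradient
  rw [LinearIsometryEquiv.norm_map]
  have := norm_fderiv_le_of_lipschitz ℝ (x₀ := x) hf.lw
  rwa [Real.coe_toNNReal _ hf.1] at this

lemma Lip.norm_grad_le (hf : Lip f) : ∃ C, 0 ≤ C ∧ ∀ x, ‖gradient f x‖ ≤ C := by
  obtain ⟨C, hf⟩ := hf; exact ⟨C, hf.1, hf.norm_grad_le⟩

lemma inner_grad (f : En n → ℝ) (x v : En n) : ⟪gradient f x, v⟫ = fderiv ℝ f x v := by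
  rw [inner_gradient_left]

lemma grad_ext {a b : En n} (h : ∀ v, ⟪a, v⟫ = ⟪b, v⟫) : a = b := ext_inner_right ℝ h

lemma grad_add {x : En n} (hf : DifferentiableAt ℝ f x) (hg : DifferentiableAt ℝ g x) :
    gradient (fun y => f y + g y) x = gradient f x + gradient g x := by
  apply grad_ext; intro v
  rw [inner_add_left, inner_grad, inner_grad, inner_grad, fderiv_fun_add hf hg]; rfl

lemma grad_sub {x : En n} (hf : DifferentiableAt ℝ f x) (hg : DifferentiableAt ℝ g x) :
    gradient (fun y => f y - g y) x = gradient f x - gradient g x := by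
  apply grad_ext; intro v
  rw [inner_sub_left, inner_grad, inner_grad, inner_grad, fderiv_fun_sub hf hg]; rfl

lemma grad_mul {x : En n} (hf : DifferentiableAt ℝ f x) (hg : DifferentiableAt ℝ g x) :
    gradient (fun y => f y * g y) x = f x • gradient g x + g x • gradient f x := by
  apply grad_ext; intro v
  rw [inner_add_left, inner_smul_left, inner_smul_left, inner_grad, inner_grad, inner_grad,
    fderiv_fun_mul hf hg]; simp

lemma grad_comp {x : En n} {φ : ℝ → ℝ} {φ' : ℝ} (hφ : HasDerivAt φ φ' (f x))
    (hf : DifferentiableAt ℝ f x) :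
    gradient (fun y => φ (f y)) x = φ' • gradient f x := by
  apply grad_ext; intro v
  rw [inner_smul_left, inner_grad, inner_grad]
  have := (hφ.comp_hasFDerivAt x hf.hasFDerivAt).fderiv
  rw [show (fun y => φ (f y)) = φ ∘ f from rfl, this]; simp

lemma grad_smul (c : ℝ) {x : En n} (hf : DifferentiableAt ℝ f x) :
    gradient (fun y => c * f y) x = c • gradient f x :=
  grad_comp (φ := fun t => c * t) (by simpa using (hasDerivAt_id (f x)).const_mul c) hf

lemma grad_congr {x : En n} (h : f =ᶠ[𝓝 x] g) : gradient f x = gradient g x := h.gradient_eq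

/-- The gradient of a Lipschitz function vanishes a.e. on its zero set. -/
lemma Lip.ae_grad_zero (hf : Lip f) : ∀ᵐ x, f x = 0 → gradient f x = 0 := by
  rcases Nat.eq_zero_or_pos n with hn | hn
  · subst hn
    exact .of_forall fun x _ => Subsingleton.elim _ _
  have e : En n := EuclideanSpace.single ⟨0, hn⟩ 1
  set e : En n := EuclideanSpace.single ⟨0, hn⟩ (1 : ℝ) with he
  have he1 : ‖e‖ = 1 := by simp [he]
  set s : Set (En n) := {x | f x = 0 ∧ DifferentiableAt ℝ f x} with hs
  have hsm : MeasurableSet s :=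
    (measurableSet_eq_fun hf.continuous.measurable measurable_const).inter
      (measurableSet_of_differentiableAt ℝ f)
  let φ : En n → En n := fun x => f x • e
  have hφ : ApproximatesLinearOn φ (0 : En n →L[ℝ] En n) s 0 := by
    intro x hx y hy
    simp [φ, hx.1, hy.1]
  have hφ' : ∀ x ∈ s, HasFDerivWithinAt φ ((fderiv ℝ f x).smulRight e) s x := by
    intro x hx
    exact ((hx.2.hasFDerivAt).smul_const e).hasFDerivWithinAt
  have key := hφ.norm_fderiv_sub_le volume hsm _ hφ'
  rw [ae_restrict_iff' hsm] at key
  filter_upwards [key, hf.ae_diff] with x hx hd h0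
  have h1 := hx ⟨h0, hd⟩
  have h2 : ‖(fderiv ℝ f x).smulRight e‖ = 0 := by
    have : ‖(fderiv ℝ f x).smulRight e - 0‖₊ = 0 := le_antisymm h1 bot_le
    rw [sub_zero, nnnorm_eq_zero] at this
    rw [this, norm_zero]
  rw [ContinuousLinearMap.norm_smulRight_apply, he1, mul_one, norm_eq_zero] at h2
  unfold gradient; rw [h2]; simp

lemma Lip.ae_grad_eq (hf : Lip f) (hg : Lip g) :
    ∀ᵐ x, f x = g x → gradient f x = gradient g x := by
  filter_upwards [(hf.sub hg).ae_grad_zero, hf.ae_diff, hg.ae_diff] with x h1 h2 h3 h4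
  have := h1 (by linarith)
  rwa [grad_sub h2 h3, sub_eq_zero] at this

/-- a.e. gradient of a maximum -/
lemma Lip.ae_grad_max (hf : Lip f) (hg : Lip g) :
    ∀ᵐ x, gradient (fun y => max (f y) (g y)) x =
      if f x < g x then gradient g x else gradient f x := by
  filter_upwards [(hf.max hg).ae_grad_eq hf] with x h1
  split_ifs with h
  · apply grad_congr
    filter_upwards [(isOpen_lt hf.continuous hg.continuous).mem_nhds h] with y hy
    exact max_eq_right (le_of_lt hy)
  · exact h1 (max_eq_left (not_lt.1 h))

lemma Lip.ae_grad_min (hf : Lip f) (hg : Lip g) :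
    ∀ᵐ x, gradient (fun y => min (f y) (g y)) x =
      if f x < g x then gradient f x else gradient g x := by
  filter_upwards [(hf.min hg).ae_grad_eq hg] with x h1
  split_ifs with h
  · apply grad_congr
    filter_upwards [(isOpen_lt hf.continuous hg.continuous).mem_nhds h] with y hy
    exact min_eq_left (le_of_lt hy)
  · exact h1 (min_eq_right (not_lt.1 h))

end P1


/-! ## Part 2: integration tools -/
section P2
variable {n : ℕ} {f g : En n → ℝ}

lemma int_bdd {φ : En n → ℝ} {A ρ : ℝ} (hm : AEStronglyMeasurable φ volume)
    (hb : ∀ᵐ x, |φ x| ≤ A) (hs : ∀ x, ρ < ‖x‖ → φ x = 0) : Integrable φ := by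
  have h1 : IntegrableOn φ (closedBall 0 ρ) := by
    refine Measure.integrableOn_of_bounded (M := A) (isCompact_closedBall _ _).measure_lt_top.ne hm ?_
    exact ae_restrict_of_ae (by simpa using hb)
  refine (integrableOn_iff_integrable_of_support_subset ?_).1 h1
  intro x hx
  by_contra h
  exact hx (hs x (by simpa using h))

lemma HasCompactSupport.zero_off {F : Type*} [Zero F] {φ : En n → F} (h : HasCompactSupport φ) :
    ∃ ρ, ∀ x, ρ < ‖x‖ → φ x = 0 := by
  obtain ⟨ρ, hρ⟩ := h.isCompact.isBounded.subset_closedBall 0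
  refine ⟨ρ, fun x hx => ?_⟩
  by_contra h0
  have := hρ (subset_tsupport _ h0)
  simp at this; linarith

lemma cs_of_zero_off {F : Type*} [Zero F] {φ : En n → F} {ρ : ℝ} (h : ∀ x, ρ < ‖x‖ → φ x = 0) :
    HasCompactSupport φ := by
  refine HasCompactSupport.intro (isCompact_closedBall (0 : En n) ρ) (fun x hx => h x ?_)
  simpa using hx

lemma Lip.integrable (hf : Lip f) (hc : HasCompactSupport f) : Integrable f :=
  hf.continuous.integrable_of_hasCompactSupport hc

/-- integration by parts -/
lemma lip_ibp (hf : Lip f) (hg : Lip g) (hc : HasCompactSupport g) (e : En n) :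
    ∫ x, ⟪gradient f x, e⟫ * g x = - ∫ x, ⟪gradient g x, e⟫ * f x := by
  obtain ⟨K, hK⟩ := hf.lw
  obtain ⟨K', hK'⟩ := hg.lw
  have := LipschitzWith.integral_lineDeriv_mul_eq (μ := volume) hK hK' hc e
  have h1 : ∫ x, ⟪gradient f x, e⟫ * g x = ∫ x, lineDeriv ℝ f x e * g x := by
    apply integral_congr_ae
    filter_upwards [hf.ae_diff] with x hx
    rw [inner_grad, hx.lineDeriv_eq_fderiv]
  rw [h1, this, ← integral_neg]
  apply integral_congr_ae
  filter_upwards [hg.ae_diff] with x hx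
  rw [inner_grad, hx.lineDeriv_eq_fderiv, map_neg]; ring

lemma lip_coord (x0 : En n) (i : Fin n) : Lip (fun x : En n => x i - x0 i) := by
  refine ⟨1, zero_le_one, fun x y => ?_⟩
  have := PiLp.norm_apply_le (x - y) i
  have h2 := le_abs_self (x i - y i)
  simp only [PiLp.sub_apply, Real.norm_eq_abs] at this
  linarith

lemma grad_coord (x0 : En n) (i : Fin n) (x : En n) :
    gradient (fun x : En n => x i - x0 i) x = EuclideanSpace.single i 1 := by
  apply grad_ext; intro v
  rw [inner_grad]
  have : HasFDerivAt (fun x : En n => x i - x0 i) (EuclideanSpace.proj i : En n →L[ℝ] ℝ) x :=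
    ((EuclideanSpace.proj i : En n →L[ℝ] ℝ).hasFDerivAt).sub_const _
  rw [this.fderiv]
  simp [EuclideanSpace.inner_single_left]

/-- divergence theorem for the position field -/
lemma ibp_radial (hg : Lip g) (hc : HasCompactSupport g) (x0 : En n) :
    ∫ x, ⟪x - x0, gradient g x⟫ = - (n : ℝ) * ∫ x, g x := by
  have key : ∀ i : Fin n, ∫ x, (gradient g x) i * (x i - x0 i) = - ∫ x, g x := by
    intro i
    have := lip_ibp (lip_coord x0 i) hg hc (EuclideanSpace.single i 1)
    simp only [grad_coord] at this
    simp only [EuclideanSpace.inner_single_right, PiLp.single_apply] at this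
    simp at this
    rw [this]; simp
  have hsum : ∀ x : En n, ⟪x - x0, gradient g x⟫ = ∑ i, (gradient g x) i * (x i - x0 i) := by
    intro x; rw [PiLp.inner_apply]; simp
  simp_rw [hsum]
  rw [integral_finsetSum]
  · simp_rw [key]; simp
  · intro i _
    obtain ⟨C, hC0, hC⟩ := hg.norm_grad_le
    obtain ⟨ρ, hρ⟩ := hc.zero_off
    have hz : ∀ x, ρ < ‖x‖ → gradient g x = 0 := by
      intro x hx
      have : g =ᶠ[𝓝 x] fun _ => 0 := by
        filter_upwards [(isOpen_lt continuous_const continuous_norm).mem_nhds hx] with y hy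
        exact hρ y hy
      rw [grad_congr this, gradient_fun_const]
    refine int_bdd (A := C * (|ρ| + |x0 i|)) (ρ := ρ) ?_ (.of_forall fun x => ?_) ?_
    · have h1 : Measurable fun x => (gradient g x) i :=
        (EuclideanSpace.proj i : En n →L[ℝ] ℝ).continuous.measurable.comp (measurable_grad g)
      have h2 : Continuous fun x : En n => x i - x0 i := (lip_coord x0 i).continuous
      exact (h1.mul h2.measurable).aestronglyMeasurable
    · by_cases hx : ρ < ‖x‖
      · simp [hz x hx]; positivity
      · rw [abs_mul]
        have h1 := PiLp.norm_apply_le (gradient g x) i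
        have h2 := PiLp.norm_apply_le x i
        rw [Real.norm_eq_abs] at h1 h2
        refine mul_le_mul (h1.trans (hC x)) ?_ (abs_nonneg _) hC0
        have h3 := abs_sub (x i) (x0 i)
        have := le_abs_self ρ
        linarith
    · intro x hx; simp [hz x hx]

lemma grad_zero_off {ρ : ℝ} {c : ℝ} (hρ : ∀ x : En n, ρ < ‖x‖ → g x = c) :
    ∀ x, ρ < ‖x‖ → gradient g x = 0 := by
  intro x hx
  have : g =ᶠ[𝓝 x] fun _ => c := by
    filter_upwards [(isOpen_lt continuous_const continuous_norm).mem_nhds hx] with y hy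
    exact hρ y hy
  rw [grad_congr this, gradient_fun_const]

lemma eq_zero_of_integral (hn : 0 < n) (hg : Lip g) (hc : HasCompactSupport g) (h0 : ∀ x, 0 ≤ g x)
    (hi : ∫ x, g x ≤ 0) : ∀ x, g x = 0 := by
  have h1 : ∫ x, g x = 0 := le_antisymm hi (integral_nonneg h0)
  rw [integral_eq_zero_iff_of_nonneg h0 (hg.integrable hc)] at h1
  have := (Continuous.ae_eq_iff_eq volume hg.continuous continuous_const).1 h1
  intro x; rw [this]; rfl

/-- a nonnegative Lipschitz function with compact support and vanishing gradient is zero -/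
lemma eq_zero_of_grad (hn : 0 < n) (hg : Lip g) (hc : HasCompactSupport g) (h0 : ∀ x, 0 ≤ g x)
    (hi : ∀ᵐ x, gradient g x = 0) : ∀ x, g x = 0 := by
  refine eq_zero_of_integral hn hg hc h0 ?_
  have h1 := ibp_radial hg hc 0
  have h2 : ∫ x, ⟪x - 0, gradient g x⟫ = 0 := by
    rw [integral_eq_zero_of_ae]
    filter_upwards [hi] with x hx
    simp [hx]
  rw [h2] at h1
  have : (0 : ℝ) < n := by exact_mod_cast hn
  nlinarith

/-- weak convergence of gradients, scalar version -/
lemma weak_conv1 {y : En n → ℝ} (hy : Integrable y) {z : ℕ → En n → ℝ} {L : ℝ}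
    (hz : ∀ k, LipC L (z k)) (hz0 : ∀ x, Tendsto (fun k => z k x) atTop (𝓝 0)) (e : En n) :
    Tendsto (fun k => ∫ x, y x * ⟪gradient (z k) x, e⟫) atTop (𝓝 0) := by
  have hL := (hz 0).1
  have hbd : ∀ k x, |⟪gradient (z k) x, e⟫| ≤ L * ‖e‖ := fun k x =>
    (abs_real_inner_le_norm _ _).trans (by gcongr; exact (hz k).norm_grad_le x)
  have hmeas : ∀ k, Measurable fun x => ⟪gradient (z k) x, e⟫ := fun k =>
    (measurable_grad (z k)).inner_const
  have hintg : ∀ (φ : En n → ℝ), Integrable φ → ∀ k,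
      Integrable fun x => φ x * ⟪gradient (z k) x, e⟫ := fun φ hφ k => by
    refine hφ.mul_bdd (c := L * ‖e‖) (hmeas k).aestronglyMeasurable (.of_forall fun x => ?_)
    simpa using hbd k x
  rw [Metric.tendsto_atTop]
  intro δ hδ
  have hLe : 0 < L * ‖e‖ + 1 := by positivity
  obtain ⟨w, hwc, hwd, hw⟩ := (memLp_one_iff_integrable.2 hy).exist_eLpNorm_sub_le (by simp) le_rfl
    (ε := δ / 2 / (L * ‖e‖ + 1)) (by positivity)
  obtain ⟨Kw, hKw⟩ := hwd.lipschitzWith_of_hasCompactSupport hwc (by simp)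
  have hwl : Lip w := (LipC.of_lw hKw).lip
  have hwi : Integrable w := hwl.integrable hwc
  have h1 : ∫ x, |y x - w x| ≤ δ / 2 / (L * ‖e‖ + 1) := by
    have h2 : Integrable (y - w) := hy.sub hwi
    rw [eLpNorm_one_eq_lintegral_enorm, ← ofReal_integral_norm_eq_lintegral_enorm h2,
      ENNReal.ofReal_le_ofReal_iff (by positivity)] at hw
    simpa using hw
  have h3 : Tendsto (fun k => ∫ x, w x * ⟪gradient (z k) x, e⟫) atTop (𝓝 0) := by
    have : ∀ k, ∫ x, w x * ⟪gradient (z k) x, e⟫ = - ∫ x, ⟪gradient w x, e⟫ * z k x := by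
      intro k
      rw [← lip_ibp (hz k).lip hwl hwc e]
      congr 1; ext x; ring
    simp_rw [this]
    rw [← neg_zero]
    refine Tendsto.neg ?_
    have hb0 : ∃ B, ∀ k, |z k 0| ≤ B := by
      obtain ⟨B, hB⟩ := (hz0 0).abs.bddAbove_range
      exact ⟨B, fun k => hB ⟨k, rfl⟩⟩
    obtain ⟨B, hB⟩ := hb0
    obtain ⟨ρ, hρ⟩ := hwc.zero_off
    have hg0 := grad_zero_off hρ
    have hKw' := (LipC.of_lw hKw).norm_grad_le
    rw [show (0 : ℝ) = ∫ x : En n, (0 : ℝ) by simp]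
    refine tendsto_integral_of_dominated_convergence
      (fun x => (closedBall (0 : En n) ρ).indicator (fun _ => Kw * ‖e‖ * (B + L * |ρ|)) x)
      (fun k => ?_) ?_ (fun k => .of_forall fun x => ?_) (.of_forall fun x => ?_)
    · exact ((measurable_grad w).inner_const.mul (hz k).lip.continuous.measurable).aestronglyMeasurable
    · rw [integrable_indicator_iff measurableSet_closedBall]
      exact integrableOn_const (isCompact_closedBall _ _).measure_lt_top.ne
    · by_cases hx : ρ < ‖x‖
      · have hx' : x ∉ closedBall (0 : En n) ρ := by simpa using hx
        rw [indicator_of_notMem hx', hg0 x hx]; simp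
      · have hx' : x ∈ closedBall (0 : En n) ρ := by simpa using hx
        rw [indicator_of_mem hx', norm_mul, Real.norm_eq_abs, Real.norm_eq_abs]
        have hB0 : 0 ≤ B := (abs_nonneg _).trans (hB 0)
        refine mul_le_mul ((abs_real_inner_le_norm _ _).trans (by gcongr; exact hKw' x)) ?_
          (abs_nonneg _) (by positivity)
        have h5 := (hz k).abs x 0
        rw [sub_zero] at h5
        have h6 : |z k x| ≤ |z k x - z k 0| + |z k 0| := by
          simpa using abs_add_le (z k x - z k 0) (z k 0)
        have h7 : L * ‖x‖ ≤ L * |ρ| := by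
          gcongr; exact (not_lt.1 hx).trans (le_abs_self _)
        linarith [hB k]
    · simpa using (hz0 x).const_mul ⟪gradient w x, e⟫
  obtain ⟨k0, hk0⟩ := (Metric.tendsto_atTop.1 h3) (δ / 2) (by positivity)
  refine ⟨k0, fun k hk => ?_⟩
  have h4 := hk0 k hk
  rw [Real.dist_eq, sub_zero] at h4 ⊢
  have h5 : ∫ x, y x * ⟪gradient (z k) x, e⟫ = (∫ x, (y x - w x) * ⟪gradient (z k) x, e⟫) +
      ∫ x, w x * ⟪gradient (z k) x, e⟫ := by
    have hyw : Integrable fun x => y x - w x := hy.sub hwi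
    rw [← integral_add (hintg _ hyw k) (hintg _ hwi k)]
    congr 1; ext x; ring
  have h6 : |∫ x, (y x - w x) * ⟪gradient (z k) x, e⟫| ≤ δ / 2 := by
    calc |∫ x, (y x - w x) * ⟪gradient (z k) x, e⟫|
        ≤ ∫ x, |(y x - w x) * ⟪gradient (z k) x, e⟫| := abs_integral_le_integral_abs
      _ ≤ ∫ x, |y x - w x| * (L * ‖e‖ + 1) := by
          refine integral_mono (hintg _ (hy.sub hwi) k).abs ((hy.sub hwi).abs.mul_const _) fun x => ?_
          dsimp only
          rw [abs_mul]
          gcongr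
          linarith [hbd k x]
      _ = (∫ x, |y x - w x|) * (L * ‖e‖ + 1) := integral_mul_const _ _
      _ ≤ δ / 2 / (L * ‖e‖ + 1) * (L * ‖e‖ + 1) := by gcongr
      _ = δ / 2 := by field_simp
  rw [h5]
  refine lt_of_le_of_lt (abs_add_le _ _) ?_
  linarith

/-- weak convergence of gradients -/
lemma weak_conv {Y : En n → En n} (hY : Integrable Y) {z : ℕ → En n → ℝ} {L : ℝ}
    (hz : ∀ k, LipC L (z k)) (hz0 : ∀ x, Tendsto (fun k => z k x) atTop (𝓝 0)) :
    Tendsto (fun k => ∫ x, ⟪Y x, gradient (z k) x⟫) atTop (𝓝 0) := by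
  have hYi : ∀ i : Fin n, Integrable fun x => Y x i := fun i =>
    (EuclideanSpace.proj i : En n →L[ℝ] ℝ).integrable_comp hY
  have h := tendsto_finsetSum Finset.univ fun i _ =>
    weak_conv1 (hYi i) hz hz0 (EuclideanSpace.single i 1)
  simp only [Finset.sum_const_zero] at h
  refine h.congr fun k => ?_
  rw [← integral_finsetSum]
  · congr 1; ext x
    rw [PiLp.inner_apply]
    refine Finset.sum_congr rfl fun i _ => ?_
    rw [EuclideanSpace.inner_single_right]; simp [mul_comm]
  · intro i _
    refine (hYi i).mul_bdd (c := L * 1) (measurable_grad _).inner_const.aestronglyMeasurable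
      (.of_forall fun x => ?_)
    refine (abs_real_inner_le_norm _ _).trans ?_
    simp
    exact (hz k).norm_grad_le x

/-- compactness of pointwise bounded equi-Lipschitz sequences -/
lemma subseq_lip {z : ℕ → En n → ℝ} {L : ℝ} (hz : ∀ k, LipC L (z k))
    (hb : ∀ x, ∃ B, ∀ k, |z k x| ≤ B) :
    ∃ (w : En n → ℝ) (s : ℕ → ℕ), StrictMono s ∧ ∀ x, Tendsto (fun k => z (s k) x) atTop (𝓝 (w x)) := by
  obtain ⟨Q, hQc, hQd⟩ := TopologicalSpace.exists_countable_dense (En n)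
  have : Countable Q := hQc
  choose B hB using hb
  have hcomp : IsCompact (Set.univ.pi fun q : Q => Icc (-(B q)) (B q)) :=
    isCompact_univ_pi fun q => isCompact_Icc
  obtain ⟨a, _, s, hs, ha⟩ := hcomp.tendsto_subseq (x := fun k => fun q : Q => z k q)
    (fun k q _ => by exact abs_le.1 (hB q k))
  have hL := (hz 0).1
  rw [tendsto_pi_nhds] at ha
  have hcau : ∀ x, CauchySeq fun k => z (s k) x := by
    intro x
    rw [Metric.cauchySeq_iff']
    intro δ hδ
    obtain ⟨q, hq, hqx⟩ := hQd.exists_dist_lt x (ε := δ / 3 / (L + 1)) (by positivity)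
    have hc := (ha ⟨q, hq⟩).cauchySeq
    obtain ⟨k0, hk0⟩ := (Metric.cauchySeq_iff'.1 hc) (δ / 3) (by positivity)
    refine ⟨k0, fun k hk => ?_⟩
    have h1 := hk0 k hk
    simp only [Function.comp, Real.dist_eq] at h1 ⊢
    have hxq : L * ‖x - q‖ ≤ δ / 3 := by
      rw [dist_eq_norm] at hqx
      calc L * ‖x - q‖ ≤ (L + 1) * (δ / 3 / (L + 1)) := by gcongr; linarith
        _ = δ / 3 := by field_simp
    have h2 := abs_le.1 (((hz (s k)).abs x q).trans hxq)
    have h3 := abs_le.1 (((hz (s k0)).abs x q).trans hxq)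
    have h4 := abs_lt.1 h1
    rw [abs_lt]; constructor <;> linarith [h2.1, h2.2, h3.1, h3.2, h4.1, h4.2]
  choose w hw using fun x => cauchySeq_tendsto_of_complete (hcau x)
  exact ⟨w, s, hs, hw⟩

lemma LipC.of_tendsto {z : ℕ → En n → ℝ} {w : En n → ℝ} {L : ℝ} (hz : ∀ k, LipC L (z k))
    (h : ∀ x, Tendsto (fun k => z k x) atTop (𝓝 (w x))) : LipC L w :=
  ⟨(hz 0).1, fun x y => le_of_tendsto_of_tendsto' (h x) ((h y).add_const _) fun k => (hz k).2 x y⟩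

/-- cutoff functions -/
lemma exists_cutoff {K U : Set (En n)} (hK : IsCompact K) (hU : IsOpen U) (hKU : K ⊆ U) :
    ∃ η : En n → ℝ, Lip η ∧ HasCompactSupport η ∧ tsupport η ⊆ U ∧ (∀ x, 0 ≤ η x) ∧
      (∀ x, η x ≤ 1) ∧ ∀ x ∈ K, η x = 1 := by
  rcases K.eq_empty_or_nonempty with rfl | hne
  · exact ⟨fun _ => 0, Lip.const 0, HasCompactSupport.zero, by simp [tsupport], by simp, by simp,
      by simp⟩
  obtain ⟨δ, hδ, hδU⟩ := hK.exists_cthickening_subset_open hU hKU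
  have hsupp : tsupport (fun x => max 0 (1 - infDist x K / δ)) ⊆ cthickening δ K := by
    refine closure_minimal (fun x hx => ?_) isClosed_cthickening
    by_contra hx''
    have hx' : δ < infDist x K := by
      by_contra h3
      exact hx'' (by
        rw [mem_cthickening_iff]
        rw [not_lt, infDist] at h3
        exact (ENNReal.le_ofReal_iff_toReal_le (infEDist_ne_top hne) hδ.le).2 h3)
    apply hx
    apply max_eq_left
    rw [sub_nonpos, le_div_iff₀ hδ]; linarith
  refine ⟨fun x => max 0 (1 - infDist x K / δ), ?_, ?_, hsupp.trans hδU, fun x => le_max_left _ _,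
    fun x => ?_, fun x hx => ?_⟩
  · have h1 : LipC 1 (fun x => infDist x K) := by
      simpa using LipC.of_lw (lipschitz_infDist_pt K)
    have := (Lip.const (n := n) 0).max ((Lip.const 1).sub (h1.lip.smul δ⁻¹))
    simpa [div_eq_inv_mul] using this
  · exact hK.cthickening.of_isClosed_subset (isClosed_tsupport _) hsupp
  · refine max_le zero_le_one ?_
    have : 0 ≤ infDist x K / δ := div_nonneg infDist_nonneg hδ.le
    linarith
  · simp [infDist_zero_of_mem hx]

lemma exists_lip_of_locLip {Ω K : Set (En n)} {u : En n → ℝ} (hΩ : IsOpen Ω) (hu : LocLipOn u Ω)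
    (hK : IsCompact K) (hKΩ : K ⊆ Ω) :
    ∃ w : En n → ℝ, Lip w ∧ ∃ U : Set (En n), IsOpen U ∧ K ⊆ U ∧ U ⊆ Ω ∧ ∀ x ∈ U, w x = u x := by
  obtain ⟨K', hK', h1, h2⟩ := exists_compact_between hK hΩ hKΩ
  have hl : LocallyLipschitzOn K' u := by
    intro x hx
    obtain ⟨C, t, ht, hC⟩ := hu x (h2 hx)
    exact ⟨C, t, nhdsWithin_mono x h2 ht, hC⟩
  obtain ⟨C, hC⟩ := hl.exists_lipschitzOnWith_of_compact hK'
  obtain ⟨w, hw, hwu⟩ := hC.extend_real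
  exact ⟨w, (LipC.of_lw hw).lip, interior K', isOpen_interior, h1, interior_subset.trans h2,
    fun x hx => (hwu (interior_subset hx)).symm⟩

lemma lip_of_locLip_cs {Ω K : Set (En n)} {u : En n → ℝ} (hΩ : IsOpen Ω) (hu : LocLipOn u Ω)
    (hK : IsCompact K) (hKΩ : K ⊆ Ω) (h0 : ∀ x, x ∉ K → u x = 0) : Lip u := by
  obtain ⟨w, hw, U, hU, hKU, _, hwu⟩ := exists_lip_of_locLip hΩ hu hK hKΩ
  obtain ⟨η, h1, h2, h3, h4, h5, h6⟩ := exists_cutoff hK hU hKU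
  have : u = fun x => w x * η x := by
    ext x
    by_cases hx : x ∈ K
    · rw [h6 x hx, hwu x (hKU hx), mul_one]
    · by_cases hxU : x ∈ U
      · rw [hwu x hxU, h0 x hx, zero_mul]
      · rw [h0 x hx, image_eq_zero_of_notMem_tsupport (fun h => hxU (h3 h)), mul_zero]
  rw [this]; exact hw.mul_cs h1 h2

lemma Lip.locLipOn (hf : Lip f) (s : Set (En n)) : LocLipOn f s := fun x _ => by
  obtain ⟨K, hK⟩ := hf.lw
  exact ⟨K, univ, univ_mem, hK.lipschitzOnWith⟩

end P2


/-! ## Part 3: Minkowski norms and their polars -/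
section P3
variable {n : ℕ}

/-- a sublinear nonnegative function -/
structure SubLin (G : En n → ℝ) : Prop where
  nn : ∀ x, 0 ≤ G x
  add : ∀ x y, G (x + y) ≤ G x + G y
  hom : ∀ c : ℝ, 0 ≤ c → ∀ x, G (c • x) = c * G x
  even : ∀ x, G (-x) = G x

namespace SubLin
variable {G : En n → ℝ}

lemma zero (h : SubLin G) : G 0 = 0 := by simpa using h.hom 0 le_rfl 0

lemma smul (h : SubLin G) (c : ℝ) (x : En n) : G (c • x) = |c| * G x := by
  rcases le_total 0 c with hc | hc
  · rw [h.hom c hc, abs_of_nonneg hc]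
  · rw [← h.even, ← neg_smul, h.hom _ (neg_nonneg.2 hc), abs_of_nonpos hc]

lemma grad_le (h : SubLin G) (x y : En n) : ⟪gradient G x, y⟫ ≤ G y := by
  rw [inner_grad]
  by_cases hd : DifferentiableAt ℝ G x
  · have h1 : HasDerivWithinAt (fun t : ℝ => G (x + t • y)) (fderiv ℝ G x y) (Ioi 0) 0 :=
      (hd.hasFDerivAt.hasLineDerivAt y).hasDerivWithinAt
    have h2 := (hasDerivWithinAt_iff_tendsto_slope' (by simp)).1 h1
    refine le_of_tendsto h2 ?_
    filter_upwards [self_mem_nhdsWithin] with t ht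
    have ht' : 0 < t := ht
    rw [slope_def_field]
    simp only [zero_smul, add_zero, sub_zero]
    rw [div_le_iff₀ ht']
    have := h.add x (t • y)
    rw [h.hom t ht'.le] at this
    linarith
  · rw [fderiv_zero_of_not_differentiableAt hd]; simpa using h.nn y

lemma abs_grad_le (h : SubLin G) (x y : En n) : |⟪gradient G x, y⟫| ≤ G y := by
  rw [abs_le]
  have h1 := h.grad_le x (-y)
  rw [h.even, inner_neg_right] at h1
  exact ⟨by linarith, h.grad_le x y⟩

lemma grad_self (h : SubLin G) {x : En n} (hd : DifferentiableAt ℝ G x) : ⟪gradient G x, x⟫ = G x := by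
  refine le_antisymm (h.grad_le x x) ?_
  rw [inner_grad]
  have h1 : HasDerivAt (fun t : ℝ => G (x + t • x)) (fderiv ℝ G x x) 0 :=
    hd.hasFDerivAt.hasLineDerivAt x
  have h2 : HasDerivAt (fun t : ℝ => G x + t * G x) (G x) 0 := by
    simpa using ((hasDerivAt_id (0 : ℝ)).mul_const (G x)).const_add (G x)
  have h3 : (fun t : ℝ => G (x + t • x)) =ᶠ[𝓝 0] fun t : ℝ => G x + t * G x := by
    filter_upwards [lt_mem_nhds (show (-1 : ℝ) < 0 by norm_num)] with t ht
    have : x + t • x = (1 + t) • x := by rw [add_smul, one_smul]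
    rw [this, h.hom _ (by linarith)]; ring
  rw [(h1.congr_of_eventuallyEq h3.symm).unique h2]

lemma sub_le (h : SubLin G) (x y : En n) : G x - G y ≤ G (x - y) := by
  have := h.add (x - y) y; simp at this; linarith

lemma rev (h : SubLin G) (x y : En n) : G (x - y) = G (y - x) := by rw [← h.even, neg_sub]

end SubLin

namespace MinkowskiNorm
variable (N : MinkowskiNorm n)

lemma sub : SubLin N.F where
  nn x := by
    by_cases hx : x = 0
    · subst hx
      have := N.homog 0 le_rfl 0
      simp at this; exact this.ge
    · exact (N.pos x hx).le
  add x y := by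
    have h1 := N.convexOn.2 (mem_univ x) (mem_univ y) (show (0:ℝ) ≤ 1/2 by norm_num)
      (show (0:ℝ) ≤ 1/2 by norm_num) (by norm_num)
    rw [← smul_add, N.homog _ (by norm_num)] at h1
    simp only [smul_eq_mul] at h1
    linarith
  hom := N.homog
  even := N.even

lemma cont : Continuous N.F := by
  have := ConvexOn.continuousOn isOpen_univ N.convexOn
  exact continuousOn_univ.1 this

lemma diffAt {ξ : En n} (hξ : ξ ≠ 0) : DifferentiableAt ℝ N.F ξ :=
  (N.smooth.differentiableOn (by simp)).differentiableAt (isOpen_compl_singleton.mem_nhds hξ)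

lemma ub : ∃ C, 0 < C ∧ ∀ ξ, N.F ξ ≤ C * ‖ξ‖ := by
  obtain ⟨C, hC⟩ := (isCompact_sphere (0 : En n) 1).bddAbove_image N.cont.continuousOn
  refine ⟨max C 1, by positivity, fun ξ => ?_⟩
  by_cases hξ : ξ = 0
  · subst hξ; simp [N.sub.zero]
  have h1 : N.F (‖ξ‖⁻¹ • ξ) ≤ max C 1 := by
    refine (hC ⟨_, ?_, rfl⟩).trans (le_max_left _ _)
    simp [norm_smul, norm_ne_zero_iff.2 hξ]
  rw [N.homog _ (by positivity)] at h1
  have h2 : 0 < ‖ξ‖ := norm_pos_iff.2 hξ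
  rw [inv_mul_le_iff₀ h2] at h1
  linarith

lemma lb : ∃ c, 0 < c ∧ ∀ ξ, c * ‖ξ‖ ≤ N.F ξ := by
  rcases (sphere (0 : En n) 1).eq_empty_or_nonempty with he | hne
  · refine ⟨1, one_pos, fun ξ => ?_⟩
    by_cases hξ : ξ = 0
    · subst hξ; simp [N.sub.zero]
    exfalso
    have : ‖ξ‖⁻¹ • ξ ∈ sphere (0 : En n) 1 := by simp [norm_smul, norm_ne_zero_iff.2 hξ]
    rw [he] at this; exact this
  obtain ⟨ζ, hζ, hmin⟩ := (isCompact_sphere (0 : En n) 1).exists_isMinOn hne N.cont.continuousOn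
  have hζ0 : ζ ≠ 0 := by rintro rfl; simp at hζ
  refine ⟨N.F ζ, N.pos ζ hζ0, fun ξ => ?_⟩
  by_cases hξ : ξ = 0
  · subst hξ; simp [N.sub.zero]
  have h1 : N.F ζ ≤ N.F (‖ξ‖⁻¹ • ξ) := hmin (by simp [norm_smul, norm_ne_zero_iff.2 hξ])
  rw [N.homog _ (by positivity)] at h1
  have h2 : 0 < ‖ξ‖ := norm_pos_iff.2 hξ
  rw [← div_eq_inv_mul, le_div_iff₀ h2] at h1
  exact h1

/-- the gradient of the norm -/
def DF (ξ : En n) : En n := gradient N.F ξ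

lemma DF_le (ξ η : En n) : ⟪N.DF ξ, η⟫ ≤ N.F η := N.sub.grad_le ξ η
lemma abs_DF_le (ξ η : En n) : |⟪N.DF ξ, η⟫| ≤ N.F η := N.sub.abs_grad_le ξ η
lemma DF_self (ξ : En n) : ⟪N.DF ξ, ξ⟫ = N.F ξ := by
  by_cases hξ : ξ = 0
  · subst hξ; simp [N.sub.zero]
  exact N.sub.grad_self (N.diffAt hξ)

lemma DF_smul {c : ℝ} (hc : 0 < c) (ξ : En n) : N.DF (c • ξ) = N.DF ξ := by
  have key : ∀ c : ℝ, 0 < c → ∀ ξ η, DifferentiableAt ℝ N.F ξ → DifferentiableAt ℝ N.F (c • ξ) → 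
      ⟪N.DF (c • ξ), η⟫ = ⟪N.DF ξ, η⟫ := by
    intro c hc ξ η hd hd'
    rw [DF, DF, inner_grad, inner_grad]
    have h1 : HasFDerivAt (fun x => N.F (c • x)) (c • fderiv ℝ N.F (c • ξ)) ξ := by
      have := HasFDerivAt.comp ξ hd'.hasFDerivAt ((hasFDerivAt_id ξ).const_smul c)
      exact this.congr_fderiv (by ext v; simp)
    have h2 : HasFDerivAt (fun x => N.F (c • x)) (c • fderiv ℝ N.F ξ) ξ := by
      have := hd.hasFDerivAt.const_smul c
      refine this.congr_of_eventuallyEq (.of_forall fun x => ?_)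
      simp [N.homog c hc.le]
    have h3 := congrArg (fun L : En n →L[ℝ] ℝ => L η) (h1.unique h2)
    simpa [hc.ne'] using h3
  by_cases hξ : ξ = 0
  · subst hξ; simp
  · exact grad_ext fun η => key c hc ξ η (N.diffAt hξ) (N.diffAt (smul_ne_zero hc.ne' hξ))

lemma DF_neg (ξ : En n) : N.DF (-ξ) = - N.DF ξ := by
  by_cases hξ : ξ = 0
  · subst hξ
    have h0 : ∀ η, ⟪N.DF 0, η⟫ = 0 := by
      intro η
      rw [DF, inner_grad]
      by_cases hd : DifferentiableAt ℝ N.F 0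
      · have : IsLocalMin N.F 0 := .of_forall fun x => by
          rw [N.sub.zero]; exact N.sub.nn x
        rw [this.fderiv_eq_zero]; rfl
      · rw [fderiv_zero_of_not_differentiableAt hd]; rfl
    have h1 : N.DF 0 = 0 := grad_ext fun η => by rw [h0]; simp
    simp [h1]
  · refine grad_ext fun η => ?_
    rw [inner_neg_left, DF, DF, inner_grad, inner_grad]
    have h1 : HasFDerivAt (fun x => N.F (-x)) (- fderiv ℝ N.F (-ξ)) ξ := by
      have := HasFDerivAt.comp ξ (N.diffAt (neg_ne_zero.2 hξ)).hasFDerivAt (hasFDerivAt_id ξ).neg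
      exact this.congr_fderiv (by ext v; simp)
    have h2 : HasFDerivAt (fun x => N.F (-x)) (fderiv ℝ N.F ξ) ξ :=
      (N.diffAt hξ).hasFDerivAt.congr_of_eventuallyEq (.of_forall fun x => N.even x)
    have h3 := congrArg (fun L : En n →L[ℝ] ℝ => L η) (h1.unique h2)
    simp at h3
    linarith

lemma DF_meas : Measurable N.DF := measurable_grad _

lemma DF_bdd : ∃ C, 0 < C ∧ ∀ ξ, ‖N.DF ξ‖ ≤ C := by
  obtain ⟨C, hC, h⟩ := N.ub
  refine ⟨C, hC, fun ξ => ?_⟩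
  have h1 := (N.DF_le ξ (N.DF ξ)).trans (h _)
  rw [real_inner_self_eq_norm_sq, sq] at h1
  by_contra h2
  push Not at h2
  nlinarith [norm_nonneg (N.DF ξ)]

/-- polar norm -/
def H (x : En n) : ℝ := sSup ((fun ξ => ⟪ξ, x⟫) '' {ξ | N.F ξ ≤ 1})

lemma ballF_compact : IsCompact {ξ | N.F ξ ≤ 1} := by
  obtain ⟨c, hc, h⟩ := N.lb
  refine (isCompact_closedBall (0 : En n) c⁻¹).of_isClosed_subset
    (isClosed_le N.cont continuous_const) fun ξ hξ => ?_
  have h1 := (h ξ).trans hξ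
  rw [mem_closedBall_zero_iff, ← mul_one c⁻¹, ← div_eq_inv_mul, le_div_iff₀ hc]
  linarith

lemma H_att (x : En n) : ∃ ξ, N.F ξ ≤ 1 ∧ ⟪ξ, x⟫ = N.H x := by
  obtain ⟨ξ, h1, h2⟩ := N.ballF_compact.exists_sSup_image_eq (f := fun ξ => ⟪ξ, x⟫)
    ⟨0, by simp [N.sub.zero]⟩ (by fun_prop)
  exact ⟨ξ, h1, h2.symm⟩

lemma le_H {ξ : En n} (h : N.F ξ ≤ 1) (x : En n) : ⟪ξ, x⟫ ≤ N.H x :=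
  le_csSup (N.ballF_compact.bddAbove_image (by fun_prop)) ⟨ξ, h, rfl⟩

lemma inner_le (ξ x : En n) : ⟪ξ, x⟫ ≤ N.F ξ * N.H x := by
  by_cases hξ : ξ = 0
  · subst hξ; simp [N.sub.zero]
  have h0 := N.pos ξ hξ
  have h1 := N.le_H (ξ := (N.F ξ)⁻¹ • ξ) (by rw [N.homog _ (by positivity)]; field_simp; rfl) x
  rw [inner_smul_left] at h1
  simp at h1
  rwa [inv_mul_le_iff₀ h0] at h1

lemma subH : SubLin N.H where
  nn x := by simpa using N.le_H (ξ := 0) (by simp [N.sub.zero]) x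
  add x y := by
    obtain ⟨ξ, h1, h2⟩ := N.H_att (x + y)
    rw [← h2, inner_add_right]
    exact add_le_add (N.le_H h1 x) (N.le_H h1 y)
  hom c hc x := by
    apply le_antisymm
    · obtain ⟨ξ, h1, h2⟩ := N.H_att (c • x)
      rw [← h2, real_inner_smul_right]
      exact mul_le_mul_of_nonneg_left (N.le_H h1 x) hc
    · obtain ⟨ξ, h1, h2⟩ := N.H_att x
      rw [← h2, ← real_inner_smul_right]
      exact N.le_H h1 _
  even x := by
    have key : ∀ x, N.H x ≤ N.H (-x) := fun x => by
      obtain ⟨ξ, h1, h2⟩ := N.H_att x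
      rw [← h2, ← inner_neg_neg]
      exact N.le_H (by rwa [N.even]) _
    exact le_antisymm (by simpa using key (-x)) (key x)

lemma H_ub : ∃ C, 0 < C ∧ ∀ x, N.H x ≤ C * ‖x‖ := by
  obtain ⟨c, hc, h⟩ := N.lb
  refine ⟨c⁻¹, by positivity, fun x => ?_⟩
  obtain ⟨ξ, h1, h2⟩ := N.H_att x
  rw [← h2]
  refine (real_inner_le_norm _ _).trans ?_
  gcongr
  rw [← mul_one c⁻¹, ← div_eq_inv_mul, le_div_iff₀ hc]
  linarith [h ξ]

lemma H_lb : ∃ c, 0 < c ∧ ∀ x, c * ‖x‖ ≤ N.H x := by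
  obtain ⟨C, hC, h⟩ := N.ub
  refine ⟨C⁻¹, by positivity, fun x => ?_⟩
  by_cases hx : x = 0
  · subst hx; simp [N.subH.zero]
  have h1 := N.inner_le x x
  rw [real_inner_self_eq_norm_sq, sq] at h1
  have h2 : 0 < ‖x‖ := norm_pos_iff.2 hx
  have h3 : ‖x‖ * ‖x‖ ≤ ‖x‖ * (C * N.H x) := by
    refine h1.trans ?_
    have := mul_le_mul_of_nonneg_right (h x) (N.subH.nn x)
    linarith
  rw [← div_eq_inv_mul, div_le_iff₀ hC]
  have := le_of_mul_le_mul_left h3 h2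
  linarith

lemma H_lip : Lip N.H := by
  obtain ⟨C, hC, h⟩ := N.H_ub
  exact ⟨C, hC.le, fun x y => by linarith [h (x - y), N.subH.sub_le x y]⟩

lemma H_pos {x : En n} (hx : x ≠ 0) : 0 < N.H x := by
  obtain ⟨c, hc, h⟩ := N.H_lb
  exact lt_of_lt_of_le (mul_pos hc (norm_pos_iff.2 hx)) (h x)

lemma H_DF (ξ : En n) : N.H (N.DF ξ) ≤ 1 := by
  obtain ⟨ζ, h1, h2⟩ := N.H_att (N.DF ξ)
  rw [← h2, real_inner_comm]
  exact (N.DF_le ξ ζ).trans h1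

lemma F_gradH_le (x : En n) : N.F (gradient N.H x) ≤ 1 := by
  rw [← N.DF_self, real_inner_comm]
  exact (N.subH.grad_le x _).trans (N.H_DF _)

lemma F_gradH {x : En n} (hx : x ≠ 0) (hd : DifferentiableAt ℝ N.H x) :
    N.F (gradient N.H x) = 1 := by
  refine le_antisymm (N.F_gradH_le x) ?_
  have h1 := N.inner_le (gradient N.H x) x
  rw [N.subH.grad_self hd] at h1
  have := N.H_pos hx
  exact le_of_mul_le_mul_right (by linarith) this

lemma rpow_tangent {a b q : ℝ} (ha : 0 ≤ a) (hb : 0 ≤ b) (hq : 1 ≤ q) :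
    a ^ q + q * a ^ (q - 1) * (b - a) ≤ b ^ q := by
  rcases ha.eq_or_lt with rfl | ha
  · rcases hq.eq_or_lt with rfl | hq
    · simp
    · rw [Real.zero_rpow (by linarith), Real.zero_rpow (by linarith)]
      simpa using Real.rpow_nonneg hb q
  · have h1 := one_add_mul_self_le_rpow_one_add (s := b / a - 1) (p := q)
      (by have : 0 ≤ b / a := by positivity
          linarith) hq
    have h2 : (1 + (b / a - 1)) ^ q = b ^ q / a ^ q := by
      rw [add_sub_cancel, Real.div_rpow hb ha.le]
    have h3 : a ^ (q - 1) = a ^ q / a := by rw [Real.rpow_sub ha, Real.rpow_one]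
    have h4 : 0 < a ^ q := Real.rpow_pos_of_pos ha q
    rw [h2, le_div_iff₀ h4] at h1
    rw [h3]
    calc a ^ q + q * (a ^ q / a) * (b - a) = (1 + q * (b / a - 1)) * a ^ q := by field_simp
      _ ≤ b ^ q := h1

/-- subgradient inequality for `F^q` -/
lemma subgrad {q : ℝ} (hq : 1 ≤ q) (ξ η : En n) :
    N.F ξ ^ q + q * N.F ξ ^ (q - 1) * ⟪N.DF ξ, η - ξ⟫ ≤ N.F η ^ q := by
  refine le_trans ?_ (rpow_tangent (N.sub.nn ξ) (N.sub.nn η) hq)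
  rw [inner_sub_right, N.DF_self]
  have h1 := N.DF_le ξ η
  have h2 : 0 ≤ q * N.F ξ ^ (q - 1) :=
    mul_nonneg (by linarith) (Real.rpow_nonneg (N.sub.nn ξ) _)
  nlinarith

lemma F_grad_meas (f : En n → ℝ) : Measurable fun x => N.F (gradient f x) :=
  N.cont.measurable.comp (measurable_grad f)

end MinkowskiNorm
end P3


/-! ## Part 4: uniqueness -/
section P4
variable {n : ℕ}

lemma LocLipOn.contOn {f : En n → ℝ} {s : Set (En n)} (h : LocLipOn f s) : ContinuousOn f s := by
  intro x hx
  obtain ⟨K, t, ht, hK⟩ := h x hx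
  have hxt : x ∈ t := mem_of_mem_nhdsWithin hx ht
  have h1 : ContinuousWithinAt f t x := hK.continuousOn x hxt
  exact h1.mono_of_mem_nhdsWithin ht

lemma LocLipOn.mono {f : En n → ℝ} {s t : Set (En n)} (h : LocLipOn f s) (hts : t ⊆ s) :
    LocLipOn f t := by
  intro x hx
  obtain ⟨K, w, hw, hK⟩ := h x (hts hx)
  exact ⟨K, w, nhdsWithin_mono x hts hw, hK⟩

protected lemma LocLipOn.add {f g : En n → ℝ} {s : Set (En n)} (hf : LocLipOn f s) (hg : LocLipOn g s) :
    LocLipOn (fun x => f x + g x) s := by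
  intro x hx
  obtain ⟨K, t, ht, hK⟩ := hf x hx
  obtain ⟨K', t', ht', hK'⟩ := hg x hx
  exact ⟨K + K', t ∩ t', inter_mem ht ht',
    (hK.mono inter_subset_left).add (hK'.mono inter_subset_right)⟩

lemma LocLipOn.congr {f g : En n → ℝ} {s : Set (En n)} (hf : LocLipOn f s) (h : ∀ x ∈ s, g x = f x) :
    LocLipOn g s := by
  intro x hx
  obtain ⟨K, t, ht, hK⟩ := hf x hx
  refine ⟨K, t ∩ s, inter_mem ht self_mem_nhdsWithin, fun a ha b hb => ?_⟩
  rw [h a ha.2, h b hb.2]; exact hK ha.1 hb.1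

lemma intOn_F (N : MinkowskiNorm n) {K : Set (En n)} (hK : IsCompact K) {w a b : En n → ℝ}
    (hw : Lip w) (ha : Lip a) (hb : Lip b) :
    IntegrableOn (fun x => N.F (gradient w x) + a x * N.F (gradient b x)) K := by
  obtain ⟨C, hC, hN⟩ := N.ub
  have key : ∀ w : En n → ℝ, Lip w → IntegrableOn (fun x => N.F (gradient w x)) K := by
    intro w hw
    obtain ⟨L, hL0, hL⟩ := hw.norm_grad_le
    refine Measure.integrableOn_of_bounded (M := C * L) hK.measure_lt_top.ne
      (N.F_grad_meas w).aestronglyMeasurable (.of_forall fun x => ?_)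
    rw [Real.norm_eq_abs, abs_of_nonneg (N.sub.nn _)]
    exact (hN _).trans (by gcongr; exact hL x)
  exact (key w hw).add ((key b hb).continuousOn_mul ha.continuous.continuousOn hK)

set_option maxHeartbeats 1000000 in
lemma unique_le (N : MinkowskiNorm n) (hn : 0 < n) {Ω : Set (En n)} (hΩ : IsOpen Ω) {u v : En n → ℝ}
    (hu : LocLipOn u (closure Ω)) (hv : LocLipOn v (closure Ω))
    (hus : IsWeakSolIAMCF N Ω u) (hvs : IsWeakSolIAMCF N Ω v)
    (hu0 : ∀ x ∈ frontier Ω, u x = 0) (hv0 : ∀ x ∈ frontier Ω, v x = 0)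
    (hut : Tendsto u (cocompact (En n)) atTop) : ∀ x ∈ Ω, v x ≤ u x := by
  by_contra hcon
  push Not at hcon
  obtain ⟨x1, hx1, hlt⟩ := hcon
  -- choice of σ
  obtain ⟨σ, hσ0, hσ1, hσ⟩ : ∃ σ : ℝ, 0 < σ ∧ σ < 1 ∧ 0 < v x1 - u x1 / σ := by
    have h1 : ContinuousAt (fun σ : ℝ => v x1 - u x1 / σ) 1 := by
      refine continuousAt_const.sub (continuousAt_const.div continuousAt_id (by norm_num))
    have h2 : ∀ᶠ σ in 𝓝 (1 : ℝ), 0 < v x1 - u x1 / σ :=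
      h1.eventually (lt_mem_nhds (by simpa using hlt))
    have h3 : ∀ᶠ σ in 𝓝[<] (1 : ℝ), 0 < v x1 - u x1 / σ := h2.filter_mono nhdsWithin_le_nhds
    have h4 : ∀ᶠ σ in 𝓝[<] (1 : ℝ), 0 < σ :=
      (lt_mem_nhds (by norm_num : (0:ℝ) < 1)).filter_mono nhdsWithin_le_nhds
    obtain ⟨σ, a, b, c⟩ := (h3.and (h4.and self_mem_nhdsWithin)).exists
    exact ⟨σ, b, c, a⟩
  set t : ℝ := max (v x1) 0 with ht
  set G : En n → ℝ := fun x => min (v x) t - u x / σ with hG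
  have hGx1 : 0 < G x1 := by
    simp only [hG]
    rw [min_eq_left (le_max_left _ _)]; exact hσ
  have hGc : ContinuousOn G (closure Ω) :=
    (hv.contOn.inf continuousOn_const).sub (hu.contOn.div_const σ)
  have hGf : ∀ x ∈ frontier Ω, G x = 0 := fun x hx => by
    simp only [hG, hu0 x hx, hv0 x hx]
    rw [min_eq_left (le_max_right _ _)]; simp
  -- sup level sets are compact
  have hbig : ∀ c : ℝ, ∃ ρ, ∀ x, c ≤ G x → ‖x‖ ≤ ρ := by
    intro c
    have h1 := hut.eventually (eventually_gt_atTop (σ * (t - c)))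
    rw [Filter.Eventually, mem_cocompact] at h1
    obtain ⟨S, hS, hSsub⟩ := h1
    obtain ⟨ρ, hρ⟩ := hS.isBounded.subset_closedBall 0
    refine ⟨ρ, fun x hx => ?_⟩
    by_contra hx'
    have h2 : x ∈ Sᶜ := fun h => hx' (by simpa using hρ h)
    have h3 : σ * (t - c) < u x := hSsub h2
    have h4 : G x ≤ t - u x / σ := by simp only [hG]; linarith [min_le_right (v x) t]
    have h5 : t - c < u x / σ := by rw [lt_div_iff₀ hσ0]; linarith
    linarith
  have hlev : ∀ c : ℝ, IsCompact {x | x ∈ closure Ω ∧ c ≤ G x} := by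
    intro c
    obtain ⟨ρ, hρ⟩ := hbig c
    refine (isCompact_closedBall (0 : En n) ρ).of_isClosed_subset ?_ fun x hx => by
      simpa using hρ x hx.2
    exact hGc.preimage_isClosed_of_isClosed isClosed_closure isClosed_Ici
  obtain ⟨xm, ⟨hxm, hxmc⟩, hmax⟩ := (hlev (G x1)).exists_isMaxOn ⟨x1, subset_closure hx1, le_rfl⟩
    (hGc.mono fun x hx => hx.1)
  set m := G xm with hm
  have hm0 : 0 < m := hGx1.trans_le hxmc
  have hGm : ∀ x ∈ closure Ω, G x ≤ m := by
    intro x hx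
    by_cases h : G x1 ≤ G x
    · exact hmax ⟨hx, h⟩
    · exact (not_le.1 h).le.trans hxmc
  set δ : ℝ := (1 - σ) / 2 with hδ
  have hδ0 : 0 < δ := by rw [hδ]; linarith
  set c : ℝ := max (m / 2) (m - δ) with hc
  have hc0 : 0 < c := lt_of_lt_of_le (by linarith) (le_max_left _ _)
  have hcm : c < m := max_lt (by linarith) (by linarith)
  set K : Set (En n) := {x | x ∈ closure Ω ∧ c ≤ G x} with hKdef
  have hK : IsCompact K := hlev c
  have hKΩ : K ⊆ Ω := by
    intro x hx
    by_contra hxΩ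
    have : x ∈ frontier Ω := by rw [frontier, hΩ.interior_eq]; exact ⟨hx.1, hxΩ⟩
    have h2 := hx.2
    rw [hGf x this] at h2; linarith
  obtain ⟨w, hw, U1, hU1, hKU1, hU1Ω, hwu⟩ := exists_lip_of_locLip hΩ hus.1 hK hKΩ
  obtain ⟨z, hz, U2, hU2, hKU2, hU2Ω, hzv⟩ := exists_lip_of_locLip hΩ hvs.1 hK hKΩ
  set U := U1 ∩ U2 with hU
  have hUo : IsOpen U := hU1.inter hU2
  have hKU : K ⊆ U := subset_inter hKU1 hKU2
  classical
  set I : En n → ℝ := fun x => min (z x) t - σ⁻¹ * w x - c with hI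
  set D : En n → ℝ := fun x => max 0 (I x) with hD
  have hminL : Lip fun x => min (z x) t := hz.min (Lip.const t)
  have hIL : Lip I := (hminL.sub (hw.smul σ⁻¹)).sub (Lip.const c)
  have hDL : Lip D := (Lip.const 0).max hIL
  have hIG : ∀ x ∈ U, I x = G x - c := fun x hx => by
    simp only [hI, hG]; rw [hwu x hx.1, hzv x hx.2]; ring
  set d : En n → ℝ := fun x => if x ∈ K then D x else 0 with hd
  have hdD : ∀ x ∈ U, d x = D x := fun x hx => by
    by_cases h : x ∈ K
    · simp [hd, h]
    · simp only [hd, h, if_false, hD]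
      rw [max_eq_left]
      rw [hIG x hx]
      by_contra h2
      exact h ⟨subset_closure (hU1Ω hx.1), by linarith⟩
  have hdK : ∀ x, x ∉ K → d x = 0 := fun x hx => by simp [hd, hx]
  have hdll : LocLipOn d Ω := by
    intro x hx
    by_cases h : x ∈ K
    · obtain ⟨C, hC⟩ := hDL.lw
      refine ⟨C, U, mem_nhdsWithin_of_mem_nhds (hUo.mem_nhds (hKU h)), fun a ha b hb => ?_⟩
      rw [hdD a ha, hdD b hb]; exact hC a b
    · refine ⟨0, Kᶜ, mem_nhdsWithin_of_mem_nhds (hK.isClosed.isOpen_compl.mem_nhds h), fun a ha b hb => ?_⟩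
      rw [hdK a ha, hdK b hb]; simp
  have hdL : Lip d := lip_of_locLip_cs hΩ hdll hK hKΩ hdK
  have hdc : HasCompactSupport d := HasCompactSupport.intro hK hdK
  have hd0 : ∀ x, 0 ≤ d x := fun x => by
    simp only [hd]; split_ifs
    · exact le_max_left _ _
    · exact le_rfl
  have hdδ : ∀ x, d x ≤ δ := fun x => by
    by_cases h : x ∈ K
    · rw [hdD x (hKU h)]
      refine max_le hδ0.le ?_
      rw [hIG x (hKU h)]
      have := hGm x h.1
      have := le_max_right (m / 2) (m - δ)
      linarith
    · rw [hdK x h]; exact hδ0.le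
  have hd2L : Lip fun x => d x * d x := hdL.mul_cs hdL hdc
  -- the three competitors
  have hKc : closure K = K := hK.isClosed.closure_eq
  have e1 := hvs.2 K (by rwa [hKc]) (by rwa [hKc]) (fun x => v x + (-1) * d x)
    (hvs.1.add ((hdL.smul (-1)).locLipOn Ω)) (fun x hx => by simp [hdK x hx.2])
  have e2 := hus.2 K (by rwa [hKc]) (by rwa [hKc]) (fun x => u x + σ * d x)
    (hus.1.add ((hdL.smul σ).locLipOn Ω)) (fun x hx => by simp [hdK x hx.2])
  have e3 := hus.2 K (by rwa [hKc]) (by rwa [hKc]) (fun x => u x + (σ / 2) * (d x * d x))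
    (hus.1.add ((hd2L.smul (σ / 2)).locLipOn Ω)) (fun x hx => by simp [hdK x hx.2])
  have gu : ∀ x ∈ K, gradient u x = gradient w x := fun x hx =>
    grad_congr (by filter_upwards [hUo.mem_nhds (hKU hx)] with y hy; exact (hwu y hy.1).symm)
  have gv : ∀ x ∈ K, gradient v x = gradient z x := fun x hx =>
    grad_congr (by filter_upwards [hUo.mem_nhds (hKU hx)] with y hy; exact (hzv y hy.2).symm)
  have g1 : ∀ x ∈ K, gradient (fun x => v x + (-1) * d x) x = gradient (fun x => z x + (-1) * d x) x :=
    fun x hx => grad_congr (by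
      filter_upwards [hUo.mem_nhds (hKU hx)] with y hy; rw [hzv y hy.2])
  have g2 : ∀ x ∈ K, gradient (fun x => u x + σ * d x) x = gradient (fun x => w x + σ * d x) x :=
    fun x hx => grad_congr (by
      filter_upwards [hUo.mem_nhds (hKU hx)] with y hy; rw [hwu y hy.1])
  have g3 : ∀ x ∈ K, gradient (fun x => u x + (σ / 2) * (d x * d x)) x =
      gradient (fun x => w x + (σ / 2) * (d x * d x)) x :=
    fun x hx => grad_congr (by
      filter_upwards [hUo.mem_nhds (hKU hx)] with y hy; rw [hwu y hy.1])
  have vz : ∀ x ∈ K, v x = z x := fun x hx => (hzv x (hKU hx).2).symm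
  have uw : ∀ x ∈ K, u x = w x := fun x hx => (hwu x (hKU hx).1).symm
  have hKm := hK.measurableSet
  have m1 : ∀ φ ψ : En n → ℝ, (∀ x ∈ K, φ x = ψ x) → ∫ x in K, φ x = ∫ x in K, ψ x :=
    fun φ ψ h => setIntegral_congr_fun hKm h
  replace e1 := (m1 (fun x => N.F (gradient z x) + z x * N.F (gradient z x)) _
      (fun x hx => by rw [gv x hx, vz x hx])).trans_le (e1.trans_eq
    (m1 _ (fun x => N.F (gradient (fun x => z x + (-1) * d x) x) +
      (z x + (-1) * d x) * N.F (gradient z x))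
      (fun x hx => by rw [g1 x hx, gv x hx, vz x hx])))
  replace e2 := (m1 (fun x => N.F (gradient w x) + w x * N.F (gradient w x)) _
      (fun x hx => by rw [gu x hx, uw x hx])).trans_le (e2.trans_eq
    (m1 _ (fun x => N.F (gradient (fun x => w x + σ * d x) x) +
      (w x + σ * d x) * N.F (gradient w x))
      (fun x hx => by rw [g2 x hx, gu x hx, uw x hx])))
  replace e3 := (m1 (fun x => N.F (gradient w x) + w x * N.F (gradient w x)) _
      (fun x hx => by rw [gu x hx, uw x hx])).trans_le (e3.trans_eq
    (m1 _ (fun x => N.F (gradient (fun x => w x + (σ / 2) * (d x * d x)) x) +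
      (w x + (σ / 2) * (d x * d x)) * N.F (gradient w x))
      (fun x hx => by rw [g3 x hx, gu x hx, uw x hx])))
  have c1 : Lip fun x => z x + (-1) * d x := hz.add (hdL.smul _)
  have c2 : Lip fun x => w x + σ * d x := hw.add (hdL.smul _)
  have c3 : Lip fun x => w x + (σ / 2) * (d x * d x) := hw.add (hd2L.smul _)
  have ip1 := intOn_F N hK hz hz hz
  have iq1 := intOn_F N hK c1 c1 hz
  have ip2 := intOn_F N hK hw hw hw
  have iq2 := intOn_F N hK c2 c2 hw
  have iq3 := intOn_F N hK c3 c3 hw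
  have s1 := integral_sub ip1 iq1
  have s2 := integral_sub ip2 iq2
  have s3 := integral_sub ip2 iq3
  have i1 := (ip1.sub iq1).const_mul (1 + δ)
  have i2 := (ip2.sub iq2).const_mul ((1 + δ) / σ)
  have i3 := (ip2.sub iq3).const_mul (1 / σ)
  have i12 := i1.add i2
  have i123 := i12.add i3
  -- gradients
  have gae : ∀ᵐ x, x ∈ K → 0 ≤ δ * (d x * N.F (if z x < t then gradient z x else 0)) +
      (1 - σ * (1 + δ) - σ * δ / 2) * (d x * N.F (σ⁻¹ • gradient w x)) ∧
      δ * (d x * N.F (if z x < t then gradient z x else 0)) +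
      (1 - σ * (1 + δ) - σ * δ / 2) * (d x * N.F (σ⁻¹ • gradient w x)) ≤
      (1 + δ) * ((N.F (gradient z x) + z x * N.F (gradient z x)) -
        (N.F (gradient (fun x => z x + (-1) * d x) x) + (z x + (-1) * d x) * N.F (gradient z x))) +
      ((1 + δ) / σ) * ((N.F (gradient w x) + w x * N.F (gradient w x)) -
        (N.F (gradient (fun x => w x + σ * d x) x) + (w x + σ * d x) * N.F (gradient w x))) +
      (1 / σ) * ((N.F (gradient w x) + w x * N.F (gradient w x)) -
        (N.F (gradient (fun x => w x + (σ / 2) * (d x * d x)) x) +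
          (w x + (σ / 2) * (d x * d x)) * N.F (gradient w x))) ∧
      (d x = 0 → gradient d x = 0) ∧
      (0 < d x → gradient d x = (if z x < t then gradient z x else 0) - σ⁻¹ • gradient w x) := by
    filter_upwards [hdL.ae_grad_zero, (Lip.const 0).ae_grad_max hIL, hz.ae_grad_min (Lip.const t),
      hz.ae_diff, hw.ae_diff, hdL.ae_diff, hminL.ae_diff] with x a1 a2 a3 dz dw dd dm hx
    have hgd : 0 < d x → gradient d x = (if z x < t then gradient z x else 0) - σ⁻¹ • gradient w x := by
      intro hpos
      have hgD : gradient d x = gradient D x := grad_congr (by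
        filter_upwards [hUo.mem_nhds (hKU hx)] with y hy; exact hdD y hy)
      have hI0 : 0 < I x := by
        rw [hdD x (hKU hx)] at hpos
        simp only [hD] at hpos
        by_contra h
        rw [max_eq_left (not_lt.1 h)] at hpos; exact lt_irrefl _ hpos
      rw [hgD, a2, if_pos hI0]
      have h1 : gradient I x = gradient (fun x => min (z x) t - σ⁻¹ * w x) x - gradient (fun _ => c) x :=
        grad_sub (dm.sub (dw.const_mul _)) (differentiableAt_const c)
      rw [h1, grad_sub dm (dw.const_mul _), a3, grad_smul σ⁻¹ dw]
      simp
    set gV := (if z x < t then gradient z x else 0) with hgV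
    set gU := σ⁻¹ • gradient w x with hgU
    have hwU : gradient w x = σ • gU := by rw [hgU, smul_smul, mul_inv_cancel₀ hσ0.ne', one_smul]
    have hFw : N.F (gradient w x) = σ * N.F gU := by rw [hwU, N.homog σ hσ0.le]
    have hU0 := N.sub.nn gU
    have hV0 := N.sub.nn gV
    have hdx := hd0 x
    have hdx' := hdδ x
    have hcoef : 0 ≤ 1 - σ * (1 + δ) - σ * δ / 2 := by rw [hδ]; nlinarith
    have q1 : gradient (fun x => z x + (-1) * d x) x = gradient z x - gradient d x := by
      rw [grad_add dz (dd.const_mul _), grad_smul (-1) dd]; simp [sub_eq_add_neg]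
    have q2 : gradient (fun x => w x + σ * d x) x = gradient w x + σ • gradient d x := by
      rw [grad_add dw (dd.const_mul _), grad_smul σ dd]
    have q3 : gradient (fun x => w x + (σ / 2) * (d x * d x)) x = gradient w x + (σ * d x) • gradient d x := by
      have ddd : DifferentiableAt ℝ (fun x => d x * d x) x := dd.mul dd
      rw [grad_add dw (ddd.const_mul _), grad_smul (σ / 2) ddd, grad_mul dd dd,
        ← add_smul, smul_smul]
      congr 2; ring
    refine ⟨by positivity, ?_, a1, hgd⟩
    rw [q1, q2, q3]
    rcases hdx.eq_or_lt with h0 | hpos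
    · rw [a1 h0.symm, ← h0]; simp
    · have hg := hgd hpos
      rw [hg]
      have r1 : N.F gV - N.F gU + d x * N.F gV ≤
          (N.F (gradient z x) + z x * N.F (gradient z x)) -
            (N.F (gradient z x - (gV - gU)) + (z x + (-1) * d x) * N.F (gradient z x)) := by
        by_cases hzt : z x < t
        · rw [hgV, if_pos hzt, sub_sub_cancel]; linarith
        · rw [hgV, if_neg hzt, zero_sub, sub_neg_eq_add, N.sub.zero]
          have := N.sub.add (gradient z x) gU
          have := mul_nonneg hdx (N.sub.nn (gradient z x))
          linarith
      have r2 : σ * (N.F gU - N.F gV - σ * (d x * N.F gU)) ≤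
          (N.F (gradient w x) + w x * N.F (gradient w x)) -
        (N.F (gradient w x + σ • (gV - gU)) + (w x + σ * d x) * N.F (gradient w x)) := by
        have : gradient w x + σ • (gV - gU) = σ • gV := by rw [hwU, smul_sub]; abel
        rw [this, N.homog σ hσ0.le, hFw]
        linarith
      have r3 : σ * (d x * (N.F gU - N.F gV) - σ * (d x * d x / 2) * N.F gU) ≤
          (N.F (gradient w x) + w x * N.F (gradient w x)) -
        (N.F (gradient w x + (σ * d x) • (gV - gU)) +
          (w x + (σ / 2) * (d x * d x)) * N.F (gradient w x)) := by
        have : gradient w x + (σ * d x) • (gV - gU) = σ • ((1 - d x) • gU + d x • gV) := by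
          rw [hwU]; module
        rw [this, N.homog σ hσ0.le, hFw]
        have hd1 : d x ≤ 1 := by linarith
        have h5 := N.sub.add ((1 - d x) • gU) (d x • gV)
        rw [N.homog _ (by linarith), N.homog _ hdx] at h5
        have h6 := mul_le_mul_of_nonneg_left h5 hσ0.le
        linarith
      set X1 := (N.F (gradient z x) + z x * N.F (gradient z x)) -
            (N.F (gradient z x - (gV - gU)) + (z x + (-1) * d x) * N.F (gradient z x))
      set X2 := (N.F (gradient w x) + w x * N.F (gradient w x)) -
        (N.F (gradient w x + σ • (gV - gU)) + (w x + σ * d x) * N.F (gradient w x))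
      set X3 := (N.F (gradient w x) + w x * N.F (gradient w x)) -
        (N.F (gradient w x + (σ * d x) • (gV - gU)) +
          (w x + (σ / 2) * (d x * d x)) * N.F (gradient w x))
      have t1 := mul_le_mul_of_nonneg_left r1 (show 0 ≤ 1 + δ by linarith)
      have t2 : (1 + δ) * (N.F gU - N.F gV - σ * (d x * N.F gU)) ≤ (1 + δ) / σ * X2 := by
        rw [div_mul_eq_mul_div, le_div_iff₀ hσ0]
        have := mul_le_mul_of_nonneg_left r2 (show 0 ≤ 1 + δ by linarith)
        linarith
      have t3 : (d x * (N.F gU - N.F gV) - σ * (d x * d x / 2) * N.F gU) ≤ 1 / σ * X3 := by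
        rw [div_mul_eq_mul_div, le_div_iff₀ hσ0]
        linarith
      have t4 : σ * (d x * d x / 2) * N.F gU ≤ σ * δ / 2 * (d x * N.F gU) := by
        have : d x * (d x * N.F gU) ≤ δ * (d x * N.F gU) := by gcongr
        have := mul_le_mul_of_nonneg_left this (show 0 ≤ σ / 2 by linarith)
        linarith
      linarith
  have hle : ∫ x in K, ((1 + δ) * ((N.F (gradient z x) + z x * N.F (gradient z x)) -
        (N.F (gradient (fun x => z x + (-1) * d x) x) + (z x + (-1) * d x) * N.F (gradient z x))) +
      ((1 + δ) / σ) * ((N.F (gradient w x) + w x * N.F (gradient w x)) -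
        (N.F (gradient (fun x => w x + σ * d x) x) + (w x + σ * d x) * N.F (gradient w x))) +
      (1 / σ) * ((N.F (gradient w x) + w x * N.F (gradient w x)) -
        (N.F (gradient (fun x => w x + (σ / 2) * (d x * d x)) x) +
          (w x + (σ / 2) * (d x * d x)) * N.F (gradient w x)))) ≤ 0 := by
    have hh := integral_add i12 i3
    have hh' := integral_add i1 i2
    simp only [Pi.add_apply, Pi.sub_apply] at hh hh'
    rw [hh, hh', integral_const_mul, integral_const_mul, integral_const_mul, s1, s2, s3]
    have k1 := mul_nonneg (show 0 ≤ 1 + δ by linarith) (sub_nonneg.2 e1)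
    have k2 := mul_nonneg (show 0 ≤ (1 + δ) / σ by positivity) (sub_nonneg.2 e2)
    have k3 := mul_nonneg (show 0 ≤ 1 / σ by positivity) (sub_nonneg.2 e3)
    linarith
  have gaeK := (ae_restrict_iff' hKm).2 gae
  have hzero := (integral_eq_zero_iff_of_nonneg_ae (gaeK.mono fun x hx => hx.1.trans hx.2.1) i123).1
    (le_antisymm hle (integral_nonneg_of_ae (gaeK.mono fun x hx => hx.1.trans hx.2.1)))
  have hgd0 : ∀ᵐ x, gradient d x = 0 := by
    have h1 : ∀ᵐ x, x ∈ K → gradient d x = 0 := by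
      rw [← ae_restrict_iff' hKm]
      filter_upwards [gaeK, hzero] with x hx hx0
      obtain ⟨b1, b2, b3, b4⟩ := hx
      have hx0' := b2.trans (le_of_eq hx0)
      simp only [Pi.zero_apply] at hx0'
      rcases (hd0 x).eq_or_lt with h0 | hpos
      · exact b3 h0.symm
      · have hcoef : 0 < 1 - σ * (1 + δ) - σ * δ / 2 := by rw [hδ]; nlinarith
        have y1 := mul_nonneg (hd0 x) (N.sub.nn (if z x < t then gradient z x else 0))
        have y2 := mul_nonneg (hd0 x) (N.sub.nn (σ⁻¹ • gradient w x))
        have y3 := mul_nonneg hδ0.le y1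
        have y4 := mul_nonneg hcoef.le y2
        have y5 : δ * (d x * N.F (if z x < t then gradient z x else 0)) = 0 := by linarith
        have y6 : (1 - σ * (1 + δ) - σ * δ / 2) * (d x * N.F (σ⁻¹ • gradient w x)) = 0 := by linarith
        have F0 : ∀ ξ, N.F ξ = 0 → ξ = 0 := fun ξ h => by
          by_contra h'; exact (N.pos ξ h').ne' h
        have y7 := F0 _ (((mul_eq_zero.1 y5).resolve_left hδ0.ne' |> mul_eq_zero.1).resolve_left hpos.ne')
        have y8 := F0 _ (((mul_eq_zero.1 y6).resolve_left hcoef.ne' |> mul_eq_zero.1).resolve_left hpos.ne')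
        rw [b4 hpos, y7, y8, sub_zero]
    filter_upwards [h1] with x hx
    by_cases h : x ∈ K
    · exact hx h
    · have : d =ᶠ[𝓝 x] fun _ => 0 := by
        filter_upwards [hK.isClosed.isOpen_compl.mem_nhds h] with y hy
        exact hdK y hy
      rw [grad_congr this, gradient_fun_const]
  have hfin := eq_zero_of_grad hn hdL hdc hd0 hgd0 xm
  have hxmK : xm ∈ K := ⟨hxm, hcm.le⟩
  rw [hdD xm (hKU hxmK)] at hfin
  have h1 : I xm ≤ 0 := by rw [← hfin]; exact le_max_right _ _
  rw [hIG xm (hKU hxmK)] at h1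
  linarith

end P4


/-! ## Part 5: interior Wulff balls of the complement -/
section P5
variable {n : ℕ}

lemma taylor2 {g : En n → ℝ} {U S : Set (En n)} (hU : IsOpen U) (hg : ContDiffOn ℝ 2 g U)
    (hS : IsCompact S) (hSU : S ⊆ U) :
    ∃ δ B : ℝ, 0 < δ ∧ 0 < B ∧ ∀ ν ∈ S, ∀ w : En n, ‖w‖ ≤ δ →
      |g (ν + w) - g ν - ⟪gradient g ν, w⟫| ≤ B * ‖w‖ ^ 2 := by
  obtain ⟨δ, hδ, hδU⟩ := hS.exists_cthickening_subset_open hU hSU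
  have hK : IsCompact (cthickening δ S) := hS.cthickening
  have hD : ContDiffOn ℝ 1 (fderiv ℝ g) U := hg.fderiv_of_isOpen hU (by norm_num)
  have hl : LocallyLipschitzOn (cthickening δ S) (fderiv ℝ g) := by
    intro x hx
    have h1 : ContDiffAt ℝ 1 (fderiv ℝ g) x := hD.contDiffAt (hU.mem_nhds (hδU hx))
    obtain ⟨C, t, ht, hC⟩ := h1.exists_lipschitzOnWith
    exact ⟨C, t, mem_nhdsWithin_of_mem_nhds ht, hC⟩
  obtain ⟨L, hL⟩ := hl.exists_lipschitzOnWith_of_compact hK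
  refine ⟨δ, L + 1, hδ, by positivity, fun ν hν w hw => ?_⟩
  have hball : closedBall ν ‖w‖ ⊆ cthickening δ S := fun x hx =>
    mem_cthickening_of_dist_le x ν δ S hν ((mem_closedBall.1 hx).trans hw)
  have hνb : ν ∈ closedBall ν ‖w‖ := by simp
  have h1 := (convex_closedBall ν ‖w‖).norm_image_sub_le_of_norm_hasFDerivWithin_le' (f := g)
    (f' := fderiv ℝ g) (φ := fderiv ℝ g ν) (C := L * ‖w‖) (x := ν) (y := ν + w)
    (fun x hx => ((hg.differentiableOn (by norm_num)).differentiableAt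
      (hU.mem_nhds (hδU (hball hx)))).hasFDerivAt.hasFDerivWithinAt)
    (fun x hx => ?_) hνb (by simp)
  · rw [Real.norm_eq_abs, add_sub_cancel_left, ← inner_grad] at h1
    refine h1.trans ?_
    nlinarith [sq_nonneg ‖w‖]
  · have h2 := hL.norm_sub_le (hball hx) (hball hνb)
    refine h2.trans ?_
    gcongr
    simpa [dist_eq_norm] using hx

/-- quantitative strict convexity of the polar ball at `DF ν` -/
lemma polar_strict (N : MinkowskiNorm n) {S : Set (En n)} (hS : IsCompact S) (h0 : ∀ ν ∈ S, ν ≠ 0) :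
    ∃ c : ℝ, 0 < c ∧ ∀ ν ∈ S, ∀ z, N.H z ≤ 1 → c * ‖z - N.DF ν‖ ^ 2 ≤ N.F ν - ⟪ν, z⟫ := by
  obtain ⟨δ, B, hδ, hB, h⟩ := taylor2 (g := N.F) (isOpen_compl_singleton (x := (0 : En n)))
    (N.smooth.of_le (WithTop.coe_le_coe.2 (le_top : (2 : ℕ∞) ≤ ⊤))) hS (fun ν hν => by simpa using h0 ν hν)
  obtain ⟨cH, hcH, hH⟩ := N.H_lb
  set M := 2 * cH⁻¹ with hM
  have hM0 : 0 < M := by positivity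
  have hsmall : ∀ z, N.H z ≤ 1 → ‖z‖ ≤ cH⁻¹ := fun z hz => by
    rw [← mul_one cH⁻¹, ← div_eq_inv_mul, le_div_iff₀ hcH]
    linarith [hH z]
  set s := min (1 / (2 * B)) (δ / M) with hs
  have hs0 : 0 < s := by positivity
  have hs1 : s * B ≤ 1 / 2 := by
    have : s ≤ 1 / (2 * B) := min_le_left _ _
    calc s * B ≤ 1 / (2 * B) * B := by gcongr
      _ = 1 / 2 := by field_simp
  have hs2 : s * M ≤ δ := by
    have : s ≤ δ / M := min_le_right _ _
    calc s * M ≤ δ / M * M := by gcongr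
      _ = δ := by field_simp
  refine ⟨s / 2, by positivity, fun ν hν z hz => ?_⟩
  have hzd : ‖z - N.DF ν‖ ≤ M := by
    refine (norm_sub_le _ _).trans ?_
    have := hsmall z hz
    have := hsmall _ (N.H_DF ν)
    linarith
  have h1 := h ν hν (s • (z - N.DF ν)) (by
    rw [norm_smul, Real.norm_eq_abs, abs_of_pos hs0]
    refine le_trans ?_ hs2
    gcongr)
  have h2 := (abs_le.1 h1).2
  have h3 := N.inner_le (ν + s • (z - N.DF ν)) z
  have h4 : N.F (ν + s • (z - N.DF ν)) * N.H z ≤ N.F (ν + s • (z - N.DF ν)) := by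
    have := N.sub.nn (ν + s • (z - N.DF ν))
    nlinarith
  have h5 : ⟪ν + s • (z - N.DF ν), z⟫ = ⟪ν, z⟫ + s * ⟪z - N.DF ν, z⟫ := by
    rw [inner_add_left, real_inner_smul_left]
  have h6 : ⟪gradient N.F ν, s • (z - N.DF ν)⟫ = s * ⟪z - N.DF ν, N.DF ν⟫ := by
    rw [real_inner_smul_right, real_inner_comm]; rfl
  have h7 : ‖z - N.DF ν‖ ^ 2 = ⟪z - N.DF ν, z⟫ - ⟪z - N.DF ν, N.DF ν⟫ := by
    rw [← real_inner_self_eq_norm_sq, ← inner_sub_right]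
  have h8 : ‖s • (z - N.DF ν)‖ ^ 2 = s ^ 2 * ‖z - N.DF ν‖ ^ 2 := by
    rw [norm_smul, mul_pow, Real.norm_eq_abs, sq_abs]
  rw [h6, h8] at h2
  rw [h5] at h3
  have h9 : B * (s ^ 2 * ‖z - N.DF ν‖ ^ 2) ≤ s / 2 * ‖z - N.DF ν‖ ^ 2 := by
    have : s * B * (s * ‖z - N.DF ν‖ ^ 2) ≤ 1 / 2 * (s * ‖z - N.DF ν‖ ^ 2) := by gcongr
    linarith
  have h10 : s * ‖z - N.DF ν‖ ^ 2 = s * ⟪z - N.DF ν, z⟫ - s * ⟪z - N.DF ν, N.DF ν⟫ := by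
    rw [h7]; ring
  linarith

/-- touching Wulff balls -/
lemma touching (N : MinkowskiNorm n) {Ω : Set (En n)} (hΩ : IsOpen Ω) (hsb : HasSmoothBoundary Ω)
    (hbd : Bornology.IsBounded Ωᶜ) {r0 : ℝ} (hr0 : 0 < r0) :
    ∃ r, 0 < r ∧ r ≤ r0 ∧ ∀ y ∈ frontier Ω, ∃ x0, N.H (y - x0) ≤ r ∧
      ∀ x, N.H (x - x0) ≤ r → x ∉ Ω := by
  obtain ⟨f, hf, hfΩ, hf0⟩ := hsb
  have hfr : IsCompact (frontier Ω) := by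
    refine Metric.isCompact_of_isClosed_isBounded isClosed_frontier (hbd.subset ?_)
    rw [frontier, hΩ.interior_eq]; exact fun x hx => hx.2
  have hgc : Continuous (gradient f) := by
    have h1 : Continuous (fderiv ℝ f) := hf.continuous_fderiv (by simp)
    exact (InnerProductSpace.toDual ℝ (En n)).symm.continuous.comp h1
  have hS : IsCompact (gradient f '' frontier Ω) := hfr.image hgc
  obtain ⟨c, hc, hstrict⟩ := polar_strict N hS (by
    rintro _ ⟨y, hy, rfl⟩ h
    apply hf0 y hy
    ext v
    rw [← inner_grad, h]; simp)
  obtain ⟨δ, B, hδ, hB, htay⟩ := taylor2 (g := f) isOpen_univ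
    (hf.of_le (WithTop.coe_le_coe.2 (le_top : (2 : ℕ∞) ≤ ⊤))).contDiffOn hfr (subset_univ _)
  obtain ⟨cH, hcH, hH⟩ := N.H_lb
  set M := 2 * cH⁻¹ with hM
  have hM0 : 0 < M := by positivity
  have hsmall : ∀ z, N.H z ≤ 1 → ‖z‖ ≤ cH⁻¹ := fun z hz => by
    rw [← mul_one cH⁻¹, ← div_eq_inv_mul, le_div_iff₀ hcH]
    linarith [hH z]
  set r := min r0 (min (δ / M) (c / B)) with hr
  have hr_pos : 0 < r := by positivity
  have hr1 : r * M ≤ δ := by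
    have : r ≤ δ / M := (min_le_right _ _).trans (min_le_left _ _)
    calc r * M ≤ δ / M * M := by gcongr
      _ = δ := by field_simp
  have hr2 : r * B ≤ c := by
    have : r ≤ c / B := (min_le_right _ _).trans (min_le_right _ _)
    calc r * B ≤ c / B * B := by gcongr
      _ = c := by field_simp
  refine ⟨r, hr_pos, min_le_left _ _, fun y hy => ?_⟩
  set ν := gradient f y with hν
  refine ⟨y + r • N.DF ν, ?_, fun x hx hxΩ => ?_⟩
  · rw [sub_add_cancel_left, N.subH.even, N.subH.hom r hr_pos.le]
    have := N.H_DF ν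
    nlinarith
  · -- write x = x0 - r z
    set z := r⁻¹ • (y + r • N.DF ν - x) with hz
    have hHz : N.H z ≤ 1 := by
      rw [hz, N.subH.hom _ (by positivity), N.subH.rev, inv_mul_le_iff₀ hr_pos]; simpa using hx
    have hxz : x = y + r • (N.DF ν - z) := by
      rw [smul_sub, hz, smul_smul, mul_inv_cancel₀ hr_pos.ne', one_smul]; abel
    have hyf : 0 ≤ f y := by
      have : y ∉ Ω := by
        rw [frontier, hΩ.interior_eq] at hy; exact hy.2
      rw [hfΩ] at this
      simpa using this
    have h1 := hstrict ν ⟨y, hy, rfl⟩ z hHz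
    have hzd : ‖N.DF ν - z‖ ≤ M := by
      refine (norm_sub_le _ _).trans ?_
      have := hsmall z hHz
      have := hsmall _ (N.H_DF ν)
      linarith
    have h2 := (abs_le.1 (htay y hy (r • (N.DF ν - z)) (by
      rw [norm_smul, Real.norm_eq_abs, abs_of_pos hr_pos]
      refine le_trans ?_ hr1
      gcongr))).1
    rw [← hxz, real_inner_smul_right, norm_smul, mul_pow, Real.norm_eq_abs, sq_abs, ← hν,
      inner_sub_right, real_inner_comm ν (N.DF ν) |>.symm, norm_sub_rev] at h2
    have hself : ⟪ν, N.DF ν⟫ = N.F ν := by rw [real_inner_comm]; exact N.DF_self ν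
    have hfx : f x < 0 := by rw [hfΩ] at hxΩ; exact hxΩ
    have h3 : B * (r ^ 2 * ‖z - N.DF ν‖ ^ 2) ≤ r * (c * ‖z - N.DF ν‖ ^ 2) := by
      have : (r * B) * (r * ‖z - N.DF ν‖ ^ 2) ≤ c * (r * ‖z - N.DF ν‖ ^ 2) := by gcongr
      linarith
    have h4 := mul_le_mul_of_nonneg_left h1 hr_pos.le
    rw [real_inner_comm] at h2
    rw [hself] at h2
    linarith

end P5


section P6
variable {n : ℕ}

lemma MinkowskiNorm.Fpow_meas (N : MinkowskiNorm n) (q : ℝ) (f : En n → ℝ) :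
    Measurable (fun x => N.F (gradient f x) ^ q) := (N.F_grad_meas f).pow_const q

lemma MinkowskiNorm.Fpow_bdd (N : MinkowskiNorm n) {q : ℝ} (hq : 0 ≤ q) {f : En n → ℝ} (hf : Lip f) :
    ∃ A, 0 ≤ A ∧ ∀ x, N.F (gradient f x) ^ q ≤ A := by
  obtain ⟨C, hC, hF⟩ := N.ub
  obtain ⟨D, hD, hg⟩ := hf.norm_grad_le
  refine ⟨(C * D) ^ q, by positivity, fun x => ?_⟩
  refine Real.rpow_le_rpow (N.sub.nn _) ((hF _).trans ?_) hq
  gcongr; exact hg x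

lemma int_Fpow (N : MinkowskiNorm n) {q : ℝ} (hq : 0 ≤ q) {f η : En n → ℝ} (hf : Lip f)
    (hη : Measurable η) {A ρ : ℝ} (hA : ∀ x, |η x| ≤ A) (h0 : ∀ x, ρ < ‖x‖ → η x = 0) :
    Integrable (fun x => η x * N.F (gradient f x) ^ q) := by
  obtain ⟨B, hB, hF⟩ := N.Fpow_bdd hq hf
  have hA0 : 0 ≤ A := (abs_nonneg _).trans (hA 0)
  refine int_bdd (A := A * B) (ρ := ρ) (hη.mul (N.Fpow_meas q f)).aestronglyMeasurable
    (Eventually.of_forall fun x => ?_) (fun x hx => by simp [h0 x hx])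
  rw [abs_mul]
  have : |N.F (gradient f x) ^ q| ≤ B := by
    rw [abs_of_nonneg (Real.rpow_nonneg (N.sub.nn _) _)]; exact hF x
  gcongr
  exact hA x

lemma int_E (N : MinkowskiNorm n) {q : ℝ} (hq : 0 < q) {f : En n → ℝ} (hf : Lip f)
    {c ρ : ℝ} (h0 : ∀ x, ρ < ‖x‖ → f x = c) :
    Integrable (fun x => N.F (gradient f x) ^ q) := by
  obtain ⟨B, hB, hF⟩ := N.Fpow_bdd hq.le hf
  refine int_bdd (A := B) (ρ := ρ) (N.Fpow_meas q f).aestronglyMeasurable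
    (Eventually.of_forall fun x => ?_) (fun x hx => ?_)
  · rw [abs_of_nonneg (Real.rpow_nonneg (N.sub.nn _) _)]; exact hF x
  · rw [grad_zero_off h0 x hx, N.sub.zero, Real.zero_rpow hq.ne']

lemma lsc (N : MinkowskiNorm n) {q : ℝ} (hq : 1 ≤ q) {w : ℕ → En n → ℝ} {u : En n → ℝ} {L : ℝ}
    (hw : ∀ k, LipC L (w k)) (hu : ∀ x, Tendsto (fun k => w k x) atTop (𝓝 (u x)))
    {η : En n → ℝ} (hη : Measurable η) {A ρ : ℝ} (hη0 : ∀ x, 0 ≤ η x) (hA : ∀ x, η x ≤ A)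
    (h0 : ∀ x, ρ < ‖x‖ → η x = 0) :
    ∃ e : ℕ → ℝ, Tendsto e atTop (𝓝 0) ∧ ∀ k,
      (∫ x, η x * N.F (gradient u x) ^ q) + e k ≤ ∫ x, η x * N.F (gradient (w k) x) ^ q := by
  have hul : LipC L u := LipC.of_tendsto hw hu
  have hA' : ∀ x, |η x| ≤ A := fun x => by rw [abs_of_nonneg (hη0 x)]; exact hA x
  have hA0 : 0 ≤ A := (abs_nonneg _).trans (hA' 0)
  obtain ⟨D, hD, hDF⟩ := N.DF_bdd
  obtain ⟨B, hB, hFB⟩ := N.Fpow_bdd (q := q - 1) (by linarith) hul.lip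
  set Y : En n → En n := fun x => (q * (η x * N.F (gradient u x) ^ (q - 1))) • N.DF (gradient u x)
    with hY
  have hYi : Integrable Y := by
    have h1 : Integrable (fun x => q * (η x * N.F (gradient u x) ^ (q - 1))) :=
      (int_Fpow N (by linarith) hul.lip hη hA' h0).const_mul q
    refine (h1.norm.mul_const D).mono' ?_ (Eventually.of_forall fun x => ?_)
    · exact h1.aestronglyMeasurable.smul
        (N.DF_meas.comp (measurable_grad u)).aestronglyMeasurable
    · rw [hY, norm_smul]
      gcongr
      exact hDF _
  have hz : ∀ k, LipC (L + L) (fun x => w k x - u x) := fun k => (hw k).sub hul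
  have hwc := weak_conv hYi hz (fun x => by simpa using (hu x).sub_const (u x))
  refine ⟨_, hwc, fun k => ?_⟩
  have hbd := (hz k).norm_grad_le
  have hi1 : Integrable (fun x => ⟪Y x, gradient (fun x => w k x - u x) x⟫) := by
    refine (hYi.norm.mul_const (L + L)).mono' ?_ (Eventually.of_forall fun x => ?_)
    · exact hYi.aestronglyMeasurable.inner (measurable_grad _).aestronglyMeasurable
    · exact (norm_inner_le_norm _ _).trans (by gcongr; exact hbd x)
  rw [← integral_add (int_Fpow N (by linarith) hul.lip hη hA' h0) hi1]
  refine integral_mono_ae ((int_Fpow N (by linarith) hul.lip hη hA' h0).add hi1)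
    (int_Fpow N (by linarith) (hw k).lip hη hA' h0) ?_
  filter_upwards [(hw k).lip.ae_diff, hul.lip.ae_diff] with x h1 h2
  rw [grad_sub h1 h2]
  have := mul_le_mul_of_nonneg_left (N.subgrad hq (gradient u x) (gradient (w k) x)) (hη0 x)
  refine le_trans (le_of_eq ?_) this
  simp only [hY, real_inner_smul_left]
  ring

/-- lower semicontinuity of the full energy -/
lemma lsc_E (N : MinkowskiNorm n) {q : ℝ} (hq : 1 ≤ q) {w : ℕ → En n → ℝ} {u : En n → ℝ} {L : ℝ}
    (hw : ∀ k, LipC L (w k)) (hu : ∀ x, Tendsto (fun k => w k x) atTop (𝓝 (u x)))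
    {c ρ : ℝ} (h0 : ∀ k x, ρ < ‖x‖ → w k x = c) {l : ℝ}
    (hl : Tendsto (fun k => ∫ x, N.F (gradient (w k) x) ^ q) atTop (𝓝 l)) :
    ∫ x, N.F (gradient u x) ^ q ≤ l := by
  have hu0 : ∀ x, ρ < ‖x‖ → u x = c := fun x hx =>
    tendsto_nhds_unique (hu x) (by simp [h0 _ x hx])
  set η : En n → ℝ := (closedBall 0 ρ).indicator (fun _ => 1) with hη
  obtain ⟨e, he, h⟩ := lsc N hq hw hu (η := η)
    (measurable_const.indicator measurableSet_closedBall) (A := 1) (ρ := ρ)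
    (fun x => indicator_nonneg (fun _ _ => zero_le_one) x)
    (fun x => by simp only [hη, indicator]; split_ifs <;> norm_num)
    (fun x hx => by simp [hη, indicator, hx])
  have key : ∀ f : En n → ℝ, (∀ x, ρ < ‖x‖ → f x = c) →
      ∫ x, η x * N.F (gradient f x) ^ q = ∫ x, N.F (gradient f x) ^ q := by
    intro f hf
    congr 1; ext x
    by_cases hx : ρ < ‖x‖
    · rw [grad_zero_off hf x hx, N.sub.zero, Real.zero_rpow (by linarith), mul_zero]
    · simp [hη, indicator, hx]
  rw [key u hu0] at h
  have h' := fun k => (h k).trans_eq (key (w k) (h0 k))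
  have := le_of_tendsto_of_tendsto' (he.const_add (∫ x, N.F (gradient u x) ^ q)) hl h'
  simpa using this

/-- abstract direct method -/
lemma exists_min {𝒜 : Set (En n → ℝ)} (hne : 𝒜.Nonempty) {L B : ℝ} (hL : ∀ v ∈ 𝒜, LipC L v)
    (hB : ∀ v ∈ 𝒜, ∀ x, |v x| ≤ B)
    (hcl : ∀ (w : ℕ → En n → ℝ) (u : En n → ℝ), (∀ k, w k ∈ 𝒜) →
      (∀ x, Tendsto (fun k => w k x) atTop (𝓝 (u x))) → u ∈ 𝒜)
    {J : (En n → ℝ) → ℝ} {b : ℝ} (hb : ∀ v ∈ 𝒜, b ≤ J v)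
    (hJ : ∀ (w : ℕ → En n → ℝ) (u : En n → ℝ), (∀ k, w k ∈ 𝒜) →
      (∀ x, Tendsto (fun k => w k x) atTop (𝓝 (u x))) → ∀ l,
      Tendsto (fun k => J (w k)) atTop (𝓝 l) → J u ≤ l) :
    ∃ v ∈ 𝒜, ∀ w ∈ 𝒜, J v ≤ J w := by
  have hbd : BddBelow (J '' 𝒜) := ⟨b, by rintro _ ⟨v, hv, rfl⟩; exact hb v hv⟩
  have hne' : (J '' 𝒜).Nonempty := hne.image J
  obtain ⟨s, -, hs, hsm⟩ := exists_seq_tendsto_sInf hne' hbd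
  choose w hw hws using hsm
  obtain ⟨u, t, ht, htu⟩ := subseq_lip (fun k => hL _ (hw k)) (fun x => ⟨B, fun k => hB _ (hw k) x⟩)
  refine ⟨u, hcl _ u (fun k => hw (t k)) htu, fun v hv => ?_⟩
  have h1 : Tendsto (fun k => J (w (t k))) atTop (𝓝 (sInf (J '' 𝒜))) := by
    simp only [hws]; exact hs.comp ht.tendsto_atTop
  exact (hJ _ u (fun k => hw (t k)) htu _ h1).trans (csInf_le hbd ⟨v, hv, rfl⟩)

/-- the competitor class -/
structure Cls (N : MinkowskiNorm n) (Ω : Set (En n)) (R ε M : ℝ) (v : En n → ℝ) : Prop where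
  lb : ∀ x, ε / 2 ≤ v x
  ub : ∀ x, v x ≤ 2
  one : ∀ x, x ∉ Ω → v x = 1
  eps : ∀ x, R ≤ N.H x → v x = ε
  har : ∀ x y, v x ≤ Real.exp (M * ‖x - y‖) * v y

lemma har_lip {v : En n → ℝ} {M : ℝ} (hM : 0 ≤ M) (h0 : ∀ x, 0 ≤ v x) (h2 : ∀ x, v x ≤ 2)
    (h : ∀ x y, v x ≤ Real.exp (M * ‖x - y‖) * v y) : LipC (2 * (M * Real.exp M + 1)) v := by
  refine ⟨by positivity, fun x y => ?_⟩
  have hd := norm_nonneg (x - y)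
  rcases le_or_gt ‖x - y‖ 1 with h1 | h1
  · set d := ‖x - y‖
    have e1 : Real.exp (M * d) ≤ 1 + M * d * Real.exp M := by
      have a1 := Real.add_one_le_exp (-(M * d))
      have a2 : Real.exp (M * d) ≤ Real.exp M := Real.exp_le_exp.2 (by nlinarith)
      have a3 : Real.exp (M * d) * Real.exp (-(M * d)) = 1 := by rw [← Real.exp_add]; simp
      have a4 : 0 ≤ M * d := by positivity
      nlinarith [Real.exp_pos (M * d), mul_le_mul_of_nonneg_left a2 a4]
    have e2 := h x y
    have e3 : Real.exp (M * d) * v y ≤ (1 + M * d * Real.exp M) * v y := by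
      gcongr; exact h0 y
    have e4 : M * d * Real.exp M * v y ≤ M * d * Real.exp M * 2 := by
      gcongr; exact h2 y
    nlinarith
  · have := h2 x
    have := h0 y
    have : 0 ≤ M * Real.exp M * ‖x - y‖ := by positivity
    nlinarith

lemma Cls.lip {N : MinkowskiNorm n} {Ω : Set (En n)} {R ε M : ℝ} {v : En n → ℝ}
    (h : Cls N Ω R ε M v) (hε : 0 < ε) (hM : 0 ≤ M) : LipC (2 * (M * Real.exp M + 1)) v :=
  har_lip hM (fun x => (half_pos hε).le.trans (h.lb x)) h.ub h.har

lemma Cls.limit {N : MinkowskiNorm n} {Ω : Set (En n)} {R ε M : ℝ} {w : ℕ → En n → ℝ}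
    {u : En n → ℝ} (h : ∀ k, Cls N Ω R ε M (w k))
    (hu : ∀ x, Tendsto (fun k => w k x) atTop (𝓝 (u x))) : Cls N Ω R ε M u where
  lb x := ge_of_tendsto' (hu x) fun k => (h k).lb x
  ub x := le_of_tendsto' (hu x) fun k => (h k).ub x
  one x hx := tendsto_nhds_unique (hu x) (by simp [(h _).one x hx])
  eps x hx := tendsto_nhds_unique (hu x) (by simp [(h _).eps x hx])
  har x y := le_of_tendsto_of_tendsto' (hu x) ((hu y).const_mul _) fun k => (h k).har x y

/-- outside a large ball `H ≥ R` -/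
lemma MinkowskiNorm.H_far (N : MinkowskiNorm n) (R : ℝ) : ∃ ρ, ∀ x, ρ < ‖x‖ → R ≤ N.H x := by
  obtain ⟨c, hc, h⟩ := N.H_lb
  refine ⟨R / c, fun x hx => ?_⟩
  rw [div_lt_iff₀ hc] at hx
  linarith [h x]

/-- good functions: minimizers of the energy, with maximal integral among minimizers -/
structure Good (N : MinkowskiNorm n) (Ω : Set (En n)) (p R ε M : ℝ) (v : En n → ℝ) : Prop where
  cls : Cls N Ω R ε M v
  minE : ∀ w, Cls N Ω R ε M w → ∫ x, N.F (gradient v x) ^ p ≤ ∫ x, N.F (gradient w x) ^ p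
  maxJ : ∀ w, Cls N Ω R ε M w → ∫ x, N.F (gradient w x) ^ p ≤ ∫ x, N.F (gradient v x) ^ p →
    ∫ x, (w x - ε) ≤ ∫ x, (v x - ε)

lemma exists_good (N : MinkowskiNorm n) {Ω : Set (En n)} {p R ε M : ℝ} (hp : 1 ≤ p) (hε : 0 < ε)
    (hε1 : ε ≤ 1) (hM : 0 ≤ M) (hne : ∃ v, Cls N Ω R ε M v) : ∃ v, Good N Ω p R ε M v := by
  obtain ⟨ρ, hρ⟩ := N.H_far R
  have hbd : ∀ v, Cls N Ω R ε M v → ∀ x, |v x| ≤ 2 := fun v hv x => by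
    rw [abs_of_nonneg ((half_pos hε).le.trans (hv.lb x))]; exact hv.ub x
  obtain ⟨v0, hv0, hmin⟩ := exists_min (𝒜 := {v | Cls N Ω R ε M v}) hne
    (fun v hv => hv.lip hε hM) hbd (fun w u hw hu => Cls.limit hw hu)
    (J := fun v => ∫ x, N.F (gradient v x) ^ p) (b := 0)
    (fun v _ => integral_nonneg fun x => Real.rpow_nonneg (N.sub.nn _) _)
    (fun w u hw hu l hl => lsc_E N hp (fun k => (hw k).lip hε hM) hu
      (c := ε) (ρ := ρ) (fun k x hx => (hw k).eps x (hρ x hx)) hl)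
  have hlsc2 : ∀ (w : ℕ → En n → ℝ) (u : En n → ℝ), (∀ k, Cls N Ω R ε M (w k)) →
      (∀ x, Tendsto (fun k => w k x) atTop (𝓝 (u x))) →
      Tendsto (fun k => ∫ x, (w k x - ε)) atTop (𝓝 (∫ x, (u x - ε))) := by
    intro w u hw hu
    refine tendsto_integral_of_dominated_convergence
      ((closedBall (0 : En n) ρ).indicator (fun _ => (2 : ℝ))) (fun k => ?_) ?_ (fun k => ?_) ?_
    · exact (((hw k).lip hε hM).lip.continuous.sub continuous_const).aestronglyMeasurable
    · exact (integrable_indicator_iff measurableSet_closedBall).2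
        (integrableOn_const (measure_closedBall_lt_top).ne)
    · refine Eventually.of_forall fun x => ?_
      by_cases hx : ρ < ‖x‖
      · rw [(hw k).eps x (hρ x hx)]
        simp [indicator, not_le.2 hx]
      · have : x ∈ closedBall (0 : En n) ρ := by simpa using hx
        rw [indicator_of_mem this, Real.norm_eq_abs, abs_le]
        have := (hw k).lb x
        have := (hw k).ub x
        constructor <;> linarith
    · exact Eventually.of_forall fun x => (hu x).sub_const ε
  obtain ⟨v, hv, hmax⟩ := exists_min
    (𝒜 := {v | Cls N Ω R ε M v ∧ ∫ x, N.F (gradient v x) ^ p ≤ ∫ x, N.F (gradient v0 x) ^ p})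
    ⟨v0, hv0, le_rfl⟩ (fun v hv => hv.1.lip hε hM) (fun v hv => hbd v hv.1)
    (fun w u hw hu => by
      refine ⟨Cls.limit (fun k => (hw k).1) hu, ?_⟩
      have : (fun k => ∫ x, N.F (gradient (w k) x) ^ p) =
          fun _ => ∫ x, N.F (gradient v0 x) ^ p := by
        ext k; exact le_antisymm (hw k).2 (hmin _ (hw k).1)
      refine lsc_E N hp (fun k => (hw k).1.lip hε hM) hu
        (c := ε) (ρ := ρ) (fun k x hx => (hw k).1.eps x (hρ x hx)) ?_
      rw [this]; exact tendsto_const_nhds)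
    (J := fun v => - ∫ x, (v x - ε))
    (b := - ∫ x, (closedBall (0 : En n) ρ).indicator (fun _ => (2 : ℝ)) x)
    (fun v hv => by
      refine neg_le_neg (integral_mono ?_ ?_ fun x => ?_)
      · refine (hv.1.lip hε hM).lip.sub (Lip.const ε) |>.integrable
          (cs_of_zero_off (ρ := ρ) fun x hx => ?_)
        simp only [hv.1.eps x (hρ x hx), sub_self]
      · exact (integrable_indicator_iff measurableSet_closedBall).2
          (integrableOn_const (measure_closedBall_lt_top).ne)
      · by_cases hx : ρ < ‖x‖
        · simp only [hv.1.eps x (hρ x hx)]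
          simp [indicator, not_le.2 hx]
        · have : x ∈ closedBall (0 : En n) ρ := by simpa using hx
          rw [indicator_of_mem this]
          have := hv.1.ub x
          linarith)
    (fun w u hw hu l hl => le_of_eq
      (tendsto_nhds_unique (hlsc2 w u (fun k => (hw k).1) hu).neg hl))
  refine ⟨v, hv.1, fun w hw => hv.2.trans (hmin w hw), fun w hw h => ?_⟩
  have := hmax w ⟨hw, h.trans hv.2⟩
  simpa using this
end P6


section P7
variable {n : ℕ}

lemma har_pow {f : En n → ℝ} {C s a : ℝ} (hf : LipC C f) (hs : 0 < s) (hfs : ∀ x, s ≤ f x)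
    (ha : 0 ≤ a) (x y : En n) :
    (f x / s) ^ (-a) ≤ Real.exp (a * C / s * ‖x - y‖) * (f y / s) ^ (-a) := by
  have hC := hf.1
  set d := ‖x - y‖ with hd
  have hx := hfs x
  have hy := hfs y
  have hfx : 0 < f x := hs.trans_le hx
  have hfy : 0 < f y := hs.trans_le hy
  have h1 : f y ≤ f x * Real.exp (C * d / s) := by
    have e1 := hf.2 y x
    rw [norm_sub_rev, ← hd] at e1
    have e2 := Real.add_one_le_exp (C * d / s)
    have e3 : C * d ≤ f x * (C * d / s) := by
      rw [mul_div_assoc', le_div_iff₀ hs]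
      have : 0 ≤ C * d := by positivity
      nlinarith
    nlinarith
  have h2 : (f y / s) * Real.exp (-(C * d / s)) ≤ f x / s := by
    rw [Real.exp_neg, ← div_eq_mul_inv, div_le_iff₀ (Real.exp_pos _), div_mul_eq_mul_div]
    gcongr
  have h3 : 0 < (f y / s) * Real.exp (-(C * d / s)) := by positivity
  refine (Real.rpow_le_rpow_of_nonpos h3 h2 (by linarith)).trans (le_of_eq ?_)
  rw [Real.mul_rpow (by positivity) (by positivity), ← Real.exp_mul, mul_comm]
  congr 2
  ring

lemma pow_lip {f : En n → ℝ} {C s a : ℝ} (hf : LipC C f) (hs : 0 < s) (hfs : ∀ x, s ≤ f x)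
    (ha : 0 ≤ a) : Lip (fun x => (f x / s) ^ (-a)) := by
  have hC := hf.1
  refine (har_lip (M := a * C / s) (by positivity) (fun x => ?_) (fun x => ?_)
    (fun x y => har_pow hf hs hfs ha x y)).lip
  · have := hs.trans_le (hfs x); positivity
  · refine (Real.rpow_le_one_of_one_le_of_nonpos ?_ (by linarith)).trans (by norm_num)
    rw [le_div_iff₀ hs]; linarith [hfs x]

lemma rad_grad {q : En n → ℝ} {x : En n} (hq : DifferentiableAt ℝ q x) {s : ℝ} (hs : 0 < s)
    (h0 : 0 < q x) (α : ℝ) : gradient (fun y => (q y / s) ^ (-α)) x =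
      (-(α / s * (q x / s) ^ (-α - 1))) • gradient q x := by
  refine grad_comp (φ := fun t => (t / s) ^ (-α)) ?_ hq
  have h1 : HasDerivAt (fun t : ℝ => t / s) (1 / s) (q x) := (hasDerivAt_id _).div_const s
  have := h1.rpow_const (p := -α) (Or.inl (by positivity))
  convert this using 1
  ring

lemma Hs_lip (N : MinkowskiNorm n) {C : ℝ} (hC : LipC C N.H) (x0 : En n) :
    LipC C (fun x => N.H (x - x0)) :=
  ⟨hC.1, fun x y => by simpa using hC.2 (x - x0) (y - x0)⟩

lemma Hs_grad (N : MinkowskiNorm n) {x0 x : En n}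
    (hd : DifferentiableAt ℝ (fun x => N.H (x - x0)) x) (h0 : 0 < N.H (x - x0)) :
    N.F (gradient (fun x => N.H (x - x0)) x) = 1 ∧
      ⟪x - x0, gradient (fun x => N.H (x - x0)) x⟫ = N.H (x - x0) := by
  have hd' : DifferentiableAt ℝ N.H (x - x0) := by
    have : DifferentiableAt ℝ (fun y => (fun x => N.H (x - x0)) (y + x0)) (x - x0) := by
      refine DifferentiableAt.comp (x - x0) (g := fun x => N.H (x - x0)) (by simpa using hd)
        (by fun_prop)
    simpa using this
  have hg : gradient (fun x => N.H (x - x0)) x = gradient N.H (x - x0) := by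
    unfold gradient
    have := fderiv_comp_add_right (𝕜 := ℝ) (f := N.H) (x := x) (-x0)
    simp only [← sub_eq_add_neg] at this
    rw [this]
  rw [hg]
  refine ⟨N.F_gradH ?_ hd', ?_⟩
  · intro h; rw [h, N.subH.zero] at h0; exact lt_irrefl _ h0
  · rw [real_inner_comm]; exact N.subH.grad_self hd'

lemma calib (N : MinkowskiNorm n) (hn : 0 < n) {p a s σ ρ c : ℝ} (hp : 1 < p) (ha : 0 < a)
    (hs : 0 < s) (x0 : En n) (hσ : σ = 1 ∨ σ = -1) {v W d : En n → ℝ} (hv : Lip v) (hW : Lip W)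
    (hvc : ∀ x, ρ < ‖x‖ → v x = c) (hd : d = fun x => max 0 (σ * (W x - v x)))
    (hd0 : ∀ x, N.H (x - x0) ≤ s → d x = 0) (hdc : ∀ x, ρ < ‖x‖ → d x = 0)
    (hWd : ∀ x, 0 < d x → W =ᶠ[𝓝 x] fun y => (N.H (y - x0) / s) ^ (-a))
    (hE : ∫ x, N.F (gradient v x) ^ p ≤ ∫ x, N.F (gradient (fun x => v x + σ * d x) x) ^ p)
    (hm : 0 < σ * ((a + 1) * (p - 1) + 1 - n)) : ∀ x, d x = 0 := by
  obtain ⟨C, hC⟩ := N.H_lip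
  have hqL := Hs_lip N hC x0
  set q : En n → ℝ := fun x => N.H (x - x0) with hq
  set m := (a + 1) * (p - 1) + 1 with hmdef
  have hm0 : 0 < m := by have : 0 < p - 1 := by linarith
                         positivity
  have hTL : LipC C (fun x => max (q x) s) := hqL.max ((LipC.const s).mono hC.1)
  set Θ : En n → ℝ := fun x => (max (q x) s / s) ^ (-m) with hΘ
  have hΘL : Lip Θ := pow_lip hTL hs (fun x => le_max_right _ _) hm0.le
  have hΘ0 : ∀ x, 0 < Θ x := fun x => by
    have : 0 < max (q x) s := hs.trans_le (le_max_right _ _)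
    simp only [hΘ]; positivity
  have hdL : Lip d := by
    rw [hd]; exact (Lip.const 0).max ((hW.sub hv).smul σ)
  have hdn : ∀ x, 0 ≤ d x := fun x => by rw [hd]; exact le_max_left _ _
  have hdcs : HasCompactSupport d := cs_of_zero_off hdc
  set g : En n → ℝ := fun x => Θ x * d x with hg
  have hgL : Lip g := hΘL.mul_cs hdL hdcs
  have hg0 : ∀ x, ρ < ‖x‖ → g x = 0 := fun x hx => by simp [hg, hdc x hx]
  have hgcs : HasCompactSupport g := cs_of_zero_off hg0
  have hv'L : Lip (fun x => v x + σ * d x) := hv.add (hdL.smul σ)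
  set K := p * (a / s) ^ (p - 1) / s with hK
  have hK0 : 0 < K := by positivity
  have hσ2 : σ * σ = 1 := by rcases hσ with h | h <;> rw [h] <;> norm_num
  -- pointwise
  have hpt : ∀ᵐ x, N.F (gradient (fun x => v x + σ * d x) x) ^ p - N.F (gradient v x) ^ p ≤
      -(K * σ) * (⟪x - x0, gradient g x⟫ + m * g x) := by
    filter_upwards [hv.ae_diff, hdL.ae_diff, hW.ae_diff, hqL.lip.ae_diff, hdL.ae_grad_zero,
      hgL.ae_grad_zero, hΘL.ae_diff] with x dv dd dW dq d0 g0 dΘ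
    have hgr : gradient (fun x => v x + σ * d x) x = gradient v x + σ • gradient d x := by
      rw [grad_add dv (dd.const_mul σ), grad_smul σ dd]
    rcases (hdn x).eq_or_lt with h | h
    · have e1 : g x = 0 := by simp [hg, ← h]
      rw [hgr, d0 h.symm, g0 e1, e1]; simp
    · have hqs : s < q x := by
        by_contra hcon
        rw [hd0 x (not_lt.1 hcon)] at h; exact lt_irrefl _ h
      have hq0 : 0 < q x := hs.trans hqs
      obtain ⟨hF1, hin⟩ := Hs_grad N dq hq0
      have hgd : gradient d x = σ • (gradient W x - gradient v x) := by
        have : d =ᶠ[𝓝 x] fun y => σ * (W y - v y) := by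
          filter_upwards [hdL.continuous.continuousAt.eventually (lt_mem_nhds h)] with y hy
          rw [hd] at hy ⊢
          exact max_eq_right (by
            rcases lt_max_iff.1 hy with h | h
            · exact absurd h (lt_irrefl _)
            · exact h.le)
        rw [grad_congr this, grad_smul σ (f := fun y => W y - v y) (dW.sub dv), grad_sub dW dv]
      have hgv' : gradient v x + σ • gradient d x = gradient W x := by
        rw [hgd, smul_smul, hσ2]; module
      have hgW : gradient W x = (-(a / s * (q x / s) ^ (-a - 1))) • gradient q x := by
        rw [grad_congr (hWd x h)]; exact rad_grad dq hs hq0 a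
      set f := a / s * (q x / s) ^ (-a - 1) with hf
      have hf0 : 0 < f := by positivity
      have hFW : N.F (gradient W x) = f := by
        rw [hgW, neg_smul, N.even, N.homog _ hf0.le, hF1, mul_one]
      have hgΘ : gradient Θ x = (-(m / s * (q x / s) ^ (-m - 1))) • gradient q x := by
        have : Θ =ᶠ[𝓝 x] fun y => (q y / s) ^ (-m) := by
          filter_upwards [hqL.lip.continuous.continuousAt.eventually (lt_mem_nhds hqs)] with y hy
          simp only [hΘ]; rw [max_eq_left hy.le]
        rw [grad_congr this]; exact rad_grad dq hs hq0 m
      have hΘx : Θ x = (q x / s) ^ (-m) := by simp only [hΘ]; rw [max_eq_left hqs.le]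
      have hgg : ⟪x - x0, gradient g x⟫ + m * g x = Θ x * ⟪x - x0, gradient d x⟫ := by
        rw [hg, grad_mul dΘ dd, inner_add_right, real_inner_smul_right, real_inner_smul_right,
          hgΘ, real_inner_smul_right, hin]
        have e1 : (q x / s) ^ (-m - 1) = Θ x / (q x / s) := by
          rw [hΘx, Real.rpow_sub_one (by positivity)]
        simp only [e1]
        field_simp
        ring
      rw [hgr, hgv', hgg, hFW]
      have htan := MinkowskiNorm.rpow_tangent hf0.le (N.sub.nn (gradient v x)) hp.le
      -- F v ≥ ⟨∇v, -(x-x0)⟩/q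
      have hFv : -⟪x - x0, gradient v x⟫ ≤ N.F (gradient v x) * q x := by
        have := N.inner_le (-gradient v x) (x - x0)
        rwa [N.even, inner_neg_left, real_inner_comm] at this
      have hWin : ⟪x - x0, gradient W x⟫ = - f * q x := by
        rw [hgW, real_inner_smul_right, hin]
      have hdin : σ * ⟪x - x0, gradient d x⟫ = - f * q x - ⟪x - x0, gradient v x⟫ := by
        rw [hgd, real_inner_smul_right, ← mul_assoc, hσ2, inner_sub_right, hWin, one_mul]
      have hKf : K * Θ x = p * f ^ (p - 1) / q x := by
        rw [hK, hΘx, hf, Real.mul_rpow (by positivity) (by positivity), ← Real.rpow_mul (by positivity)]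
        have e1 : -m = (-a - 1) * (p - 1) - 1 := by rw [hmdef]; ring
        rw [e1, Real.rpow_sub_one (x := q x / s) (by positivity)]
        generalize (q x / s) ^ ((-a - 1) * (p - 1)) = T
        field_simp
      have e2 : -(K * σ) * (Θ x * ⟪x - x0, gradient d x⟫) =
          (p * f ^ (p - 1) / q x) * (f * q x + ⟪x - x0, gradient v x⟫) := by
        rw [← hKf]
        have : -(K * σ) * (Θ x * ⟪x - x0, gradient d x⟫) =
          - (K * Θ x) * (σ * ⟪x - x0, gradient d x⟫) := by ring
        rw [this, hdin]; ring
      rw [e2]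
      have hc0 : 0 ≤ p * f ^ (p - 1) := by positivity
      have e3 : f - N.F (gradient v x) ≤ (f * q x + ⟪x - x0, gradient v x⟫) / q x := by
        rw [le_div_iff₀ hq0]; linarith
      have e4 := mul_le_mul_of_nonneg_left e3 hc0
      have e5 : p * f ^ (p - 1) / q x * (f * q x + ⟪x - x0, gradient v x⟫) =
        p * f ^ (p - 1) * ((f * q x + ⟪x - x0, gradient v x⟫) / q x) := by ring
      rw [e5]
      linarith
  have hi1 : Integrable (fun x => N.F (gradient (fun x => v x + σ * d x) x) ^ p) :=
    int_E N (by linarith) hv'L (c := c) (ρ := ρ) (fun x hx => by rw [hvc x hx, hdc x hx]; ring)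
  have hi2 : Integrable (fun x => N.F (gradient v x) ^ p) :=
    int_E N (by linarith) hv hvc
  have hi3 : Integrable g := hgL.integrable hgcs
  have hi4 : Integrable (fun x => ⟪x - x0, gradient g x⟫) := by
    obtain ⟨D, hD, hgD⟩ := hgL.norm_grad_le
    refine int_bdd (A := (|ρ| + ‖x0‖) * D) (ρ := ρ) ?_ (Eventually.of_forall fun x => ?_) ?_
    · exact ((measurable_id.sub_const x0).inner (measurable_grad g)).aestronglyMeasurable
    · by_cases hx : ρ < ‖x‖
      · rw [grad_zero_off hg0 x hx, inner_zero_right, abs_zero]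
        positivity
      · refine (abs_real_inner_le_norm _ _).trans ?_
        have h1 := norm_sub_le x x0
        have h2 := hgD x
        have h3 : ‖x‖ ≤ |ρ| := (not_lt.1 hx).trans (le_abs_self _)
        gcongr
        linarith
    · intro x hx
      rw [grad_zero_off hg0 x hx, inner_zero_right]
  have hInt := integral_mono_ae (hi1.sub hi2) ((hi4.add (hi3.const_mul m)).const_mul (-(K * σ))) hpt
  have e1 : ∫ x, -(K * σ) * (⟪x - x0, gradient g x⟫ + m * g x) = -(K * σ) * ((m - n) * ∫ x, g x) := by
    rw [integral_const_mul, integral_add hi4 (hi3.const_mul m), ibp_radial hgL hgcs x0,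
      integral_const_mul]
    ring
  have e2 : ∫ x, (N.F (gradient (fun x => v x + σ * d x) x) ^ p - N.F (gradient v x) ^ p) =
    (∫ x, N.F (gradient (fun x => v x + σ * d x) x) ^ p) - ∫ x, N.F (gradient v x) ^ p :=
    integral_sub hi1 hi2
  have hfin : ∫ x, g x ≤ 0 := by
    by_contra hcon
    push Not at hcon
    have h1 : 0 < K * (σ * (m - n)) * ∫ x, g x := by positivity
    have h2 : 0 ≤ -(K * σ) * ((m - n) * ∫ x, g x) := by
      rw [← e1]
      refine le_trans ?_ hInt
      simp only [Pi.sub_apply]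
      rw [e2]; linarith
    nlinarith
  have hgz := eq_zero_of_integral hn hgL hgcs (fun x => mul_nonneg (hΘ0 x).le (hdn x)) hfin
  intro x
  have := hgz x
  simp only [hg, mul_eq_zero] at this
  exact this.resolve_left (hΘ0 x).ne'
end P7


section P8
variable {n : ℕ} {N : MinkowskiNorm n} {Ω : Set (En n)}

lemma har_max {v w : En n → ℝ} {M : ℝ} (hv : ∀ x y, v x ≤ Real.exp (M * ‖x - y‖) * v y)
    (hw : ∀ x y, w x ≤ Real.exp (M * ‖x - y‖) * w y) (x y : En n) :
    max (v x) (w x) ≤ Real.exp (M * ‖x - y‖) * max (v y) (w y) := by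
  have h0 := Real.exp_pos (M * ‖x - y‖)
  refine max_le ((hv x y).trans ?_) ((hw x y).trans ?_)
  · gcongr; exact le_max_left _ _
  · gcongr; exact le_max_right _ _

lemma har_min {v w : En n → ℝ} {M : ℝ} (hv : ∀ x y, v x ≤ Real.exp (M * ‖x - y‖) * v y)
    (hw : ∀ x y, w x ≤ Real.exp (M * ‖x - y‖) * w y) (x y : En n) :
    min (v x) (w x) ≤ Real.exp (M * ‖x - y‖) * min (v y) (w y) := by
  have h0 := Real.exp_pos (M * ‖x - y‖)
  rcases min_choice (v y) (w y) with h | h <;> rw [h]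
  · exact (min_le_left _ _).trans (hv x y)
  · exact (min_le_right _ _).trans (hw x y)

lemma Cls.maxC {R ε M : ℝ} {v w : En n → ℝ} (hv : Cls N Ω R ε M v) (h2 : ∀ x, w x ≤ 2)
    (h1 : ∀ x, x ∉ Ω → w x ≤ 1) (hε : ∀ x, R ≤ N.H x → w x ≤ ε)
    (hw : ∀ x y, w x ≤ Real.exp (M * ‖x - y‖) * w y) :
    Cls N Ω R ε M (fun x => max (v x) (w x)) where
  lb x := (hv.lb x).trans (le_max_left _ _)
  ub x := max_le (hv.ub x) (h2 x)
  one x hx := by simp only [hv.one x hx]; exact max_eq_left (h1 x hx)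
  eps x hx := by simp only [hv.eps x hx]; exact max_eq_left (hε x hx)
  har := har_max hv.har hw

lemma Cls.minC {R ε M : ℝ} {v w : En n → ℝ} (hv : Cls N Ω R ε M v) (h2 : ∀ x, ε / 2 ≤ w x)
    (h1 : ∀ x, x ∉ Ω → 1 ≤ w x) (hε : ∀ x, R ≤ N.H x → ε ≤ w x)
    (hw : ∀ x y, w x ≤ Real.exp (M * ‖x - y‖) * w y) :
    Cls N Ω R ε M (fun x => min (v x) (w x)) where
  lb x := le_min (hv.lb x) (h2 x)
  ub x := (min_le_left _ _).trans (hv.ub x)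
  one x hx := by simp only [hv.one x hx]; exact min_eq_left (h1 x hx)
  eps x hx := by simp only [hv.eps x hx]; exact min_eq_left (hε x hx)
  har := har_min hv.har hw

lemma Cls.off {R ε M : ℝ} {v : En n → ℝ} (hv : Cls N Ω R ε M v) :
    ∃ ρ, ∀ x, ρ < ‖x‖ → v x = ε := by
  obtain ⟨ρ, hρ⟩ := N.H_far R
  exact ⟨ρ, fun x hx => hv.eps x (hρ x hx)⟩

lemma Cls.intE {p R ε M : ℝ} {v : En n → ℝ} (hv : Cls N Ω R ε M v) (hε : 0 < ε) (hM : 0 ≤ M)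
    (hp : 0 < p) : Integrable (fun x => N.F (gradient v x) ^ p) := by
  obtain ⟨ρ, hρ⟩ := hv.off
  exact int_E N hp (hv.lip hε hM).lip hρ

lemma Cls.intJ {R ε M : ℝ} {v : En n → ℝ} (hv : Cls N Ω R ε M v) (hε : 0 < ε) (hM : 0 ≤ M) :
    Integrable (fun x => v x - ε) := by
  obtain ⟨ρ, hρ⟩ := hv.off
  exact ((hv.lip hε hM).lip.sub (Lip.const ε)).integrable
    (cs_of_zero_off (ρ := ρ) fun x hx => by simp only [hρ x hx, sub_self])

lemma Good.eq_of_ge {p R ε M : ℝ} {v w : En n → ℝ} (hn : 0 < n) (hε : 0 < ε) (hM : 0 ≤ M)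
    (h : Good N Ω p R ε M v)
    (hw : Cls N Ω R ε M w) (hge : ∀ x, v x ≤ w x)
    (hE : ∫ x, N.F (gradient w x) ^ p ≤ ∫ x, N.F (gradient v x) ^ p) (x : En n) : w x = v x := by
  obtain ⟨ρ, hρ⟩ := N.H_far R
  have h1 := h.maxJ w hw hE
  have := eq_zero_of_integral (g := fun x => w x - v x) hn
    ((hw.lip hε hM).lip.sub (h.cls.lip hε hM).lip)
    (cs_of_zero_off (ρ := ρ) fun x hx => by
      simp only [hw.eps x (hρ x hx), h.cls.eps x (hρ x hx), sub_self])
    (fun x => sub_nonneg.2 (hge x)) (by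
      have : ∫ x, (w x - v x) = ∫ x, ((w x - ε) - (v x - ε)) := by congr 1; ext x; ring
      rw [this, integral_sub (hw.intJ hε hM) (h.cls.intJ hε hM)]
      linarith) x
  linarith

lemma Good.le_one {p R ε M : ℝ} {v : En n → ℝ} (hn : 0 < n) (hε : 0 < ε) (hε1 : ε ≤ 1) (hM : 0 ≤ M)
    (hp : 1 < p) (h : Good N Ω p R ε M v) (x : En n) : v x ≤ 1 := by
  obtain ⟨ρ, hρ⟩ := N.H_far R
  have hvL := (h.cls.lip hε hM).lip
  have hcls : Cls N Ω R ε M (fun x => min (v x) ((fun _ => 1) x)) := by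
    refine h.cls.minC (fun x => by linarith) (fun x _ => le_rfl) (fun x _ => hε1) (fun x y => ?_)
    rw [mul_one]; exact Real.one_le_exp (by positivity)
  have hE := h.minE _ hcls
  have hgr := hvL.ae_grad_min (Lip.const 1)
  have hi1 := h.cls.intE (p := p) hε hM (by linarith)
  have hi2 := hcls.intE (p := p) hε hM (by linarith)
  have hnn : 0 ≤ᵐ[volume] fun x => N.F (gradient v x) ^ p -
      N.F (gradient (fun x => min (v x) ((fun _ => 1) x)) x) ^ p := by
    filter_upwards [hgr] with x hx
    simp only [hx, Pi.zero_apply]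
    split_ifs
    · simp
    · have : gradient (fun _ : En n => (1 : ℝ)) x = 0 := by simp [gradient]
      rw [this, N.sub.zero, Real.zero_rpow (by linarith), sub_zero]
      exact Real.rpow_nonneg (N.sub.nn _) _
  have hz := (integral_eq_zero_iff_of_nonneg_ae hnn (hi1.sub hi2)).1 (le_antisymm (by
    rw [integral_sub hi1 hi2]; linarith) (integral_nonneg_of_ae hnn))
  have hd0 := eq_zero_of_grad (g := fun x => max ((fun _ => (0 : ℝ)) x) (v x - 1)) hn
    ((Lip.const 0).max (hvL.sub (Lip.const 1)))
    (cs_of_zero_off (ρ := ρ) fun x hx => by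
      simp only [h.cls.eps x (hρ x hx)]; exact max_eq_left (by linarith))
    (fun x => le_max_left _ _) (by
      filter_upwards [hz, hgr, hvL.ae_diff, (Lip.const 0).ae_grad_max (hvL.sub (Lip.const 1))]
        with x h1 h2 h3 h4
      rw [h4]
      have e0 : gradient (fun _ : En n => (0 : ℝ)) x = 0 := by simp [gradient]
      have e1 : gradient (fun _ : En n => (1 : ℝ)) x = 0 := by simp [gradient]
      split_ifs with hlt
      · rw [grad_sub h3 (differentiableAt_const _), e1, sub_zero]
        have : ¬ v x < 1 := by linarith
        simp only [h2, if_neg this, e1, N.sub.zero, Real.zero_rpow (by linarith : p ≠ 0),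
          Pi.zero_apply, sub_zero] at h1
        by_contra hne
        exact (Real.rpow_pos_of_pos (N.pos _ hne) p).ne' h1
      · exact e0) x
  have : v x - 1 ≤ 0 := by rw [← hd0]; exact le_max_right _ _
  linarith

lemma Good.ge_eps {p R ε M : ℝ} {v : En n → ℝ} (hn : 0 < n) (hε : 0 < ε) (hε1 : ε ≤ 1) (hM : 0 ≤ M)
    (hp : 1 < p) (h : Good N Ω p R ε M v) (x : En n) : ε ≤ v x := by
  have hvL := (h.cls.lip hε hM).lip
  have hcls : Cls N Ω R ε M (fun x => max (v x) ((fun _ => ε) x)) := by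
    refine h.cls.maxC (fun x => by linarith) (fun x _ => hε1) (fun x _ => le_rfl) (fun x y => ?_)
    have : 1 ≤ Real.exp (M * ‖x - y‖) := Real.one_le_exp (by positivity)
    nlinarith
  rw [← h.eq_of_ge hn hε hM hcls (fun x => le_max_left _ _) ?_ x]
  · exact le_max_right _ _
  · refine integral_mono_ae (hcls.intE hε hM (by linarith)) (h.cls.intE hε hM (by linarith)) ?_
    filter_upwards [hvL.ae_grad_max (Lip.const ε)] with x hx
    rw [hx]
    split_ifs
    · have : gradient (fun _ : En n => ε) x = 0 := by simp [gradient]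
      rw [this, N.sub.zero, Real.zero_rpow (by linarith)]
      exact Real.rpow_nonneg (N.sub.nn _) _
    · rfl

/-- geometric data -/
structure Setup (N : MinkowskiNorm n) (Ω : Set (En n)) (R0 r CH : ℝ) : Prop where
  hn : 2 ≤ n
  hr : 0 < r
  hr2 : r ≤ R0 / 2
  hΩ : IsOpen Ω
  hout : ∀ x, x ∉ Ω → N.H x < R0 / 2
  hCH : LipC CH N.H
  touch : ∀ y ∈ frontier Ω, ∃ x0, N.H (y - x0) ≤ r ∧ ∀ x, N.H (x - x0) ≤ r → x ∉ Ω

/-- the upper barrier -/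
def Wup (N : MinkowskiNorm n) (R0 R a : ℝ) (x : En n) : ℝ :=
  (max (min (N.H x) R) R0 / R0) ^ (-a)

/-- the lower barrier -/
def Wlo (N : MinkowskiNorm n) (x0 : En n) (r b : ℝ) (x : En n) : ℝ :=
  (max (N.H (x - x0)) r / r) ^ (-b)

section bar
variable {R0 r CH R p : ℝ}

lemma Wup_lipc (S : Setup N Ω R0 r CH) : LipC CH (fun x => max (min (N.H x) R) R0) :=
  (S.hCH.min ((LipC.const R).mono S.hCH.1)).max ((LipC.const R0).mono S.hCH.1)

lemma Setup.hR0 (S : Setup N Ω R0 r CH) : 0 < R0 := by linarith [S.hr, S.hr2]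

lemma Wup_one (S : Setup N Ω R0 r CH) (hR : R0 < R) {a : ℝ} {x : En n} (hx : N.H x ≤ R0) :
    Wup N R0 R a x = 1 := by
  have := S.hR0
  unfold Wup
  rw [max_eq_right ((min_le_left _ _).trans hx), div_self this.ne', Real.one_rpow]

lemma Wup_eps (hR : R0 < R) {a : ℝ} {x : En n} (hx : R ≤ N.H x) :
    Wup N R0 R a x = (R / R0) ^ (-a) := by
  unfold Wup
  rw [min_eq_right hx, max_eq_left hR.le]

lemma Wup_ge (S : Setup N Ω R0 r CH) (hR : R0 < R) {a : ℝ} (ha : 0 ≤ a) (x : En n) :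
    (R / R0) ^ (-a) ≤ Wup N R0 R a x := by
  have := S.hR0
  have h1 : 0 < max (min (N.H x) R) R0 := this.trans_le (le_max_right _ _)
  refine Real.rpow_le_rpow_of_nonpos (by positivity) ?_ (by linarith)
  gcongr
  exact max_le (min_le_right _ _) hR.le

lemma Wup_le (S : Setup N Ω R0 r CH) {a : ℝ} (ha : 0 ≤ a) (x : En n) :
    Wup N R0 R a x ≤ 1 := by
  have := S.hR0
  refine Real.rpow_le_one_of_one_le_of_nonpos ?_ (by linarith)
  rw [le_div_iff₀ this, one_mul]; exact le_max_right _ _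

lemma Wup_har (S : Setup N Ω R0 r CH) {a M : ℝ} (ha : 0 ≤ a) (hM : a * CH / R0 ≤ M) (x y : En n) :
    Wup N R0 R a x ≤ Real.exp (M * ‖x - y‖) * Wup N R0 R a y := by
  refine (har_pow (Wup_lipc S) S.hR0 (fun x => le_max_right _ _) ha x y).trans ?_
  have := S.hR0
  have h1 : 0 < max (min (N.H y) R) R0 := this.trans_le (le_max_right _ _)
  unfold Wup
  gcongr

lemma Wup_cls (S : Setup N Ω R0 r CH) (hR : R0 < R) {a M : ℝ} (ha : 0 ≤ a)
    (hM : a * CH / R0 ≤ M) : Cls N Ω R ((R / R0) ^ (-a)) M (Wup N R0 R a) where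
  lb x := by
    have h0 := S.hR0
    have : 0 < R := h0.trans hR
    have h1 : 0 < (R / R0) ^ (-a) := by positivity
    linarith [Wup_ge S hR ha x]
  ub x := (Wup_le S ha x).trans one_le_two
  one x hx := Wup_one S hR (by linarith [S.hout x hx, S.hR0])
  eps x hx := Wup_eps hR hx
  har := Wup_har S ha hM

lemma Wlo_har (S : Setup N Ω R0 r CH) (x0 : En n) {b M : ℝ} (hb : 0 ≤ b) (hM : b * CH / r ≤ M)
    (x y : En n) :
    Wlo N x0 r b x ≤ Real.exp (M * ‖x - y‖) * Wlo N x0 r b y := by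
  have hr := S.hr
  refine (har_pow ((Hs_lip N S.hCH x0).max ((LipC.const r).mono S.hCH.1)) hr
    (fun x => le_max_right _ _) hb x y).trans ?_
  have h1 : 0 < max (N.H (y - x0)) r := hr.trans_le (le_max_right _ _)
  unfold Wlo
  gcongr

lemma Wlo_le (S : Setup N Ω R0 r CH) (x0 : En n) {b : ℝ} (hb : 0 ≤ b) (x : En n) :
    Wlo N x0 r b x ≤ 1 := by
  have hr := S.hr
  refine Real.rpow_le_one_of_one_le_of_nonpos ?_ (by linarith)
  rw [le_div_iff₀ hr, one_mul]; exact le_max_right _ _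

/-- upper barrier -/
lemma Good.upper (S : Setup N Ω R0 r CH) (hR : R0 < R) (hp : 1 < p) (hp2 : p < 3 / 2) {a M : ℝ}
    (ha : a = 1 / (2 * (p - 1))) (hM : a * CH / R0 ≤ M) {v : En n → ℝ}
    (h : Good N Ω p R ((R / R0) ^ (-a)) M v) (x : En n) : v x ≤ Wup N R0 R a x := by
  have hR0 := S.hR0
  have hp1 : 0 < p - 1 := by linarith
  have ha0 : 0 < a := by rw [ha]; positivity
  have hRp : 0 < R := hR0.trans hR
  have hM0 : 0 ≤ M := le_trans (by have := S.hCH.1; positivity) hM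
  set ε := (R / R0) ^ (-a) with hε
  have hε0 : 0 < ε := by positivity
  have hε1 : ε ≤ 1 := Real.rpow_le_one_of_one_le_of_nonpos
    (by rw [le_div_iff₀ hR0]; linarith) (by linarith)
  have hn : 0 < n := by linarith [S.hn]
  have hle1 := h.le_one hn hε0 hε1 hM0 hp
  have hWc := Wup_cls S hR ha0.le hM
  obtain ⟨ρ, hρ⟩ := N.H_far R
  have hvL := (h.cls.lip hε0 hM0).lip
  have hWL := (hWc.lip hε0 hM0).lip
  have hdz : ∀ x, N.H x ≤ R0 → max 0 (-1 * (Wup N R0 R a x - v x)) = 0 := fun x hx => by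
    rw [Wup_one S hR hx]; exact max_eq_left (by linarith [hle1 x])
  have hdz' : ∀ x, R ≤ N.H x → max 0 (-1 * (Wup N R0 R a x - v x)) = 0 := fun x hx => by
    rw [hWc.eps x hx, h.cls.eps x hx]; exact max_eq_left (by rw [← hε]; simp)
  have key := calib N hn hp ha0 hR0 0 (σ := -1) (ρ := ρ) (c := ε) (Or.inr rfl) hvL hWL
    (fun x hx => h.cls.eps x (hρ x hx)) (d := fun x => max 0 (-1 * (Wup N R0 R a x - v x))) rfl
    (fun x hx => hdz x (by simpa using hx)) (fun x hx => hdz' x (hρ x hx))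
    (fun x hx => by
      have h1 : R0 < N.H x := by
        by_contra hc; exact hx.ne' (hdz x (not_lt.1 hc))
      have h2 : N.H x < R := by
        by_contra hc; exact hx.ne' (hdz' x (not_lt.1 hc))
      have hc := S.hCH.lip.continuous.continuousAt (x := x)
      filter_upwards [hc.eventually (lt_mem_nhds h1), hc.eventually (gt_mem_nhds h2)] with y e1 e2
      unfold Wup
      rw [min_eq_left e2.le, max_eq_left e1.le, sub_zero])
    (by
      have hc : Cls N Ω R ε M (fun x => min (v x) (Wup N R0 R a x)) :=
        h.cls.minC hWc.lb (fun x hx => (hWc.one x hx).ge) (fun x hx => (hWc.eps x hx).ge) hWc.har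
      have := h.minE _ hc
      have e : (fun x => v x + -1 * max 0 (-1 * (Wup N R0 R a x - v x))) =
          fun x => min (v x) (Wup N R0 R a x) := by
        ext x
        rcases le_total (v x) (Wup N R0 R a x) with h | h
        · rw [min_eq_left h, max_eq_left (by linarith)]; ring
        · rw [min_eq_right h, max_eq_right (by linarith)]; ring
      rw [e]; exact this)
    (by
      have : (a + 1) * (p - 1) = 1 / 2 + (p - 1) := by rw [ha]; field_simp
      rw [this]
      have : (2 : ℝ) ≤ n := by exact_mod_cast S.hn
      linarith) x
  have h3 : -1 * (Wup N R0 R a x - v x) ≤ 0 := by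
    rw [← key]; exact le_max_right _ _
  linarith

/-- lower barrier -/
lemma Good.lower (S : Setup N Ω R0 r CH) (hR : R0 < R) (hp : 1 < p) {a b M : ℝ}
    (ha : a = 1 / (2 * (p - 1))) (hb : b = n / (p - 1)) (hM : b * CH / r ≤ M) {v : En n → ℝ}
    (h : Good N Ω p R ((R / R0) ^ (-a)) M v) {x0 : En n}
    (hx0 : ∀ x, N.H (x - x0) ≤ r → x ∉ Ω) (x : En n) : Wlo N x0 r b x ≤ v x := by
  have hR0 := S.hR0
  have hr := S.hr
  have hr2 := S.hr2
  have hp1 : 0 < p - 1 := by linarith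
  have ha0 : 0 < a := by rw [ha]; positivity
  have hn : 0 < n := by linarith [S.hn]
  have hn' : (2 : ℝ) ≤ n := by exact_mod_cast S.hn
  have hb0 : 0 < b := by rw [hb]; positivity
  have hab : a ≤ b := by
    rw [ha, hb, div_le_div_iff₀ (by positivity) hp1]
    nlinarith
  have hRp : 0 < R := hR0.trans hR
  have hM0 : 0 ≤ M := le_trans (by have := S.hCH.1; positivity) hM
  set ε := (R / R0) ^ (-a) with hε
  have hε0 : 0 < ε := by positivity
  have hvL := (h.cls.lip hε0 hM0).lip
  have hWhar := Wlo_har S x0 hb0.le hM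
  have hW1 := Wlo_le S x0 hb0.le
  have hWpos : ∀ x, 0 ≤ Wlo N x0 r b x := fun x => by
    have : 0 < max (N.H (x - x0)) r := hr.trans_le (le_max_right _ _)
    unfold Wlo; positivity
  have hWL : Lip (Wlo N x0 r b) := (har_lip hM0 hWpos
    (fun x => (hW1 x).trans one_le_two) hWhar).lip
  have hx0Ω : x0 ∉ Ω := hx0 x0 (by rw [sub_self, N.subH.zero]; exact hr.le)
  have hWε : ∀ x, R ≤ N.H x → Wlo N x0 r b x ≤ ε := by
    intro x hx
    have h1 := S.hout x0 hx0Ω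
    have h2 := N.subH.sub_le x x0
    have h3 : R / R0 ≤ max (N.H (x - x0)) r / r := by
      rw [div_le_div_iff₀ hR0 hr]
      have : R - R0 / 2 ≤ max (N.H (x - x0)) r := le_trans (by linarith) (le_max_left _ _)
      nlinarith
    have h4 : 1 ≤ R / R0 := by rw [le_div_iff₀ hR0]; linarith
    calc Wlo N x0 r b x ≤ (R / R0) ^ (-b) :=
          Real.rpow_le_rpow_of_nonpos (by positivity) h3 (by linarith)
      _ ≤ ε := Real.rpow_le_rpow_of_exponent_le h4 (by linarith)
  obtain ⟨ρ, hρ⟩ := N.H_far R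
  have hdz : ∀ x, N.H (x - x0) ≤ r → max 0 (1 * (Wlo N x0 r b x - v x)) = 0 := fun x hx => by
    rw [h.cls.one x (hx0 x hx)]; exact max_eq_left (by linarith [hW1 x])
  have key := calib N hn hp hb0 hr x0 (σ := 1) (ρ := ρ) (c := ε) (Or.inl rfl) hvL hWL
    (fun x hx => h.cls.eps x (hρ x hx)) (d := fun x => max 0 (1 * (Wlo N x0 r b x - v x))) rfl
    hdz (fun x hx => by
      simp only [h.cls.eps x (hρ x hx)]
      exact max_eq_left (by linarith [hWε x (hρ x hx)]))
    (fun x hx => by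
      have h1 : r < N.H (x - x0) := by
        by_contra hc; exact hx.ne' (hdz x (not_lt.1 hc))
      have hc := (Hs_lip N S.hCH x0).lip.continuous.continuousAt (x := x)
      filter_upwards [hc.eventually (lt_mem_nhds h1)] with y e1
      unfold Wlo
      rw [max_eq_left e1.le])
    (by
      have hc : Cls N Ω R ε M (fun x => max (v x) (Wlo N x0 r b x)) :=
        h.cls.maxC (fun x => (hW1 x).trans one_le_two) (fun x _ => hW1 x) hWε hWhar
      have := h.minE _ hc
      have e : (fun x => v x + 1 * max 0 (1 * (Wlo N x0 r b x - v x))) =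
          fun x => max (v x) (Wlo N x0 r b x) := by
        ext x
        rcases le_total (v x) (Wlo N x0 r b x) with h | h
        · rw [max_eq_right h, max_eq_right (by linarith)]; ring
        · rw [max_eq_left h, max_eq_left (by linarith)]; ring
      rw [e]; exact this)
    (by
      have : (b + 1) * (p - 1) = n + (p - 1) := by rw [hb]; field_simp
      rw [this]
      linarith) x
  have h3 : 1 * (Wlo N x0 r b x - v x) ≤ 0 := by
    rw [← key]; exact le_max_right _ _
  linarith
end bar
end P8


section P9
variable {n : ℕ} {N : MinkowskiNorm n} {Ω : Set (En n)}

lemma grad_shift (f : En n → ℝ) (h x : En n) :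
    gradient (fun y => f (y + h)) x = gradient f (x + h) := by
  unfold gradient
  rw [fderiv_comp_add_right (𝕜 := ℝ) (f := f) (x := x) h]

lemma E_shift (N : MinkowskiNorm n) (p : ℝ) (f : En n → ℝ) (h : En n) :
    ∫ x, N.F (gradient (fun y => f (y + h)) x) ^ p = ∫ x, N.F (gradient f x) ^ p := by
  simp only [grad_shift]
  exact integral_add_right_eq_self (fun x => N.F (gradient f x) ^ p) h

lemma lip_shift {f : En n → ℝ} (hf : Lip f) (h : En n) : Lip (fun x => f (x + h)) := by
  obtain ⟨C, hC⟩ := hf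
  exact ⟨C, hC.1, fun x y => by simpa using hC.2 (x + h) (y + h)⟩

lemma Good.shift {R0 r CH R p : ℝ} (S : Setup N Ω R0 r CH) (hR : R0 < R) (hp : 1 < p)
    (hp2 : p < 3 / 2) {a b C : ℝ}
    (ha : a = 1 / (2 * (p - 1))) (hb : b = n / (p - 1)) (hC : C = b * CH / r) {v : En n → ℝ}
    (H : Good N Ω p R ((R / R0) ^ (-a)) (C + 1) v) (x h : En n) :
    v (x + h) ≤ Real.exp (C * ‖h‖) * v x := by
  have hR0 := S.hR0
  have hr := S.hr
  have hr2 := S.hr2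
  have hCH := S.hCH.1
  have hp1 : 0 < p - 1 := by linarith
  have ha0 : 0 < a := by rw [ha]; positivity
  have hn : 0 < n := by linarith [S.hn]
  have hn' : (2 : ℝ) ≤ n := by exact_mod_cast S.hn
  have hb0 : 0 < b := by rw [hb]; positivity
  have hab : a ≤ b := by
    rw [ha, hb, div_le_div_iff₀ (by positivity) hp1]
    nlinarith
  have hRp : 0 < R := hR0.trans hR
  have hC0 : 0 ≤ C := by rw [hC]; positivity
  have haC : a * CH / R0 ≤ C := by
    rw [hC]; gcongr; linarith
  have hM0 : 0 ≤ C + 1 := by linarith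
  have hup := H.upper S hR hp hp2 ha (by linarith)
  have hlo := fun {x0 : En n} => H.lower S hR hp ha hb (by linarith) (x0 := x0)
  set ε := (R / R0) ^ (-a) with hε
  have hε0 : 0 < ε := by positivity
  have hε1 : ε ≤ 1 := Real.rpow_le_one_of_one_le_of_nonpos
    (by rw [le_div_iff₀ hR0]; linarith) (by linarith)
  have hle1 := H.le_one hn hε0 hε1 hM0 hp
  have hgeε := H.ge_eps hn hε0 hε1 hM0 hp
  have hvpos : ∀ x, 0 < v x := fun x => hε0.trans_le (hgeε x)
  have hvL := (H.cls.lip hε0 hM0).lip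
  set l := Real.exp (C * ‖h‖) with hl
  have hl1 : 1 ≤ l := Real.one_le_exp (by positivity)
  have hl0 : 0 < l := by linarith
  have hli : l⁻¹ ≤ 1 := inv_le_one_of_one_le₀ hl1
  -- the two competitors
  have c1 : Cls N Ω R ε (C + 1) (fun x => max (v x) (l⁻¹ * v (x + h))) := by
    refine H.cls.maxC (fun x => ?_) (fun x _ => ?_) (fun x hx => ?_) (fun x y => ?_)
    · have := mul_le_one₀ hli (hvpos (x + h)).le (hle1 (x + h)); linarith
    · exact mul_le_one₀ hli (hvpos (x + h)).le (hle1 (x + h))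
    · rw [inv_mul_le_iff₀ hl0]
      have h1 := Wup_har (R := R) S ha0.le haC (x + h) x
      rw [Wup_eps hR hx, add_sub_cancel_left, ← hε, ← hl] at h1
      exact (hup _).trans h1
    · have := H.cls.har (x + h) (y + h)
      rw [add_sub_add_right_eq_sub] at this
      calc l⁻¹ * v (x + h) ≤ l⁻¹ * (Real.exp ((C + 1) * ‖x - y‖) * v (y + h)) := by gcongr
        _ = _ := by ring
  have c2 : Cls N Ω R ε (C + 1) (fun x => min (v x) (l * v (x - h))) := by
    refine H.cls.minC (fun x => ?_) (fun x hx => ?_) (fun x hx => ?_) (fun x y => ?_)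
    · have := hgeε (x - h); nlinarith
    · by_cases hxh : x - h ∈ Ω
      · obtain ⟨y, hy, hyf⟩ : (segment ℝ x (x - h) ∩ frontier Ω).Nonempty := by
          by_contra hcon
          have hdis : ∀ y ∈ segment ℝ x (x - h), y ∉ frontier Ω := fun y hy hf => hcon ⟨y, hy, hf⟩
          obtain ⟨y, -, hy1, hy2⟩ := (convex_segment x (x - h)).isPreconnected Ω (closure Ω)ᶜ S.hΩ
            isClosed_closure.isOpen_compl (fun y hy => by
              by_cases hyc : y ∈ closure Ω
              · left
                have := hdis y hy
                rw [frontier, S.hΩ.interior_eq] at this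
                by_contra hyΩ
                exact this ⟨hyc, hyΩ⟩
              · exact Or.inr hyc)
            ⟨x - h, right_mem_segment _ _ _, hxh⟩
            ⟨x, left_mem_segment _ _ _, fun hxc => by
              have := hdis x (left_mem_segment _ _ _)
              rw [frontier, S.hΩ.interior_eq] at this
              exact this ⟨hxc, hx⟩⟩
          exact hy2 (subset_closure hy1)
        obtain ⟨x0, h1, h2⟩ := S.touch y hyf
        have h3 := Wlo_har S x0 hb0.le hC.ge y (x - h)
        have h4 : Wlo N x0 r b y = 1 := by
          unfold Wlo; rw [max_eq_right h1, div_self hr.ne', Real.one_rpow]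
        have h5 : ‖y - (x - h)‖ ≤ ‖h‖ := by
          obtain ⟨t, ht, rfl⟩ := (segment_eq_image' ℝ x (x - h)).subset hy
          have : x + t • (x - h - x) - (x - h) = (1 - t) • h := by module
          simp only [this, norm_smul]
          have : ‖1 - t‖ ≤ 1 := by
            rw [Real.norm_eq_abs, abs_le]; constructor <;> linarith [ht.1, ht.2]
          have := norm_nonneg h
          nlinarith
        rw [h4] at h3
        have h6 := hlo h2 (x - h)
        have h7 : 0 ≤ Wlo N x0 r b (x - h) := by
          have : 0 < max (N.H (x - h - x0)) r := hr.trans_le (le_max_right _ _)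
          unfold Wlo; positivity
        refine h3.trans ?_
        rw [hl]
        gcongr
      · rw [H.cls.one _ hxh]; linarith
    · have := hgeε (x - h); nlinarith
    · have := H.cls.har (x - h) (y - h)
      rw [sub_sub_sub_cancel_right] at this
      calc l * v (x - h) ≤ l * (Real.exp ((C + 1) * ‖x - y‖) * v (y - h)) := by gcongr
        _ = _ := by ring
  have hE2 := H.minE _ c2
  rw [← E_shift N p (fun x => min (v x) (l * v (x - h))) h] at hE2
  have e2 : (fun y => (fun x => min (v x) (l * v (x - h))) (y + h)) =
      fun y => min (l * v y) (v (y + h)) := by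
    ext y; simp only [add_sub_cancel_right]; exact min_comm _ _
  have i2' := c2.intE (p := p) hε0 hM0 (by linarith)
  have i2 : Integrable (fun x => N.F (gradient (fun y => min (l * v y) (v (y + h))) x) ^ p) := by
    rw [← e2]
    have := i2'.comp_add_right h
    simpa only [← grad_shift] using this
  rw [e2] at hE2
  have i1 := c1.intE (p := p) hε0 hM0 (by linarith)
  have iv := H.cls.intE (p := p) hε0 hM0 (by linarith)
  have ivh : Integrable (fun x => N.F (gradient (fun y => v (y + h)) x) ^ p) := by
    simp only [grad_shift]
    exact iv.comp_add_right h
  have hsum : ∫ x, (l ^ p * N.F (gradient (fun x => max (v x) (l⁻¹ * v (x + h))) x) ^ p +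
      N.F (gradient (fun y => min (l * v y) (v (y + h))) x) ^ p) =
      ∫ x, (l ^ p * N.F (gradient v x) ^ p + N.F (gradient (fun y => v (y + h)) x) ^ p) := by
    refine integral_congr_ae ?_
    have hvhL := lip_shift hvL h
    filter_upwards [hvL.ae_grad_max (hvhL.smul l⁻¹), (hvL.smul l).ae_grad_min hvhL, hvL.ae_diff,
      hvhL.ae_diff] with x h1 h2 h3 h4
    rw [h1, h2]
    by_cases hlt : l * v x < v (x + h)
    · have : v x < l⁻¹ * v (x + h) := by rwa [lt_inv_mul_iff₀ hl0]
      rw [if_pos hlt, if_pos this, grad_smul _ h3, grad_smul _ h4, N.homog _ (by positivity),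
        N.homog _ hl0.le, Real.mul_rpow (by positivity) (N.sub.nn _),
        Real.mul_rpow hl0.le (N.sub.nn _), Real.inv_rpow hl0.le, ← mul_assoc,
        mul_inv_cancel₀ (by positivity), one_mul, add_comm]
    · have : ¬ v x < l⁻¹ * v (x + h) := by rwa [lt_inv_mul_iff₀ hl0]
      rw [if_neg hlt, if_neg this]
  rw [integral_add (i1.const_mul _) i2, integral_add (iv.const_mul _) ivh, integral_const_mul,
    integral_const_mul, E_shift] at hsum
  have hlp : 0 < l ^ p := by positivity
  have hE1 : ∫ x, N.F (gradient (fun x => max (v x) (l⁻¹ * v (x + h))) x) ^ p ≤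
      ∫ x, N.F (gradient v x) ^ p := by
    refine le_of_mul_le_mul_left ?_ hlp
    linarith
  have := H.eq_of_ge hn hε0 hM0 c1 (fun x => le_max_left _ _) hE1 x
  have h3 : l⁻¹ * v (x + h) ≤ v x := by
    rw [← this]; exact le_max_right _ _
  rwa [inv_mul_le_iff₀ hl0] at h3

lemma G_cont (N : MinkowskiNorm n) {p : ℝ} (hp : 1 < p) :
    Continuous (fun ξ => N.F ξ ^ (p - 1) • N.DF ξ) := by
  have hFp : Continuous (fun ξ => N.F ξ ^ (p - 1)) :=
    N.cont.rpow_const (fun x => Or.inr (by linarith))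
  rw [continuous_iff_continuousAt]
  intro ξ
  by_cases h : ξ = 0
  · subst h
    obtain ⟨D, hD, hDF⟩ := N.DF_bdd
    have h0 : N.F (0 : En n) ^ (p - 1) • N.DF 0 = 0 := by
      rw [N.sub.zero, Real.zero_rpow (by linarith), zero_smul]
    show Tendsto _ _ (𝓝 (N.F (0 : En n) ^ (p - 1) • N.DF 0))
    rw [h0]
    refine squeeze_zero_norm (a := fun ξ => N.F ξ ^ (p - 1) * D) (fun ξ => ?_) ?_
    · have := Real.rpow_nonneg (N.sub.nn ξ) (p - 1)
      rw [norm_smul, Real.norm_eq_abs, abs_of_nonneg this]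
      gcongr; exact hDF _
    · have : Tendsto (fun ξ => N.F ξ ^ (p - 1) * D) (𝓝 0) (𝓝 (N.F (0 : En n) ^ (p - 1) * D)) :=
        (hFp.tendsto 0).mul_const D
      simpa [N.sub.zero, Real.zero_rpow (by linarith : p - 1 ≠ 0)] using this
  · refine hFp.continuousAt.smul ?_
    have hop : IsOpen ({(0 : En n)}ᶜ) := isOpen_compl_singleton
    have := (N.smooth.continuousOn_fderiv_of_isOpen hop (by simp)).continuousAt
      (hop.mem_nhds h)
    exact (InnerProductSpace.toDual ℝ (En n)).symm.continuous.continuousAt.comp this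
end P9


section P10
variable {n : ℕ} {N : MinkowskiNorm n} {Ω : Set (En n)}

lemma EL_nonneg {p R ε C : ℝ} (hε : 0 < ε) (hC : 0 ≤ C) (hp : 1 < p) {v χ : En n → ℝ}
    (H : Good N Ω p R ε (C + 1) v) (h1 : ∀ x, v x ≤ 1) (hge : ∀ x, ε ≤ v x)
    (har : ∀ x y, v x ≤ Real.exp (C * ‖x - y‖) * v y) (hχ : Lip χ)
    (χ0 : ∀ x, x ∉ Ω → χ x = 0) (χR : ∀ x, R ≤ N.H x → χ x = 0) :
    0 ≤ ∫ x, N.F (gradient v x) ^ (p - 1) *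
      ⟪N.DF (gradient v x), gradient (fun y => v y * χ y) x⟫ := by
  obtain ⟨ρ, hρ⟩ := N.H_far R
  have hM : 0 ≤ C + 1 := by linarith
  have hvL := (H.cls.lip hε hM).lip
  have hχcs : HasCompactSupport χ := cs_of_zero_off (ρ := ρ) fun x hx => χR x (hρ x hx)
  obtain ⟨A, hA⟩ := hχ.bdd hχcs
  have hA0 : 0 ≤ A := (abs_nonneg _).trans (hA 0)
  obtain ⟨L, hL⟩ := hχ
  have hL0 := hL.1
  have hψL : Lip (fun y => v y * χ y) := hvL.mul_cs hL.lip hχcs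
  have hψ0 : ∀ x, ρ < ‖x‖ → v x * χ x = 0 := fun x hx => by rw [χR x (hρ x hx), mul_zero]
  set ψ : En n → ℝ := fun y => v y * χ y with hψ
  set t0 := 1 / (2 * (A + L + 1)) with ht0
  have ht0p : 0 < t0 := by positivity
  have ht0e : t0 * (2 * (A + L + 1)) = 1 := by rw [ht0]; field_simp
  -- competitors
  have hcls : ∀ t, 0 < t → t ≤ t0 → Cls N Ω R ε (C + 1) (fun x => v x + t * ψ x) := by
    intro t ht htt
    have htA : t * A ≤ 1 / 2 := by nlinarith
    have htL : 2 * (t * L) ≤ 1 := by nlinarith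
    have hb : ∀ x, 1 / 2 ≤ 1 + t * χ x ∧ 1 + t * χ x ≤ 2 := fun x => by
      have := abs_le.1 (hA x)
      constructor <;> nlinarith
    have hvp : ∀ x, 0 < v x := fun x => hε.trans_le (hge x)
    have hform : ∀ x, v x + t * ψ x = v x * (1 + t * χ x) := fun x => by simp only [hψ]; ring
    refine ⟨fun x => ?_, fun x => ?_, fun x hx => ?_, fun x hx => ?_, fun x y => ?_⟩
    · rw [hform]; nlinarith [hb x, hge x]
    · rw [hform]; nlinarith [hb x, h1 x, hvp x]
    · simp only [hψ, χ0 x hx, H.cls.one x hx]; ring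
    · simp only [hψ, χR x hx, H.cls.eps x hx]; ring
    · rw [hform, hform]
      have e1 : 1 + t * χ x ≤ Real.exp ‖x - y‖ * (1 + t * χ y) := by
        have a1 := hL.2 x y
        have a2 := Real.add_one_le_exp ‖x - y‖
        have a3 := norm_nonneg (x - y)
        have a4 := (hb y).1
        have a5 : t * χ x ≤ t * χ y + t * L * ‖x - y‖ := by nlinarith
        have a6 : t * L * ‖x - y‖ ≤ ‖x - y‖ * (1 + t * χ y) := by nlinarith
        nlinarith
      calc v x * (1 + t * χ x) ≤ (Real.exp (C * ‖x - y‖) * v y) *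
            (Real.exp ‖x - y‖ * (1 + t * χ y)) := by
            have := hvp y
            gcongr
            · linarith [(hb x).1]
            · exact har x y
        _ = Real.exp ((C + 1) * ‖x - y‖) * (v y * (1 + t * χ y)) := by
            rw [add_mul, one_mul, Real.exp_add]; ring
  obtain ⟨Cv, hCv, hgv⟩ := hvL.norm_grad_le
  obtain ⟨Cψ, hCψ, hgψ⟩ := hψL.norm_grad_le
  obtain ⟨CF, hCF, hF⟩ := N.ub
  obtain ⟨D, hD, hDF⟩ := N.DF_bdd
  set B := (CF * (Cv + t0 * Cψ)) ^ (p - 1) * (D * Cψ) with hB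
  set Φ : ℝ → En n → ℝ := fun t x => N.F (gradient v x + t • gradient ψ x) ^ (p - 1) *
    ⟪N.DF (gradient v x + t • gradient ψ x), gradient ψ x⟫ with hΦ
  have hΦb : ∀ t, 0 ≤ t → t ≤ t0 → ∀ x, |Φ t x| ≤ B := by
    intro t ht htt x
    simp only [hΦ]
    rw [abs_mul, abs_of_nonneg (Real.rpow_nonneg (N.sub.nn _) _)]
    have e1 : N.F (gradient v x + t • gradient ψ x) ≤ CF * (Cv + t0 * Cψ) := by
      refine (hF _).trans ?_
      gcongr
      refine (norm_add_le _ _).trans ?_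
      rw [norm_smul, Real.norm_eq_abs, abs_of_nonneg ht]
      gcongr
      · exact hgv x
      · exact hgψ x
    have e2 : |⟪N.DF (gradient v x + t • gradient ψ x), gradient ψ x⟫| ≤ D * Cψ := by
      refine (abs_real_inner_le_norm _ _).trans ?_
      gcongr
      · exact hDF _
      · exact hgψ x
    rw [hB]
    have := N.sub.nn (gradient v x + t • gradient ψ x)
    gcongr
  have hΦ0 : ∀ t x, ρ < ‖x‖ → Φ t x = 0 := fun t x hx => by
    simp only [hΦ]
    rw [grad_zero_off hψ0 x hx, inner_zero_right, mul_zero]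
  have hΦm : ∀ t, Measurable (Φ t) := fun t => by
    have m1 : Measurable (fun x => gradient v x + t • gradient ψ x) :=
      (measurable_grad v).add ((measurable_grad ψ).const_smul t)
    exact ((N.cont.measurable.comp m1).pow_const _).mul
      ((N.DF_meas.comp m1).inner (measurable_grad ψ))
  have hΦi : ∀ t, 0 ≤ t → t ≤ t0 → Integrable (Φ t) := fun t ht htt =>
    int_bdd (hΦm t).aestronglyMeasurable (Eventually.of_forall (hΦb t ht htt)) (hΦ0 t)
  have hpos : ∀ t, 0 < t → t ≤ t0 → 0 ≤ ∫ x, Φ t x := by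
    intro t ht htt
    have hc := hcls t ht htt
    have hm := H.minE _ hc
    have i1 := hc.intE (p := p) hε hM (by linarith)
    have i2 := H.cls.intE (p := p) hε hM (by linarith)
    have := integral_mono_ae (i1.add ((hΦi t ht.le htt).const_mul (-(p * t)))) i2 (by
      filter_upwards [hvL.ae_diff, hψL.ae_diff] with x d1 d2
      have hg : gradient (fun x => v x + t * ψ x) x = gradient v x + t • gradient ψ x := by
        rw [grad_add d1 (d2.const_mul t), grad_smul t d2]
      have := N.subgrad hp.le (gradient v x + t • gradient ψ x) (gradient v x)
      simp only [Pi.add_apply]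
      rw [hg]
      refine le_trans (le_of_eq ?_) this
      have e : gradient v x - (gradient v x + t • gradient ψ x) = (-t) • gradient ψ x := by module
      rw [e, real_inner_smul_right]
      simp only [hΦ]; ring)
    simp only [Pi.add_apply] at this
    rw [integral_add i1 ((hΦi t ht.le htt).const_mul _), integral_const_mul] at this
    have hpt : 0 < p * t := by positivity
    by_contra hcon
    push Not at hcon
    nlinarith
  -- limit
  have hseq : Tendsto (fun k : ℕ => t0 * (1 / ((k : ℝ) + 1))) atTop (𝓝 0) := by
    simpa using tendsto_one_div_add_atTop_nhds_zero_nat.const_mul t0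
  have hkb : ∀ k : ℕ, 0 < t0 * (1 / ((k : ℝ) + 1)) ∧ t0 * (1 / ((k : ℝ) + 1)) ≤ t0 := fun k => by
    refine ⟨by positivity, ?_⟩
    have : 1 / ((k : ℝ) + 1) ≤ 1 := by
      rw [div_le_one (by positivity)]; linarith [(Nat.cast_nonneg k : (0 : ℝ) ≤ k)]
    nlinarith
  have hlim : Tendsto (fun k : ℕ => ∫ x, Φ (t0 * (1 / ((k : ℝ) + 1))) x) atTop (𝓝 (∫ x, Φ 0 x)) := by
    refine tendsto_integral_of_dominated_convergence
      ((closedBall (0 : En n) ρ).indicator (fun _ => B)) (fun k => (hΦm _).aestronglyMeasurable)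
      ?_ (fun k => ?_) ?_
    · exact (integrable_indicator_iff measurableSet_closedBall).2
        (integrableOn_const (measure_closedBall_lt_top).ne)
    · refine Eventually.of_forall fun x => ?_
      by_cases hx : ρ < ‖x‖
      · rw [hΦ0 _ x hx]; simp [indicator, not_le.2 hx]
      · have : x ∈ closedBall (0 : En n) ρ := by simpa using hx
        rw [indicator_of_mem this]
        exact hΦb _ (hkb k).1.le (hkb k).2 x
    · refine Eventually.of_forall fun x => ?_
      have hc : Continuous (fun t : ℝ => Φ t x) := by
        have e : (fun t : ℝ => Φ t x) = fun t : ℝ =>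
            ⟪(fun ξ => N.F ξ ^ (p - 1) • N.DF ξ) (gradient v x + t • gradient ψ x),
              gradient ψ x⟫ := by
          ext t; simp only [hΦ, real_inner_smul_left]
        rw [e]
        exact ((G_cont N hp).comp (by fun_prop)).inner continuous_const
      exact (hc.tendsto 0).comp hseq
  have := ge_of_tendsto' hlim fun k => hpos _ (hkb k).1 (hkb k).2
  simpa [hΦ] using this

lemma EL_zero {p R ε C : ℝ} (hε : 0 < ε) (hC : 0 ≤ C) (hp : 1 < p) {v χ : En n → ℝ}
    (H : Good N Ω p R ε (C + 1) v) (h1 : ∀ x, v x ≤ 1) (hge : ∀ x, ε ≤ v x)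
    (har : ∀ x y, v x ≤ Real.exp (C * ‖x - y‖) * v y) (hχ : Lip χ)
    (χ0 : ∀ x, x ∉ Ω → χ x = 0) (χR : ∀ x, R ≤ N.H x → χ x = 0) :
    ∫ x, N.F (gradient v x) ^ (p - 1) *
      ⟪N.DF (gradient v x), gradient (fun y => v y * χ y) x⟫ = 0 := by
  refine le_antisymm ?_ (EL_nonneg hε hC hp H h1 hge har hχ χ0 χR)
  have h2 := EL_nonneg hε hC hp H h1 hge har hχ.neg (fun x hx => by simp [χ0 x hx])
    (fun x hx => by simp [χR x hx])
  have e : (fun y => v y * -χ y) = fun y => - (v y * χ y) := by ext y; ring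
  have e2 : ∀ x, gradient (fun y => - (v y * χ y)) x = - gradient (fun y => v y * χ y) x := by
    intro x; simp [gradient, fderiv_fun_neg]
  simp only [e, e2, inner_neg_right, mul_neg, integral_neg] at h2
  linarith

lemma exists_pu {R0 r CH R p : ℝ} (S : Setup N Ω R0 r CH) (hR : R0 < R) (hp : 1 < p)
    (hp2 : p < 3 / 2) : ∃ u : En n → ℝ, LipC (n * CH / r) u ∧ (∀ x, x ∉ Ω → u x = 0) ∧
      (∀ x, 0 ≤ u x) ∧ (∀ x, 1 / 2 * Real.log (max (min (N.H x) R) R0 / R0) ≤ u x) ∧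
      ∀ ζ : En n → ℝ, Lip ζ → (∀ x, x ∉ Ω → ζ x = 0) → (∀ x, R ≤ N.H x → ζ x = 0) →
        ∫ x, (N.F (gradient u x) ^ (p - 1) * ⟪N.DF (gradient u x), gradient ζ x⟫ +
          ζ x * N.F (gradient u x) ^ p) = 0 := by
  have hR0 := S.hR0
  have hr := S.hr
  have hr2 := S.hr2
  have hCH := S.hCH.1
  have hp1 : 0 < p - 1 := by linarith
  obtain ⟨a, ha⟩ : ∃ a, a = 1 / (2 * (p - 1)) := ⟨_, rfl⟩
  obtain ⟨b, hb⟩ : ∃ b, b = n / (p - 1) := ⟨_, rfl⟩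
  obtain ⟨C, hC⟩ : ∃ C, C = b * CH / r := ⟨_, rfl⟩
  have ha0 : 0 < a := by rw [ha]; positivity
  have hn : 0 < n := by linarith [S.hn]
  have hn' : (2 : ℝ) ≤ n := by exact_mod_cast S.hn
  have hb0 : 0 < b := by rw [hb]; positivity
  have hab : a ≤ b := by
    rw [ha, hb, div_le_div_iff₀ (by positivity) hp1]
    nlinarith
  have hRp : 0 < R := hR0.trans hR
  have hC0 : 0 ≤ C := by rw [hC]; positivity
  have haC : a * CH / R0 ≤ C := by
    rw [hC]; gcongr; linarith
  have hM0 : 0 ≤ C + 1 := by linarith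
  obtain ⟨ε, hε⟩ : ∃ ε, ε = (R / R0) ^ (-a) := ⟨_, rfl⟩
  have hε0 : 0 < ε := by rw [hε]; positivity
  have hε1 : ε ≤ 1 := by
    rw [hε]
    exact Real.rpow_le_one_of_one_le_of_nonpos (by rw [le_div_iff₀ hR0]; linarith) (by linarith)
  obtain ⟨v, H⟩ := exists_good N (Ω := Ω) (p := p) (R := R) (ε := ε) (M := C + 1) hp.le hε0 hε1 hM0
    ⟨_, hε ▸ Wup_cls S hR ha0.le (by linarith)⟩
  have hle1 := H.le_one hn hε0 hε1 hM0 hp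
  have hgeε := H.ge_eps hn hε0 hε1 hM0 hp
  have hup := fun x => Good.upper S hR hp hp2 ha (M := C + 1) (by linarith) (hε ▸ H) x
  have hvp : ∀ x, 0 < v x := fun x => hε0.trans_le (hgeε x)
  have har : ∀ x y, v x ≤ Real.exp (C * ‖x - y‖) * v y := fun x y => by
    have := Good.shift S hR hp hp2 ha hb hC (hε ▸ H) y (x - y)
    simpa using this
  obtain ⟨Lv, hvL⟩ : Lip v := (H.cls.lip hε0 hM0).lip
  have huL : LipC (n * CH / r) (fun x => -(p - 1) * Real.log (v x)) := by
    refine ⟨by positivity, fun x y => ?_⟩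
    have h1 := Real.log_le_log (hvp y) (har y x)
    rw [Real.log_mul (Real.exp_pos _).ne' (hvp x).ne', Real.log_exp, norm_sub_rev] at h1
    have h2 : (p - 1) * (C * ‖x - y‖) = n * CH / r * ‖x - y‖ := by
      rw [hC, hb]; field_simp
    nlinarith
  refine ⟨fun x => -(p - 1) * Real.log (v x), huL, fun x hx => ?_, fun x => ?_, fun x => ?_, ?_⟩
  · simp [H.cls.one x hx]
  · have := Real.log_nonpos (hvp x).le (hle1 x)
    nlinarith
  · have h1 := Real.log_le_log (hvp x) (hup x)
    have h2 : 0 < max (min (N.H x) R) R0 := hR0.trans_le (le_max_right _ _)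
    unfold Wup at h1
    rw [Real.log_rpow (by positivity)] at h1
    have h3 : (p - 1) * a = 1 / 2 := by rw [ha]; field_simp
    have h4 := mul_le_mul_of_nonneg_left h1 hp1.le
    have h5 : (p - 1) * (-a * Real.log (max (min (N.H x) R) R0 / R0)) =
      - (1 / 2 * Real.log (max (min (N.H x) R) R0 / R0)) := by rw [← h3]; ring
    linarith
  · intro ζ hζ ζ0 ζR
    obtain ⟨ρ, hρ⟩ := N.H_far R
    have hζcs : HasCompactSupport ζ := cs_of_zero_off (ρ := ρ) fun x hx => ζR x (hρ x hx)
    have hΘL : Lip (fun x => (v x / ε) ^ (-p)) := pow_lip hvL hε0 hgeε (by linarith)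
    have hχL : Lip (fun x => (v x / ε) ^ (-p) * ζ x) := hΘL.mul_cs hζ hζcs
    have hEL := EL_zero hε0 hC0 hp H hle1 hgeε har hχL (fun x hx => by simp [ζ0 x hx])
      (fun x hx => by simp [ζR x hx])
    set u : En n → ℝ := fun x => -(p - 1) * Real.log (v x) with hu
    set K := ε ^ p * (p - 1) ^ (-(p - 1)) with hK
    have hK0 : 0 < K := by positivity
    have e : ∫ x, N.F (gradient v x) ^ (p - 1) *
        ⟪N.DF (gradient v x), gradient (fun y => v y * ((v y / ε) ^ (-p) * ζ y)) x⟫ =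
        ∫ x, (-K) * (N.F (gradient u x) ^ (p - 1) * ⟪N.DF (gradient u x), gradient ζ x⟫ +
          ζ x * N.F (gradient u x) ^ p) := by
      refine integral_congr_ae ?_
      filter_upwards [hvL.lip.ae_diff, hΘL.ae_diff, hχL.ae_diff, hζ.ae_diff, huL.lip.ae_diff]
        with x dv dΘ dχ dζ du
      have hv0 := hvp x
      have g1 := rad_grad dv hε0 hv0 p
      have gu : gradient u x = (-(p - 1) * (v x)⁻¹) • gradient v x := by
        rw [hu]
        exact grad_comp (φ := fun t => -(p - 1) * Real.log t)
          ((Real.hasDerivAt_log hv0.ne').const_mul _) dv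
      set κ := v x / (p - 1) with hκ
      have hκ0 : 0 < κ := by positivity
      have gv : gradient v x = (-κ) • gradient u x := by
        rw [gu, smul_smul]
        have : -κ * (-(p - 1) * (v x)⁻¹) = 1 := by rw [hκ]; field_simp
        rw [this, one_smul]
      have hP : (v x / ε) ^ (-p - 1) = (v x / ε) ^ (-p) / (v x / ε) :=
        Real.rpow_sub_one (by positivity) _
      have gψ : gradient (fun y => v y * ((v y / ε) ^ (-p) * ζ y)) x =
          ((v x / ε) ^ (-p) * v x) • (gradient ζ x + ζ x • gradient u x) := by
        rw [grad_mul dv dχ, grad_mul dΘ dζ, g1, hP, gv]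
        generalize (v x / ε) ^ (-p) = T
        have e1 : p / ε * (T / (v x / ε)) = p * T / v x := by field_simp
        have e2 : v x = κ * (p - 1) := by rw [hκ]; field_simp
        rw [e1, e2]
        simp only [smul_add, smul_smul, ← add_smul, add_assoc]
        have hpne : p - 1 ≠ 0 := hp1.ne'
        have e3 : κ * (p - 1) * (p * T / (κ * (p - 1))) = p * T := by field_simp
        clear_value κ
        have e4 : κ * (p - 1) * (ζ x * (-(p * T / (κ * (p - 1))) * -κ)) + T * ζ x * -κ =
            T * (κ * (p - 1)) * ζ x := by
          have : κ * (p - 1) * (ζ x * (-(p * T / (κ * (p - 1))) * -κ)) =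
            (κ * ζ x) * (κ * (p - 1) * (p * T / (κ * (p - 1)))) := by ring
          rw [this, e3]; ring
        rw [e4, mul_comm (κ * (p - 1)) T]
      have hFv : N.F (gradient v x) ^ (p - 1) = κ ^ (p - 1) * N.F (gradient u x) ^ (p - 1) := by
        rw [gv, neg_smul, N.even, N.homog _ hκ0.le, Real.mul_rpow hκ0.le (N.sub.nn _)]
      have hDv : N.DF (gradient v x) = - N.DF (gradient u x) := by
        rw [gv, neg_smul, N.DF_neg, N.DF_smul hκ0]
      have hc : κ ^ (p - 1) * ((v x / ε) ^ (-p) * v x) = K := by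
        rw [hκ, hK, Real.div_rpow hv0.le hp1.le, Real.div_rpow hv0.le hε0.le,
          Real.rpow_sub_one hv0.ne', Real.rpow_neg hp1.le, Real.rpow_neg hv0.le,
          Real.rpow_neg hε0.le]
        have := Real.rpow_pos_of_pos hv0 p
        field_simp
      have hFu : N.F (gradient u x) ^ p = N.F (gradient u x) ^ (p - 1) * N.F (gradient u x) := by
        have := Real.rpow_add_one' (N.sub.nn (gradient u x)) (y := p - 1) (by linarith)
        rwa [sub_add_cancel] at this
      rw [gψ, hFv, hDv, real_inner_smul_right, inner_neg_left, inner_add_right,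
        real_inner_smul_right, N.DF_self, hFu, ← hc]
      ring
    rw [e, integral_const_mul] at hEL
    rcases mul_eq_zero.1 hEL with h | h
    · linarith
    · exact h
end P10


section P11
variable {n : ℕ} {N : MinkowskiNorm n} {Ω : Set (En n)}

lemma F_unif (N : MinkowskiNorm n) (C : ℝ) : ∃ M, 0 ≤ M ∧ ∀ f : En n → ℝ, LipC C f →
    ∀ q : ℝ, 0 ≤ q → q ≤ 2 → ∀ x, N.F (gradient f x) ^ q ≤ M := by
  obtain ⟨CF, hCF, hF⟩ := N.ub
  set b := max 1 (CF * C) with hb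
  have hb1 : 1 ≤ b := le_max_left _ _
  refine ⟨b ^ (2 : ℝ), by positivity, fun f hf q hq hq2 x => ?_⟩
  have h1 : N.F (gradient f x) ≤ b := by
    refine ((hF _).trans ?_).trans (le_max_right _ _)
    exact mul_le_mul_of_nonneg_left (hf.norm_grad_le x) hCF.le
  exact (Real.rpow_le_rpow (N.sub.nn _) h1 hq).trans (Real.rpow_le_rpow_of_exponent_le hb1 hq2)

/-- the weak form of the `p`-equation. -/
def PEq (N : MinkowskiNorm n) (Ω : Set (En n)) (R p : ℝ) (u : En n → ℝ) : Prop :=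
  ∀ ζ : En n → ℝ, Lip ζ → (∀ x, x ∉ Ω → ζ x = 0) → (∀ x, R ≤ N.H x → ζ x = 0) →
    ∫ x, (N.F (gradient u x) ^ (p - 1) * ⟪N.DF (gradient u x), gradient ζ x⟫ +
      ζ x * N.F (gradient u x) ^ p) = 0

lemma test_ineq {p R C M : ℝ} (hp : 1 < p) (hp2 : p ≤ 2) {u U g η : En n → ℝ} (hu : LipC C u)
    (hM0 : 0 ≤ M) (hM : ∀ q : ℝ, 0 ≤ q → q ≤ 2 → ∀ x, N.F (gradient u x) ^ q ≤ M)
    (hEL : PEq N Ω R p u) (hU : Lip U) (hg : Lip g) (hgc : HasCompactSupport g) (hη : Lip η)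
    (hηc : HasCompactSupport η)
    (η0 : ∀ x, 0 ≤ η x) (ηΩ : ∀ x, x ∉ Ω → η x = 0) (ηR : ∀ x, R ≤ N.H x → η x = 0)
    (hgη : ∀ᵐ x, g x • gradient η x = 0) :
    (∫ x, η x * N.F (gradient u x) ^ p) ≤
      (∫ x, η x * N.F (gradient (fun y => U y + g y) x) ^ p) +
      p * (∫ x, (η x * g x) * N.F (gradient u x) ^ p) +
      p * M * ∫ x, |U x - u x| * (η x + N.F (gradient η x)) := by
  obtain ⟨ρ, hρ⟩ := hηc.zero_off
  obtain ⟨A, hA⟩ := hη.bdd hηc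
  obtain ⟨G, hG⟩ := hg.bdd hgc
  obtain ⟨CF, hCF, hF⟩ := N.ub
  have hφ : Lip (fun y => U y + g y) := hU.add hg
  have hψ : Lip (fun x => (U x + g x) - u x) := hφ.sub hu.lip
  have hζ : Lip (fun x => ((U x + g x) - u x) * η x) := hψ.mul_cs hη hηc
  have hζρ : ∀ x, ρ < ‖x‖ → ((U x + g x) - u x) * η x = 0 := fun x hx => by rw [hρ x hx, mul_zero]
  have hζc : HasCompactSupport (fun x => ((U x + g x) - u x) * η x) := cs_of_zero_off hζρ
  have hE := hEL _ hζ (fun x hx => by rw [ηΩ x hx, mul_zero]) (fun x hx => by rw [ηR x hx, mul_zero])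
  have hgηL : Lip (fun x => η x * g x) := hη.mul_cs hg hgc
  have hzη : Lip (fun x => (U x - u x) * η x) := (hU.sub hu.lip).mul_cs hη hηc
  have i1 : Integrable (fun x => η x * N.F (gradient (fun y => U y + g y) x) ^ p) :=
    int_Fpow N (by linarith) hφ hη.continuous.measurable hA hρ
  have i2 : Integrable (fun x => η x * N.F (gradient u x) ^ p) :=
    int_Fpow N (by linarith) hu.lip hη.continuous.measurable hA hρ
  have i4 : Integrable (fun x => (η x * g x) * N.F (gradient u x) ^ p) :=
    int_Fpow N (by linarith) hu.lip hgηL.continuous.measurable (A := A * G)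
      (fun x => by
        rw [abs_mul]
        exact mul_le_mul (hA x) (hG x) (abs_nonneg _) ((abs_nonneg _).trans (hA x)))
      (fun x hx => by rw [hρ x hx, zero_mul])
  obtain ⟨B, hB⟩ := hzη.bdd (cs_of_zero_off (ρ := ρ) fun x hx => by rw [hρ x hx, mul_zero])
  obtain ⟨Cη, hCη0, hCη⟩ := hη.norm_grad_le
  have i3 : Integrable (fun x => |U x - u x| * (η x + N.F (gradient η x))) := by
    obtain ⟨D, hD⟩ := (isCompact_closedBall (0 : En n) ρ).exists_bound_of_continuousOn
      (hU.sub hu.lip).continuous.continuousOn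
    refine int_bdd (A := |D| * (A + CF * Cη)) (ρ := ρ) ?_ (Eventually.of_forall fun x => ?_)
      fun x hx => ?_
    · exact (((hU.sub hu.lip).continuous.abs.measurable).mul
        (hη.continuous.measurable.add (N.F_grad_meas η))).aestronglyMeasurable
    · have hA0 : 0 ≤ A := (abs_nonneg _).trans (hA x)
      by_cases hx : ρ < ‖x‖
      · rw [hρ x hx, grad_zero_off hρ x hx, N.sub.zero, add_zero, mul_zero, abs_zero]
        positivity
      · have h1 := hD x (by simpa using hx)
        rw [Real.norm_eq_abs] at h1
        have h2 := N.sub.nn (gradient η x)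
        have h3 : N.F (gradient η x) ≤ CF * Cη :=
          (hF _).trans (mul_le_mul_of_nonneg_left (hCη x) hCF.le)
        have h4 := (le_abs_self _).trans (hA x)
        rw [abs_mul, abs_abs, abs_of_nonneg (add_nonneg (η0 x) h2)]
        exact mul_le_mul (h1.trans (le_abs_self _)) (by linarith) (add_nonneg (η0 x) h2)
          (abs_nonneg _)
    · rw [hρ x hx, grad_zero_off hρ x hx, N.sub.zero, add_zero, mul_zero]
  have i0 : Integrable (fun x => N.F (gradient u x) ^ (p - 1) *
      ⟪N.DF (gradient u x), gradient (fun x => ((U x + g x) - u x) * η x) x⟫ +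
      ((U x + g x) - u x) * η x * N.F (gradient u x) ^ p) := by
    obtain ⟨Cζ, hCζ0, hCζ⟩ := hζ.norm_grad_le
    obtain ⟨Aζ, hAζ⟩ := hζ.bdd hζc
    refine Integrable.add ?_
      (int_Fpow N (by linarith) hu.lip hζ.continuous.measurable hAζ hζρ)
    refine int_bdd (A := M * (CF * Cζ)) (ρ := ρ) ?_ (Eventually.of_forall fun x => ?_)
      fun x hx => ?_
    · exact ((N.Fpow_meas _ _).mul ((N.DF_meas.comp (measurable_grad u)).inner
        (measurable_grad _))).aestronglyMeasurable
    · rw [abs_mul, abs_of_nonneg (Real.rpow_nonneg (N.sub.nn _) _)]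
      refine mul_le_mul (hM _ (by linarith) (by linarith) x) ?_ (abs_nonneg _) hM0
      exact (N.abs_DF_le _ _).trans ((hF _).trans (mul_le_mul_of_nonneg_left (hCζ x) hCF.le))
    · rw [grad_zero_off hζρ x hx, inner_zero_right, mul_zero]
  have hpt : ∀ᵐ x, N.F (gradient u x) ^ (p - 1) *
      ⟪N.DF (gradient u x), gradient (fun x => ((U x + g x) - u x) * η x) x⟫ +
      ((U x + g x) - u x) * η x * N.F (gradient u x) ^ p ≤
      p⁻¹ * (η x * N.F (gradient (fun y => U y + g y) x) ^ p) - p⁻¹ * (η x * N.F (gradient u x) ^ p)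
      + (M * (|U x - u x| * (η x + N.F (gradient η x))) +
        (η x * g x) * N.F (gradient u x) ^ p) := by
    filter_upwards [hgη, hφ.ae_diff, hu.lip.ae_diff, hψ.ae_diff, hη.ae_diff] with x h0 dφ du dψ dη
    rw [grad_mul dψ dη, grad_sub dφ du]
    have hs := N.subgrad hp.le (gradient u x) (gradient (fun y => U y + g y) x)
    have e : (U x + g x - u x) • gradient η x = (U x - u x) • gradient η x := by
      have : U x + g x - u x = (U x - u x) + g x := by ring
      rw [this, add_smul, h0, add_zero]
    rw [e, inner_add_right, real_inner_smul_right, real_inner_smul_right]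
    have hd := N.abs_DF_le (gradient u x) (gradient η x)
    have hp1 := hM (p - 1) (by linarith) (by linarith) x
    have hpp := hM p (by linarith) (by linarith) x
    have n1 : 0 ≤ N.F (gradient u x) ^ (p - 1) := Real.rpow_nonneg (N.sub.nn _) _
    have n2 : 0 ≤ N.F (gradient u x) ^ p := Real.rpow_nonneg (N.sub.nn _) _
    generalize N.F (gradient u x) ^ (p - 1) = a at *
    generalize N.F (gradient u x) ^ p = b at *
    generalize N.F (gradient (fun y => U y + g y) x) ^ p = c at *
    generalize ⟪N.DF (gradient u x), gradient (fun y => U y + g y) x - gradient u x⟫ = d at *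
    generalize ⟪N.DF (gradient u x), gradient η x⟫ = s at *
    have t1 : a * (η x * d) ≤ p⁻¹ * (η x * c) - p⁻¹ * (η x * b) := by
      have : η x * (p * a * d) ≤ η x * (c - b) := mul_le_mul_of_nonneg_left (by linarith) (η0 x)
      have hpi : 0 < p⁻¹ := by positivity
      have t := mul_le_mul_of_nonneg_left this hpi.le
      have : p⁻¹ * (η x * (p * a * d)) = a * (η x * d) := by field_simp
      linarith
    have t2 : a * ((U x - u x) * s) ≤ M * (|U x - u x| * N.F (gradient η x)) := by
      refine (le_abs_self _).trans ?_
      rw [abs_mul, abs_mul, abs_of_nonneg n1]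
      exact mul_le_mul hp1 (mul_le_mul_of_nonneg_left hd (abs_nonneg _)) (by positivity) hM0
    have t3 : (U x - u x) * η x * b ≤ M * (|U x - u x| * η x) := by
      refine (le_abs_self _).trans ?_
      rw [abs_mul, abs_mul, abs_of_nonneg n2, abs_of_nonneg (η0 x), mul_comm]
      exact mul_le_mul_of_nonneg_right hpp (mul_nonneg (abs_nonneg _) (η0 x))
    nlinarith
  have hInt := integral_mono_ae i0
    (((i1.const_mul p⁻¹).sub (i2.const_mul p⁻¹)).add ((i3.const_mul M).add i4)) hpt
  have h2 := hE.symm.trans_le hInt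
  simp only [Pi.add_apply, Pi.sub_apply] at h2
  rw [integral_add (by exact (i1.const_mul p⁻¹).sub (i2.const_mul p⁻¹))
    (by exact (i3.const_mul M).add i4), integral_sub (i1.const_mul p⁻¹) (i2.const_mul p⁻¹),
    integral_add (i3.const_mul M) i4, integral_const_mul, integral_const_mul,
    integral_const_mul] at h2
  generalize (∫ x, η x * N.F (gradient u x) ^ p) = X at *
  generalize (∫ x, η x * N.F (gradient (fun y => U y + g y) x) ^ p) = Y at *
  generalize (∫ x, (η x * g x) * N.F (gradient u x) ^ p) = Z at *
  generalize (∫ x, |U x - u x| * (η x + N.F (gradient η x))) = W at *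
  have hp0 : 0 < p := by linarith
  have h3 := mul_le_mul_of_nonneg_left h2 hp0.le
  have : p * (p⁻¹ * Y - p⁻¹ * X + (M * W + Z)) = Y - X + p * M * W + p * Z := by
    field_simp; ring
  linarith

lemma err_tendsto {C : ℝ} {w : ℕ → En n → ℝ} {U : En n → ℝ} (hw : ∀ k, LipC C (w k))
    (hU : ∀ x, Tendsto (fun k => w k x) atTop (𝓝 (U x))) {h : En n → ℝ} (hm : Measurable h)
    {A ρ : ℝ} (hA : ∀ x, |h x| ≤ A) (h0 : ∀ x, ρ < ‖x‖ → h x = 0) :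
    Tendsto (fun k => ∫ x, |U x - w k x| * h x) atTop (𝓝 0) := by
  have hUL : LipC C U := LipC.of_tendsto hw hU
  have hz : ∀ x, Tendsto (fun k => |U x - w k x|) atTop (𝓝 0) := fun x => by
    simpa using ((tendsto_const_nhds (x := U x)).sub (hU x)).abs
  obtain ⟨B, hB⟩ := (hz 0).bddAbove_range
  have hB' : ∀ k, |U 0 - w k 0| ≤ B := fun k => hB ⟨k, rfl⟩
  have hA0 : 0 ≤ A := (abs_nonneg _).trans (hA 0)
  have hB0 : 0 ≤ B := (abs_nonneg _).trans (hB' 0)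
  have hC0 := hUL.1
  rw [show (0 : ℝ) = ∫ x : En n, (0 : ℝ) by simp]
  refine tendsto_integral_of_dominated_convergence
    (fun x => (closedBall (0 : En n) ρ).indicator (fun _ => (B + (C + C) * |ρ|) * A) x) ?_ ?_ ?_ ?_
  · intro k
    exact ((hUL.sub (hw k)).lip.continuous.abs.measurable.mul hm).aestronglyMeasurable
  · rw [integrable_indicator_iff measurableSet_closedBall]
    exact integrableOn_const (isCompact_closedBall _ _).measure_lt_top.ne
  · intro k
    refine Eventually.of_forall fun x => ?_
    by_cases hx : ρ < ‖x‖
    · rw [h0 x hx, mul_zero, norm_zero]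
      exact indicator_nonneg (fun _ _ => by positivity) _
    · have hx' : x ∈ closedBall (0 : En n) ρ := by simpa using hx
      rw [indicator_of_mem hx', norm_mul, Real.norm_eq_abs, abs_abs, Real.norm_eq_abs]
      refine mul_le_mul ?_ (hA x) (abs_nonneg _) (by positivity)
      have l1 := (hUL.sub (hw k)).2 x 0
      have l2 := (hUL.sub (hw k)).2 0 x
      have l3 := hB' k
      rw [zero_sub, norm_neg] at l2
      rw [sub_zero] at l1
      have l4 : (C + C) * ‖x‖ ≤ (C + C) * |ρ| :=
        mul_le_mul_of_nonneg_left ((not_lt.1 hx).trans (le_abs_self _)) (by linarith)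
      rw [abs_le] at l3 ⊢
      dsimp only at l1 l2
      constructor <;> linarith
  · refine Eventually.of_forall fun x => ?_
    simpa using (hz x).mul_const (h x)

/-- exponent going to one, fixed function -/
lemma pow_tendsto {p : ℕ → ℝ} (hp : ∀ k, 1 < p k) (hp2 : ∀ k, p k ≤ 2)
    (hpl : Tendsto p atTop (𝓝 1)) {f η : En n → ℝ} (hf : Lip f) (hη : Lip η)
    (hηc : HasCompactSupport η) :
    Tendsto (fun k => ∫ x, η x * N.F (gradient f x) ^ p k) atTop
      (𝓝 (∫ x, η x * N.F (gradient f x))) := by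
  obtain ⟨C, hf⟩ := hf
  obtain ⟨M, hM0, hM⟩ := F_unif N C
  refine tendsto_integral_of_dominated_convergence (fun x => |η x| * M) ?_ ?_ ?_ ?_
  · intro k
    exact (hη.continuous.measurable.mul (N.Fpow_meas _ _)).aestronglyMeasurable
  · exact (hη.integrable hηc).abs.mul_const M
  · intro k
    refine Eventually.of_forall fun x => ?_
    rw [norm_mul, Real.norm_eq_abs, Real.norm_eq_abs,
      abs_of_nonneg (Real.rpow_nonneg (N.sub.nn _) _)]
    exact mul_le_mul_of_nonneg_left (hM f hf _ (by linarith [hp k]) (hp2 k) x) (abs_nonneg _)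
  · refine Eventually.of_forall fun x => ?_
    have := (Real.continuousAt_const_rpow' (a := N.F (gradient f x)) (b := 1) one_ne_zero).tendsto.comp hpl
    simpa using this.const_mul (η x)

end P11


section P12
variable {n : ℕ} {N : MinkowskiNorm n} {Ω : Set (En n)}

/-- a sequence of approximate solutions converging to `U`. -/
structure ApproxSeq (N : MinkowskiNorm n) (Ω : Set (En n)) (C : ℝ) (p R : ℕ → ℝ)
    (w : ℕ → En n → ℝ) (U : En n → ℝ) : Prop where
  hp : ∀ k, 1 < p k
  hp2 : ∀ k, p k ≤ 2
  hpl : Tendsto p atTop (𝓝 1)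
  hR : Tendsto R atTop atTop
  hw : ∀ k, LipC C (w k)
  hlim : ∀ x, Tendsto (fun k => w k x) atTop (𝓝 (U x))
  heq : ∀ k, PEq N Ω (R k) (p k) (w k)

variable {C : ℝ} {p R : ℕ → ℝ} {w : ℕ → En n → ℝ} {U : En n → ℝ}

lemma ApproxSeq.lipU (S : ApproxSeq N Ω C p R w U) : LipC C U := LipC.of_tendsto S.hw S.hlim

lemma ApproxSeq.ev_test (S : ApproxSeq N Ω C p R w U) {g η : En n → ℝ} (hg : Lip g)
    (hgc : HasCompactSupport g) (hη : Lip η) (hηc : HasCompactSupport η)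
    (η0 : ∀ x, 0 ≤ η x) (ηΩ : ∀ x, x ∉ Ω → η x = 0) (hgη : ∀ᵐ x, g x • gradient η x = 0) :
    ∃ e : ℕ → ℝ, Tendsto e atTop (𝓝 0) ∧ ∀ᶠ k in atTop,
      (∫ x, η x * N.F (gradient (w k) x) ^ p k) ≤
      (∫ x, η x * N.F (gradient (fun y => U y + g y) x) ^ p k) +
      p k * (∫ x, (η x * g x) * N.F (gradient (w k) x) ^ p k) + e k := by
  obtain ⟨M, hM0, hM⟩ := F_unif N C
  obtain ⟨ρ, hρ⟩ := hηc.zero_off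
  obtain ⟨A, hA⟩ := hη.bdd hηc
  obtain ⟨CF, hCF, hF⟩ := N.ub
  obtain ⟨Cη, hCη0, hCη⟩ := hη.norm_grad_le
  obtain ⟨CH, hCH0, hCH⟩ := N.H_ub
  refine ⟨fun k => p k * M * ∫ x, |U x - w k x| * (η x + N.F (gradient η x)), ?_, ?_⟩
  · have h1 := err_tendsto S.hw S.hlim (h := fun x => η x + N.F (gradient η x))
      (hη.continuous.measurable.add (N.F_grad_meas η)) (A := A + CF * Cη) (ρ := ρ) (fun x => by
        have h2 := N.sub.nn (gradient η x)
        have h3 : N.F (gradient η x) ≤ CF * Cη :=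
          (hF _).trans (mul_le_mul_of_nonneg_left (hCη x) hCF.le)
        have h4 := (le_abs_self _).trans (hA x)
        rw [abs_of_nonneg (add_nonneg (η0 x) h2)]
        linarith)
      (fun x hx => by rw [hρ x hx, grad_zero_off hρ x hx, N.sub.zero, add_zero])
    simpa using (S.hpl.mul_const M).mul h1
  · filter_upwards [S.hR.eventually_gt_atTop (CH * ρ)] with k hk
    refine test_ineq (S.hp k) (S.hp2 k) (S.hw k) hM0 (hM _ (S.hw k)) (S.heq k) S.lipU.lip hg hgc
      hη hηc η0 ηΩ (fun x hx => hρ x ?_) hgη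
    have := hCH x
    by_contra hcon
    have := mul_le_mul_of_nonneg_left (not_lt.1 hcon) hCH0.le
    linarith

lemma ApproxSeq.step1 (S : ApproxSeq N Ω C p R w U) {η : En n → ℝ} (hη : Lip η)
    (hηc : HasCompactSupport η) (η0 : ∀ x, 0 ≤ η x) (ηΩ : ∀ x, x ∉ Ω → η x = 0) :
    Tendsto (fun k => ∫ x, η x * N.F (gradient (w k) x) ^ p k) atTop
      (𝓝 (∫ x, η x * N.F (gradient U x))) := by
  obtain ⟨ρ, hρ⟩ := hηc.zero_off
  obtain ⟨A, hA⟩ := hη.bdd hηc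
  obtain ⟨e, he, hev⟩ := S.ev_test (g := fun _ => 0) (Lip.const 0)
    (cs_of_zero_off (ρ := 0) fun _ _ => rfl) hη hηc η0 ηΩ (by simp)
  simp only [add_zero, mul_zero, zero_mul, integral_zero] at hev
  have hup := (pow_tendsto (N := N) S.hp S.hp2 S.hpl S.lipU.lip hη hηc).add he
  rw [add_zero] at hup
  obtain ⟨e', he', hl⟩ := lsc N le_rfl S.hw S.hlim hη.continuous.measurable η0
    (fun x => (le_abs_self _).trans (hA x)) hρ
  simp only [Real.rpow_one] at hl
  have hlow : Tendsto (fun k => p k * ((∫ x, η x * N.F (gradient U x)) + e' k) -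
      (p k - 1) * ∫ x, η x) atTop (𝓝 (∫ x, η x * N.F (gradient U x))) := by
    have := (S.hpl.mul (he'.const_add (∫ x, η x * N.F (gradient U x)))).sub
      ((S.hpl.sub_const 1).mul_const (∫ x, η x))
    simpa using this
  refine tendsto_of_tendsto_of_tendsto_of_le_of_le' hlow hup (Eventually.of_forall fun k => ?_) hev
  have hpk := S.hp k
  have j1 : Integrable (fun x => η x * N.F (gradient (w k) x)) := by
    simpa using int_Fpow N zero_le_one (S.hw k).lip hη.continuous.measurable hA hρ
  have j2 : Integrable (fun x => η x * N.F (gradient (w k) x) ^ p k) :=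
    int_Fpow N (by linarith) (S.hw k).lip hη.continuous.measurable hA hρ
  have hi := integral_mono (j1.const_mul (p k))
    (j2.add ((hη.integrable hηc).const_mul (p k - 1))) (fun x => by
      have := MinkowskiNorm.rpow_tangent zero_le_one (N.sub.nn (gradient (w k) x)) hpk.le
      rw [Real.one_rpow, Real.one_rpow] at this
      have t := mul_le_mul_of_nonneg_left this (η0 x)
      simp only [Pi.add_apply]
      linarith)
  simp only [Pi.add_apply] at hi
  rw [integral_add j2 ((hη.integrable hηc).const_mul _), integral_const_mul, integral_const_mul] at hi
  have := mul_le_mul_of_nonneg_left (hl k) (by linarith : (0:ℝ) ≤ p k)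
  linarith

lemma ApproxSeq.step2 (S : ApproxSeq N Ω C p R w U) {g η : En n → ℝ} (hg : Lip g)
    (hgc : HasCompactSupport g) (hη : Lip η) (hηc : HasCompactSupport η)
    (η0 : ∀ x, 0 ≤ η x) (ηΩ : ∀ x, x ∉ Ω → η x = 0) (h1 : ∀ x, g x ≠ 0 → η x = 1) :
    (∫ x, η x * N.F (gradient U x)) ≤ (∫ x, η x * N.F (gradient (fun y => U y + g y) x)) +
      ∫ x, g x * N.F (gradient U x) := by
  obtain ⟨ρ, hρ⟩ := hgc.zero_off
  have hgΩ : ∀ x, x ∉ Ω → g x = 0 := fun x hx => by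
    by_contra h
    have := h1 x h
    rw [ηΩ x hx] at this
    exact zero_ne_one this
  have hηg : ∀ x, η x * g x = g x := fun x => by
    by_cases h : g x = 0
    · rw [h, mul_zero]
    · rw [h1 x h, one_mul]
  have hgη : ∀ᵐ x, g x • gradient η x = 0 := by
    filter_upwards [Lip.ae_grad_eq hη (Lip.const 1)] with x hx
    by_cases h : g x = 0
    · rw [h, zero_smul]
    · rw [hx (h1 x h)]
      have : gradient (fun _ : En n => (1:ℝ)) x = 0 := by simp [gradient]
      rw [this, smul_zero]
  obtain ⟨e, he, hev⟩ := S.ev_test hg hgc hη hηc η0 ηΩ hgη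
  simp only [hηg] at hev
  have hgP : Lip (fun x => max (g x) 0) := hg.max (Lip.const 0)
  have hgN : Lip (fun x => max (-g x) 0) := hg.neg.max (Lip.const 0)
  have cP : HasCompactSupport (fun x => max (g x) 0) :=
    cs_of_zero_off (ρ := ρ) fun x hx => by simp [hρ x hx]
  have cN : HasCompactSupport (fun x => max (-g x) 0) :=
    cs_of_zero_off (ρ := ρ) fun x hx => by simp [hρ x hx]
  have tP := S.step1 hgP cP (fun x => le_max_right _ _) (fun x hx => by simp [hgΩ x hx])
  have tN := S.step1 hgN cN (fun x => le_max_right _ _) (fun x hx => by simp [hgΩ x hx])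
  have split : ∀ (q : ℝ), 0 ≤ q → ∀ f : En n → ℝ, Lip f →
      (∫ x, max (g x) 0 * N.F (gradient f x) ^ q) - (∫ x, max (-g x) 0 * N.F (gradient f x) ^ q) =
      ∫ x, g x * N.F (gradient f x) ^ q := fun q hq f hf => by
    obtain ⟨AP, hAP⟩ := hgP.bdd cP
    obtain ⟨AN, hAN⟩ := hgN.bdd cN
    rw [← integral_sub (int_Fpow N hq hf hgP.continuous.measurable hAP (ρ := ρ)
        fun x hx => by simp [hρ x hx])
      (int_Fpow N hq hf hgN.continuous.measurable hAN (ρ := ρ) fun x hx => by simp [hρ x hx])]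
    refine integral_congr_ae (Eventually.of_forall fun x => ?_)
    have : g x = max (g x) 0 - max (-g x) 0 := by
      rcases le_total (g x) 0 with h | h
      · rw [max_eq_right h, max_eq_left (by linarith)]; ring
      · rw [max_eq_left h, max_eq_right (by linarith)]; ring
    dsimp only
    rw [← sub_mul, ← this]
  have tg : Tendsto (fun k => ∫ x, g x * N.F (gradient (w k) x) ^ p k) atTop
      (𝓝 (∫ x, g x * N.F (gradient U x))) := by
    have h := tP.sub tN
    have s1 := split 1 zero_le_one U S.lipU.lip
    simp only [Real.rpow_one] at s1
    rw [s1] at h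
    refine h.congr fun k => split (p k) (by linarith [S.hp k]) _ (S.hw k).lip
  have hR := ((pow_tendsto (N := N) S.hp S.hp2 S.hpl (S.lipU.lip.add hg) hη hηc).add
    (S.hpl.mul tg)).add he
  have := le_of_tendsto_of_tendsto (S.step1 hη hηc η0 ηΩ) hR hev
  linarith

lemma ApproxSeq.isWeakSol (S : ApproxSeq N Ω C p R w U) (hΩ : IsOpen Ω) :
    IsWeakSolIAMCF N Ω U := by
  classical
  refine ⟨S.lipU.lip.locLipOn _, fun K hK hKΩ φ hφ hφU => ?_⟩
  set g : En n → ℝ := fun x => if x ∈ Ω then φ x - U x else 0 with hgdef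
  have gin : ∀ x ∈ Ω, g x = φ x - U x := fun x hx => by simp [hgdef, hx]
  have g0K : ∀ x, x ∉ K → g x = 0 := fun x hx => by
    by_cases h : x ∈ Ω
    · rw [gin x h, hφU x ⟨h, hx⟩, sub_self]
    · simp [hgdef, h]
  have hgl : LocLipOn g Ω := (hφ.add (S.lipU.lip.neg.locLipOn Ω)).congr fun x hx => by
    rw [gin x hx, sub_eq_add_neg]
  have g0 : ∀ x, x ∉ closure K → g x = 0 := fun x hx => g0K x fun h => hx (subset_closure h)
  have hg : Lip g := lip_of_locLip_cs hΩ hgl hK hKΩ g0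
  have hgc : HasCompactSupport g := HasCompactSupport.intro hK g0
  obtain ⟨η, hη, hηc, hηs, η0, η1, ηK⟩ := exists_cutoff hK hΩ hKΩ
  have ηΩ : ∀ x, x ∉ Ω → η x = 0 := fun x hx => image_eq_zero_of_notMem_tsupport fun h => hx (hηs h)
  have gη : ∀ x, g x ≠ 0 → η x = 1 := fun x hx => ηK x (by by_contra h; exact hx (g0 x h))
  have key := S.step2 hg hgc hη hηc η0 ηΩ gη
  have hψ : Lip (fun y => U y + g y) := S.lipU.lip.add hg
  obtain ⟨ρη, hρη⟩ := hηc.zero_off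
  obtain ⟨ρg, hρg⟩ := hgc.zero_off
  obtain ⟨Aη, hAη⟩ := hη.bdd hηc
  obtain ⟨Ag, hAg⟩ := hg.bdd hgc
  have j1 : Integrable (fun x => η x * N.F (gradient U x)) := by
    simpa using int_Fpow N zero_le_one S.lipU.lip hη.continuous.measurable hAη hρη
  have j2 : Integrable (fun x => η x * N.F (gradient (fun y => U y + g y) x)) := by
    simpa using int_Fpow N zero_le_one hψ hη.continuous.measurable hAη hρη
  have j3 : Integrable (fun x => g x * N.F (gradient U x)) := by
    simpa using int_Fpow N zero_le_one S.lipU.lip hg.continuous.measurable hAg hρg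
  set D : Set (En n) := {x | g x ≠ 0} with hD
  have hDm : MeasurableSet D := (isOpen_ne_fun hg.continuous continuous_const).measurableSet
  have hDK : D ⊆ K := fun x hx => by by_contra h; exact hx (g0K x h)
  set Q : En n → ℝ := fun x => N.F (gradient U x) - N.F (gradient (fun y => U y + g y) x) -
    g x * N.F (gradient U x) with hQ
  have hQ0 : ∀ᵐ x, x ∉ D → Q x = 0 := by
    filter_upwards [Lip.ae_grad_eq hψ S.lipU.lip] with x hx hxD
    have : g x = 0 := by by_contra h; exact hxD h
    simp only [hQ]
    rw [hx (by rw [this, add_zero]), this]; ring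
  have hQint : ∫ x in D, Q x ≤ 0 := by
    have e : ∫ x in D, Q x = ∫ x, (η x * N.F (gradient U x) -
        η x * N.F (gradient (fun y => U y + g y) x) - g x * N.F (gradient U x)) := by
      rw [← integral_indicator hDm]
      refine integral_congr_ae ?_
      filter_upwards [Lip.ae_grad_eq hψ S.lipU.lip] with x hx
      by_cases hxD : x ∈ D
      · rw [indicator_of_mem hxD, gη x hxD]; simp only [hQ]; ring
      · have : g x = 0 := by by_contra h; exact hxD h
        rw [indicator_of_notMem hxD, hx (by rw [this, add_zero]), this]; ring
    rw [e, integral_sub (by exact j1.sub j2) j3, integral_sub j1 j2]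
    linarith
  have hQK : ∫ x in K, Q x = ∫ x in D, Q x := by
    have e1 : ∫ x in K, Q x = ∫ x in K, D.indicator Q x := by
      refine integral_congr_ae (ae_restrict_of_ae ?_)
      filter_upwards [hQ0] with x hx
      by_cases hxD : x ∈ D
      · rw [indicator_of_mem hxD]
      · rw [indicator_of_notMem hxD, hx hxD]
    rw [e1, integral_indicator hDm, Measure.restrict_restrict hDm, inter_eq_left.2 hDK]
  have hmem : ∀ᵐ x ∂(volume.restrict K), x ∈ closure K :=
    ae_mono (Measure.restrict_mono_set _ subset_closure) (ae_restrict_mem isClosed_closure.measurableSet)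
  have k1 : IntegrableOn (fun x => N.F (gradient U x) + U x * N.F (gradient U x)) K :=
    (intOn_F N hK S.lipU.lip S.lipU.lip S.lipU.lip).mono_set subset_closure
  have k2 : IntegrableOn (fun x => N.F (gradient (fun y => U y + g y) x) +
      (U x + g x) * N.F (gradient U x)) K :=
    (intOn_F N hK hψ hψ S.lipU.lip).mono_set subset_closure
  have e2 : ∫ x in K, (N.F (gradient φ x) + φ x * N.F (gradient U x)) =
      ∫ x in K, (N.F (gradient (fun y => U y + g y) x) + (U x + g x) * N.F (gradient U x)) := by
    refine integral_congr_ae ?_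
    filter_upwards [hmem] with x hx
    have hxΩ := hKΩ hx
    have : gradient φ x = gradient (fun y => U y + g y) x := grad_congr (by
      filter_upwards [hΩ.mem_nhds hxΩ] with y hy
      rw [gin y hy]; ring)
    rw [this, gin x hxΩ]; ring
  have e3 : (∫ x in K, (N.F (gradient U x) + U x * N.F (gradient U x))) -
      (∫ x in K, (N.F (gradient (fun y => U y + g y) x) + (U x + g x) * N.F (gradient U x))) =
      ∫ x in K, Q x := by
    rw [← integral_sub k1 k2]
    refine integral_congr_ae (Eventually.of_forall fun x => ?_)
    simp only [hQ]; ring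
  rw [e2]
  linarith

end P12


section P13
variable {n : ℕ} {N : MinkowskiNorm n} {Ω : Set (En n)}

lemma exists_setup (hn : 2 ≤ n) (N : MinkowskiNorm n) (hΩ : IsOpen Ω) (hsb : HasSmoothBoundary Ω)
    (hbd : Bornology.IsBounded Ωᶜ) : ∃ R0 r CH, Setup N Ω R0 r CH := by
  obtain ⟨B, hB⟩ := hbd.exists_norm_le
  obtain ⟨D, hD0, hD⟩ := N.H_ub
  obtain ⟨CH, hCH⟩ := N.H_lip
  have hR : 0 < (2 * (D * |B| + 1)) / 2 := by positivity
  obtain ⟨r, hr, hr2, ht⟩ := touching N hΩ hsb hbd hR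
  refine ⟨2 * (D * |B| + 1), r, CH, hn, hr, hr2, hΩ, fun x hx => ?_, hCH, ht⟩
  have h1 := hB x hx
  have h2 := mul_le_mul_of_nonneg_left (h1.trans (le_abs_self B)) hD0.le
  have h3 := hD x
  linarith

lemma exists_sol (hn : 2 ≤ n) (N : MinkowskiNorm n) (hΩ : IsOpen Ω) (hsb : HasSmoothBoundary Ω)
    (hbd : Bornology.IsBounded Ωᶜ) (hne : Ωᶜ.Nonempty) :
    ∃ u : En n → ℝ, Lip u ∧ IsWeakSolIAMCF N Ω u ∧ (∀ x, x ∉ Ω → u x = 0) ∧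
      Tendsto u (cocompact (En n)) atTop := by
  obtain ⟨R0, r, CH, S⟩ := exists_setup hn N hΩ hsb hbd
  have hR0 : 0 < R0 := S.hR0
  obtain ⟨x0, hx0⟩ := hne
  set p : ℕ → ℝ := fun k => 1 + 1 / ((k : ℝ) + 3) with hpdef
  set R : ℕ → ℝ := fun k => (k : ℝ) + (R0 + 1) with hRdef
  have hp : ∀ k, 1 < p k := fun k => by
    have : 0 < 1 / ((k : ℝ) + 3) := by positivity
    simp only [hpdef]; linarith
  have hp2 : ∀ k, p k < 3 / 2 := fun k => by
    have hk : (0 : ℝ) ≤ k := Nat.cast_nonneg k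
    have : 1 / ((k : ℝ) + 3) < 1 / 2 := one_div_lt_one_div_of_lt (by norm_num) (by linarith)
    simp only [hpdef]; linarith
  have hR : ∀ k, R0 < R k := fun k => by
    have hk : (0 : ℝ) ≤ k := Nat.cast_nonneg k
    simp only [hRdef]; linarith
  have hRt : Tendsto R atTop atTop := tendsto_natCast_atTop_atTop.atTop_add tendsto_const_nhds
  have hpt : Tendsto p atTop (𝓝 1) := by
    have h : Tendsto (fun k : ℕ => (k : ℝ) + 3) atTop atTop :=
      tendsto_natCast_atTop_atTop.atTop_add tendsto_const_nhds
    have := (tendsto_const_nhds (x := (1 : ℝ))).add (tendsto_const_nhds (x := (1:ℝ)) |>.div_atTop h)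
    rw [add_zero] at this
    exact this
  choose z zL z0 znn zlow zeq using fun k => exists_pu S (hR k) (hp k) (hp2 k)
  obtain ⟨u, s, hs, hlim⟩ := subseq_lip zL (fun x => ⟨n * CH / r * ‖x - x0‖, fun k => by
    rw [abs_of_nonneg (znn k x)]
    have := (zL k).2 x x0
    rw [z0 k x0 hx0, zero_add] at this
    exact this⟩)
  have A : ApproxSeq N Ω (n * CH / r) (fun k => p (s k)) (fun k => R (s k)) (fun k => z (s k)) u :=
    ⟨fun k => hp _, fun k => by linarith [hp2 (s k)], hpt.comp hs.tendsto_atTop,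
      hRt.comp hs.tendsto_atTop, fun k => zL _, hlim, fun k => zeq (s k)⟩
  refine ⟨u, A.lipU.lip, A.isWeakSol hΩ, fun x hx => ?_, ?_⟩
  · refine tendsto_nhds_unique (hlim x) ?_
    simp only [z0 _ x hx]
    exact tendsto_const_nhds
  · have hlow : ∀ x, 1 / 2 * Real.log (max (N.H x) R0 / R0) ≤ u x := fun x => by
      refine ge_of_tendsto (hlim x) ?_
      filter_upwards [(hRt.comp hs.tendsto_atTop).eventually_ge_atTop (N.H x)] with k hk
      have := zlow (s k) x
      rw [Function.comp_apply] at hk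
      rwa [min_eq_left hk] at this
    have hH : Tendsto N.H (cocompact (En n)) atTop := by
      obtain ⟨c, hc, hcb⟩ := N.H_lb
      exact tendsto_atTop_mono hcb ((tendsto_norm_cocompact_atTop).const_mul_atTop hc)
    have hm : Tendsto (fun x => max (N.H x) R0) (cocompact (En n)) atTop :=
      tendsto_atTop_mono (fun x => le_max_left _ _) hH
    exact tendsto_atTop_mono hlow
      ((Real.tendsto_log_atTop.comp (hm.atTop_div_const hR0)).const_mul_atTop (by norm_num))

end P13

/-- For `n ≥ 2`, a Minkowski norm `F` on `ℝⁿ` and an open set `Ω ⊆ ℝⁿ`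
with smooth boundary whose complement is bounded and nonempty, there exists one and only
one proper weak solution `u ∈ C^{0,1}_loc(closure Ω)` of `div(F_ξ(∇u)) = F(∇u)` in `Ω`
with `u = 0` on `∂Ω`. -/
theorem statement0 (n : ℕ) (hn : 2 ≤ n) (N : MinkowskiNorm n)
    (Ω : Set (En n)) (hΩ : IsOpen Ω) (hsb : HasSmoothBoundary Ω)
    (hbd : Bornology.IsBounded Ωᶜ) (hne : Ωᶜ.Nonempty) :
    ∃ u : En n → ℝ,
      (LocLipOn u (closure Ω) ∧ IsWeakSolIAMCF N Ω u ∧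
        (∀ x ∈ frontier Ω, u x = 0) ∧
        Tendsto u (cocompact (En n)) atTop) ∧
      ∀ v : En n → ℝ,
        (LocLipOn v (closure Ω) ∧ IsWeakSolIAMCF N Ω v ∧
          (∀ x ∈ frontier Ω, v x = 0) ∧
          Tendsto v (cocompact (En n)) atTop) →
        ∀ x ∈ closure Ω, v x = u x := by
  obtain ⟨u, hL, hw, h0, ht⟩ := exists_sol hn N hΩ hsb hbd hne
  have hf : ∀ x ∈ frontier Ω, u x = 0 := fun x hx => h0 x fun h => by
    rw [hΩ.frontier_eq] at hx
    exact hx.2 h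
  refine ⟨u, ⟨hL.locLipOn _, hw, hf, ht⟩, ?_⟩
  rintro v ⟨hvl, hvw, hvf, hvt⟩ x hx
  by_cases hxΩ : x ∈ Ω
  · exact le_antisymm
      (unique_le N (by omega) hΩ (hL.locLipOn _) hvl hw hvw hf hvf ht x hxΩ)
      (unique_le N (by omega) hΩ hvl (hL.locLipOn _) hvw hw hvf hf hvt x hxΩ)
  · have hxf : x ∈ frontier Ω := by
      rw [hΩ.frontier_eq]
      exact ⟨hx, hxΩ⟩
    rw [hvf x hxf, hf x hxf]
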